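/- (Camacho–Sad separatrix theorem.) Let P and Q be holomorphic functions on a neighborhood of 0 in ℂ² with P(0,0) = Q(0,0) = 0, and assume 0 is an isolated common zero of P and Q (so the vector field Z = P ∂/∂z + Q ∂/∂w has an isolated singularity at 0). Then Z admits a separatrix at 0: there exist r > 0 and holomorphic functions f and g on the ball B(0, r) ⊆ ℂ² such that f(0,0) = 0, f is not identically zero, and P·(∂f/∂z) + Q·(∂f/∂w) = g·f on B(0, r); i.e. the (possibly singular) analytic curve {f = 0} passes through 0 and is invariant under Z. -/

import Mathlib

/-!
The proof follows Cano's short version of the argument of Camacho and Sad.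

Blow up the origin, and let `x = 0` be the exceptional divisor in a chart, so that the transformed
field is `x a ∂x + b ∂y` up to a power of `x`. The Camacho–Sad index at a point is the residue of
`a / b` along `x = 0`, and by the residue theorem on the projective line (`residue_sum`) the indices
along the exceptional divisor add up to `-1`. Hence some point has an index which is not a nonnegative
rational (`St1`). Such a point is blown up in turn. One then finds either a point of the same type on
the new divisor, or a corner of two divisors whose two indices satisfy Cano's condition (`St2`), and
this pair of conditions is stable under further blow-ups (`step1`, `step2`). When the divisor is not
invariant, a general point of it carries a transverse invariant curve at once.

The process stops because the codimension of the ideal generated by the two components drops by at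
least the product of the multiplicities (`measure_drop`, Noether's inequality). It ends at a point
where `a` is a unit and the index condition is the nonresonance condition of the Briot–Bouquet
theorem (`briot_bouquet`, proved by majorants), which yields a convergent invariant curve transverse
to the divisor. Its image is a parametrised invariant curve of the original field. This reduction
(`separatrix_of_rules`) only uses a few algebraic properties of the ring of germs, collected in the
structure `Model`; the three notions of invariant curve enter through the closure rules `Rules`,
verified in `rules`.

Two facts link this to the statement, and both rest on convergent Weierstrass division
(`weierstrass_division`). First, an isolated common zero makes the ideal `(P, Q)` cofinite, by a
resultant (`cof_of_isolated`). Second, a parametrised curve has an equation, namely a characteristic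
polynomial, and the ideal of germs vanishing on it is generated by one germ `f` (`exists_generator`).
The derivative of `f` along an invariant field vanishes on the curve, so it is `g f` for some `g`.
-/

namespace CamachoSad
open Polynomial

noncomputable section

/-! ### The residue theorem on the projective line -/

/-- The residue of the formal meromorphic form `(f / g) dX`; it is `0` when `g = 0`. -/
def resq (f g : PowerSeries ℂ) : ℂ :=
  ((f : LaurentSeries ℂ) / (g : LaurentSeries ℂ)).coeff (-1)

/-- Expansion of a polynomial at the point `c`, as a formal power series. -/
def expand (c : ℂ) (p : ℂ[X]) : PowerSeries ℂ := ((taylor c p : ℂ[X]) : PowerSeries ℂ)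

theorem coeff_coe_neg (f : PowerSeries ℂ) : (f : LaurentSeries ℂ).coeff (-1) = 0 := by
  have := PowerSeries.coeff_coe f (-1)
  rw [this]; simp

theorem coeff_coe_neg' (f : PowerSeries ℂ) (n : ℤ) (hn : n < 0) :
    (f : LaurentSeries ℂ).coeff n = 0 := by
  have := PowerSeries.coeff_coe f n
  rw [this]; simp [hn]

theorem coeff_coe_zero (f : PowerSeries ℂ) :
    (f : LaurentSeries ℂ).coeff 0 = PowerSeries.constantCoeff f := by
  have := PowerSeries.coeff_coe f 0
  rw [this]; simp

theorem coe_inv_of_unit (u : PowerSeries ℂ) (hu : PowerSeries.constantCoeff u ≠ 0) :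
    (u : LaurentSeries ℂ)⁻¹ = ((u⁻¹ : PowerSeries ℂ) : LaurentSeries ℂ) := by
  apply inv_eq_of_mul_eq_one_right
  rw [← PowerSeries.coe_mul, PowerSeries.mul_inv_cancel _ hu, PowerSeries.coe_one]

/-- Coordinate of the Laurent series field. -/
abbrev LX : LaurentSeries ℂ := HahnSeries.single 1 1

theorem LX_eq : LX = ((PowerSeries.X : PowerSeries ℂ) : LaurentSeries ℂ) := by
  simp

theorem LX_ne : LX ≠ 0 := by simp [LX]

theorem coeff_LX_inv_mul (F : LaurentSeries ℂ) (n : ℤ) :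
    (LX⁻¹ * F).coeff n = F.coeff (n + 1) := by
  have h : LX⁻¹ = (HahnSeries.single (-1 : ℤ) (1 : ℂ)) := by
    apply inv_eq_of_mul_eq_one_right
    simp [LX]
  have := HahnSeries.coeff_single_mul_add (r := (1 : ℂ)) (x := F) (a := n + 1) (b := -1)
  rw [h]
  simpa using this

/-- Expansion at `c` as a homomorphism to Laurent series. -/
def expHom (c : ℂ) : ℂ[X] →+* LaurentSeries ℂ :=
  (HahnSeries.ofPowerSeries ℤ ℂ).comp
    ((Polynomial.coeToPowerSeries.ringHom).comp (taylorAlgHom c).toRingHom)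

theorem expHom_apply (c : ℂ) (p : ℂ[X]) :
    expHom c p = ((expand c p : PowerSeries ℂ) : LaurentSeries ℂ) := rfl

theorem expHom_inj (c : ℂ) : Function.Injective (expHom c) := by
  intro p q h
  rw [expHom_apply, expHom_apply] at h
  exact taylor_injective c (Polynomial.coe_injective ℂ (HahnSeries.ofPowerSeries_injective h))

/-- Expansion at infinity, in the coordinate `1 / X`. -/
def infHom : ℂ[X] →+* LaurentSeries ℂ :=
  eval₂RingHom (HahnSeries.C) (LX⁻¹)

theorem LX_inv_pow (n : ℕ) : LX⁻¹ ^ n = (HahnSeries.single (-(n : ℤ)) (1 : ℂ)) := by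
  induction n with
  | zero => simp
  | succ n ih =>
    have h : LX⁻¹ = (HahnSeries.single (-1 : ℤ) (1 : ℂ)) := by
      apply inv_eq_of_mul_eq_one_right
      simp [LX]
    rw [pow_succ, ih, h]
    simp; ring_nf

theorem infHom_reflect (n : ℕ) (p : ℂ[X]) (hp : p.natDegree ≤ n) :
    LX ^ n * infHom p = (((reflect n p : ℂ[X]) : PowerSeries ℂ) : LaurentSeries ℂ) := by
  have e : ∀ r : ℂ[X], ((r : PowerSeries ℂ) : LaurentSeries ℂ)
      = eval₂ (HahnSeries.C (Γ := ℤ) (R := ℂ)) LX r := by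
    intro r
    induction r using Polynomial.induction_on' with
    | add p q hp hq => rw [eval₂_add, ← hp, ← hq, Polynomial.coe_add, PowerSeries.coe_add]
    | monomial n a =>
      rw [eval₂_monomial, ← C_mul_X_pow_eq_monomial, Polynomial.coe_mul, Polynomial.coe_pow,
        PowerSeries.coe_mul, PowerSeries.coe_pow]
      simp
  rw [e]
  let hinv : Invertible (LX⁻¹) := invertibleOfNonzero (inv_ne_zero LX_ne)
  have h3 := eval₂_reflect_mul_pow (HahnSeries.C (Γ := ℤ) (R := ℂ)) (LX⁻¹) n p hp
  simp only [invOf_eq_inv, inv_inv] at h3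
  rw [show infHom p = eval₂ (HahnSeries.C (Γ := ℤ) (R := ℂ)) (LX⁻¹) p from rfl, ← h3]
  have : LX ^ n * LX⁻¹ ^ n = 1 := by
    rw [← mul_pow, mul_inv_cancel₀ LX_ne, one_pow]
  linear_combination (eval₂ HahnSeries.C LX (reflect n p)) * this

theorem infHom_inj : Function.Injective infHom := by
  rw [injective_iff_map_eq_zero]
  intro p hp
  have h := infHom_reflect p.natDegree p le_rfl
  rw [hp, mul_zero] at h
  have h1 : ((reflect p.natDegree p : ℂ[X]) : PowerSeries ℂ) = 0 := by
    apply HahnSeries.ofPowerSeries_injective (Γ := ℤ)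
    rw [← h]; simp
  have h2 : reflect p.natDegree p = 0 := by
    apply Polynomial.coe_injective ℂ
    simpa using h1
  simpa [reflect_eq_zero_iff] using h2

/-- The field of rational functions in one variable. -/
abbrev KK := FractionRing ℂ[X]

/-- Laurent expansion of a rational function at the point `c`. -/
def expK (c : ℂ) : KK →+* LaurentSeries ℂ := IsFractionRing.lift (expHom_inj c)

/-- Laurent expansion of a rational function at infinity, in the coordinate `1 / X`. -/
def infK : KK →+* LaurentSeries ℂ := IsFractionRing.lift infHom_inj

/-- The residue theorem for the form `F dX`: the residues at the finite points add up to minus the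
residue at infinity. With `t = 1 / X` one has `dX = -dt / t²`, which gives the right-hand side. The
finite set `S` is only required to be large enough to contain all the poles. -/
def GoodRes (F : KK) : Prop :=
  ∃ S0 : Finset ℂ, ∀ S : Finset ℂ, S0 ⊆ S →
    ∑ c ∈ S, (expK c F).coeff (-1) = (LX⁻¹ * (LX⁻¹ * infK F)).coeff (-1)

theorem expK_alg (c : ℂ) (p : ℂ[X]) : expK c (algebraMap _ _ p) = expHom c p :=
  IsFractionRing.lift_algebraMap _ _
theorem infK_alg (p : ℂ[X]) : infK (algebraMap _ _ p) = infHom p :=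
  IsFractionRing.lift_algebraMap _ _

theorem GoodRes.add {F G : KK} (hF : GoodRes F) (hG : GoodRes G) : GoodRes (F + G) := by
  classical
  obtain ⟨S, hS⟩ := hF
  obtain ⟨T, hT⟩ := hG
  refine ⟨S ∪ T, fun W hW => ?_⟩
  have h1 := hS W (Finset.union_subset_left hW)
  have h2 := hT W (Finset.union_subset_right hW)
  simp only [map_add, mul_add, HahnSeries.coeff_add, Finset.sum_add_distrib, h1, h2]

theorem GoodRes.smul {F : KK} (hF : GoodRes F) (a : ℂ) :
    GoodRes (algebraMap ℂ[X] KK (C a) * F) := by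
  obtain ⟨S, hS⟩ := hF
  refine ⟨S, fun W hW => ?_⟩
  have h1 := hS W hW
  have e1 : ∀ c, expK c (algebraMap ℂ[X] KK (C a)) = HahnSeries.C a := by
    intro c
    rw [expK_alg, expHom_apply]; simp [expand]
  have e2 : infK (algebraMap ℂ[X] KK (C a)) = HahnSeries.C a := by
    rw [infK_alg]; simp [infHom]
  simp only [map_mul, e1, e2]
  rw [show LX⁻¹ * (LX⁻¹ * (HahnSeries.C a * infK F)) = HahnSeries.C a * (LX⁻¹ * (LX⁻¹ * infK F)) by ring]
  simp only [HahnSeries.C_mul_eq_smul, HahnSeries.coeff_smul, ← Finset.smul_sum, h1]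

theorem GoodRes.X_pow (n : ℕ) : GoodRes (algebraMap ℂ[X] KK (X ^ n)) := by
  refine ⟨∅, fun W _ => ?_⟩
  rw [infK_alg, Finset.sum_eq_zero]
  · rw [coeff_LX_inv_mul, coeff_LX_inv_mul, map_pow]
    simp only [infHom, coe_eval₂RingHom, eval₂_X]
    rw [LX_inv_pow, HahnSeries.coeff_single_of_ne]
    lia
  · intro c _
    rw [expK_alg, expHom_apply, coeff_coe_neg]

theorem GoodRes.inv_pow (c : ℂ) (k : ℕ) :
    GoodRes ((algebraMap ℂ[X] KK (X - C c))⁻¹ ^ (k + 1)) := by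
  classical
  refine ⟨{c}, fun W hW => ?_⟩
  have hcW : c ∈ W := hW (Finset.mem_singleton_self c)
  have e1 : ∀ d, expK d (algebraMap ℂ[X] KK (X - C c)) =
      ((PowerSeries.X + PowerSeries.C (d - c) : PowerSeries ℂ) : LaurentSeries ℂ) := by
    intro d
    rw [expK_alg, expHom_apply]
    congr 1
    simp [expand]
    ring
  have e2 : infK (algebraMap ℂ[X] KK (X - C c)) =
      LX⁻¹ * ((1 - PowerSeries.C c * PowerSeries.X : PowerSeries ℂ) : LaurentSeries ℂ) := by
    rw [infK_alg]
    simp only [infHom, coe_eval₂RingHom, eval₂_sub, eval₂_X, eval₂_C, PowerSeries.coe_sub,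
      PowerSeries.coe_mul, PowerSeries.coe_one, PowerSeries.coe_C]
    rw [← LX_eq, mul_sub, mul_one, mul_left_comm, inv_mul_cancel₀ LX_ne, mul_one]
  rw [Finset.sum_eq_single_of_mem c hcW]
  · rw [map_pow, map_pow, map_inv₀, map_inv₀, e1, e2, mul_inv, inv_inv,
      coe_inv_of_unit (1 - PowerSeries.C c * PowerSeries.X) (by simp), sub_self, map_zero,
      add_zero, ← LX_eq, mul_pow]
    rcases k with _ | k
    · simp only [zero_add, pow_one]
      rw [inv_mul_cancel_left₀ LX_ne, coeff_LX_inv_mul]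
      have h1 := coeff_LX_inv_mul 1 (-1)
      simp only [mul_one] at h1
      rw [h1, neg_add_cancel, coeff_coe_zero]
      simp
    · rw [LX_inv_pow, HahnSeries.coeff_single_of_ne (by push_cast; lia)]
      rw [show LX⁻¹ * (LX⁻¹ * (LX ^ (k + 1 + 1) * (((1 - PowerSeries.C c * PowerSeries.X)⁻¹ : PowerSeries ℂ) : LaurentSeries ℂ) ^ (k + 1 + 1))) = (LX⁻¹ * LX) * (LX⁻¹ * LX) * (LX ^ k * (((1 - PowerSeries.C c * PowerSeries.X)⁻¹ : PowerSeries ℂ) : LaurentSeries ℂ) ^ (k + 1 + 1)) by ring,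
        inv_mul_cancel₀ LX_ne, LX_eq, ← PowerSeries.coe_pow, ← PowerSeries.coe_pow,
        ← PowerSeries.coe_mul, one_mul, one_mul, coeff_coe_neg]
  · intro d _ hd
    rw [map_pow, map_inv₀, e1, coe_inv_of_unit _ (by simpa using sub_ne_zero.2 hd),
      ← PowerSeries.coe_pow, coeff_coe_neg]

theorem X_sub_C_ne' (c : ℂ) : algebraMap ℂ[X] KK (X - C c) ≠ 0 := by
  rw [Ne, IsFractionRing.to_map_eq_zero_iff]
  exact X_sub_C_ne_zero c

/-- Membership in the span of the elementary fractions. -/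
inductive Elem : KK → Prop
  | pow (n : ℕ) : Elem (algebraMap ℂ[X] KK (X ^ n))
  | inv (c : ℂ) (k : ℕ) : Elem ((algebraMap ℂ[X] KK (X - C c))⁻¹ ^ (k + 1))
  | add {F G : KK} : Elem F → Elem G → Elem (F + G)
  | smul {F : KK} (a : ℂ) : Elem F → Elem (algebraMap ℂ[X] KK (C a) * F)

theorem Elem.good {F : KK} (h : Elem F) : GoodRes F := by
  induction h with
  | pow n => exact GoodRes.X_pow n
  | inv c k => exact GoodRes.inv_pow c k
  | add _ _ h1 h2 => exact h1.add h2
  | smul a _ h => exact h.smul a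

theorem Elem.sub {F G : KK} (hF : Elem F) (hG : Elem G) : Elem (F - G) := by
  have := hF.add (hG.smul (-1))
  convert this using 1
  simp; ring

theorem Elem.div {F : KK} (h : Elem F) (d : ℂ) :
    Elem (F * (algebraMap ℂ[X] KK (X - C d))⁻¹) := by
  have hd := X_sub_C_ne' d
  induction h with
  | pow n =>
    induction n with
    | zero => simpa using Elem.inv d 0
    | succ n ih =>
      convert (Elem.pow n).add (ih.smul d) using 1
      field_simp
      simp only [← map_mul, ← map_add]
      congr 1
      ring
  | inv c k =>
    by_cases hcd : c = d
    · subst hcd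
      rw [← pow_succ]
      exact Elem.inv c (k + 1)
    have hc := X_sub_C_ne' c
    have key : algebraMap ℂ[X] KK (C ((c - d)⁻¹)) *
        (algebraMap ℂ[X] KK (X - C d) - algebraMap ℂ[X] KK (X - C c)) = 1 := by
      rw [← map_sub, ← map_mul, show (X - C d - (X - C c) : ℂ[X]) = C (c - d) by simp, ← C_mul,
        inv_mul_cancel₀ (sub_ne_zero.2 hcd)]
      simp
    induction k with
    | zero =>
      convert ((Elem.inv c 0).sub (Elem.inv d 0)).smul ((c - d)⁻¹) using 1
      generalize algebraMap ℂ[X] KK (C ((c - d)⁻¹)) = e at *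
      generalize algebraMap ℂ[X] KK (X - C c) = u at *
      generalize algebraMap ℂ[X] KK (X - C d) = v at *
      simp only [zero_add, pow_one]
      field_simp
      linear_combination -key
    | succ k ih =>
      convert ((Elem.inv c (k+1)).sub ih).smul ((c - d)⁻¹) using 1
      generalize algebraMap ℂ[X] KK (C ((c - d)⁻¹)) = e at *
      clear ih
      generalize algebraMap ℂ[X] KK (X - C c) = u at *
      generalize algebraMap ℂ[X] KK (X - C d) = v at *
      have h1 : u⁻¹ ^ (k + 1 + 1) * v⁻¹ * (e * (v - u)) = u⁻¹ ^ (k + 1 + 1) * v⁻¹ := by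
        rw [key, mul_one]
      rw [← h1, pow_succ _ (k + 1)]
      have h2 : u⁻¹ * u = 1 := inv_mul_cancel₀ hc
      have h3 : v⁻¹ * v = 1 := inv_mul_cancel₀ hd
      linear_combination e * u⁻¹ ^ (k+1) * (u⁻¹ * h3 - v⁻¹ * h2)
  | add _ _ h1 h2 => rw [add_mul]; exact h1.add h2
  | smul a _ h => rw [mul_assoc]; exact h.smul a

theorem Elem.alg (p : ℂ[X]) : Elem (algebraMap ℂ[X] KK p) := by
  induction p using Polynomial.induction_on' with
  | add p q hp hq => rw [map_add]; exact hp.add hq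
  | monomial n a =>
    rw [← C_mul_X_pow_eq_monomial, map_mul]
    exact (Elem.pow n).smul a

/-- Partial fraction decomposition. -/
theorem Elem.frac (p D : ℂ[X]) : Elem (algebraMap ℂ[X] KK p * (algebraMap ℂ[X] KK D)⁻¹) := by
  have hs := (IsAlgClosed.splits D).eq_prod_roots
  rw [hs]
  generalize D.leadingCoeff = a
  rw [map_mul, mul_inv]
  have h1 : (algebraMap ℂ[X] KK (C a))⁻¹ = algebraMap ℂ[X] KK (C a⁻¹) := by
    by_cases ha : a = 0
    · simp [ha]
    apply inv_eq_of_mul_eq_one_right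
    rw [← map_mul, ← C_mul, mul_inv_cancel₀ ha]; simp
  rw [h1, mul_left_comm]
  refine Elem.smul _ ?_
  induction D.roots using Multiset.induction_on with
  | empty => simpa using Elem.alg p
  | cons d s ih =>
    rw [Multiset.map_cons, Multiset.prod_cons, map_mul, mul_inv, mul_comm (_⁻¹ : KK), ← mul_assoc]
    exact ih.div d

theorem residue_algebra {L : Type*} [Field L] (t : L) (ht : t ≠ 0) (u v : L) (ν : ℕ)
    (h : v - t⁻¹ * u ≠ 0) :
    t⁻¹ * (t⁻¹ * (u * (v - t⁻¹ * u)⁻¹)) + t ^ ν * v / (t ^ ν * u - t * (t ^ ν * v)) =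
      t⁻¹ * -1 := by
  have h4 : t * v - u ≠ 0 := by
    intro h0; apply h; field_simp; linear_combination h0
  have h5 : v - t⁻¹ * u = t⁻¹ * (t * v - u) := by field_simp
  have h6 : t ^ ν * u - t * (t ^ ν * v) = - (t ^ ν * (t * v - u)) := by ring
  rw [h5, h6]
  field_simp
  ring

/-- The residue theorem applied to the form `p / (q - X p) dX`, in the form used to add up indices
along the exceptional divisor of a blow-up. The last summand is the index at the point at infinity,
which differs from a residue of the form by `1`; hence the sum `-1`, the self-intersection of the
exceptional divisor. -/
theorem residue_sum (ν : ℕ) (p q : ℂ[X]) (hp : p.natDegree ≤ ν) (hq : q.natDegree ≤ ν)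
    (hD : q - X * p ≠ 0) :
    ∃ S0 : Finset ℂ, ∀ S : Finset ℂ, S0 ⊆ S →
      ∑ c ∈ S, resq (expand c p) (expand c (q - X * p)) +
        resq ((reflect ν q : ℂ[X]) : PowerSeries ℂ)
          (((reflect ν p : ℂ[X]) : PowerSeries ℂ)
            - PowerSeries.X * ((reflect ν q : ℂ[X]) : PowerSeries ℂ)) = -1 := by
  obtain ⟨S0, hS0⟩ := (Elem.frac p (q - X * p)).good
  refine ⟨S0, fun S hS => ?_⟩
  have h := hS0 S hS
  have e : ∀ c, (expK c (algebraMap ℂ[X] KK p * (algebraMap ℂ[X] KK (q - X * p))⁻¹)) =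
      (expand c p : LaurentSeries ℂ) / (expand c (q - X * p) : LaurentSeries ℂ) := by
    intro c
    rw [map_mul, map_inv₀, expK_alg, expK_alg, expHom_apply, expHom_apply, div_eq_mul_inv]
  simp only [e] at h
  unfold resq
  rw [h, map_mul, map_inv₀, infK_alg, infK_alg, ← HahnSeries.coeff_add]
  have hDi : infHom (q - X * p) ≠ 0 := fun h0 => hD (infHom_inj (by simpa using h0))
  have r1 := infHom_reflect ν p hp
  have r2 := infHom_reflect ν q hq
  have hX : infHom X = LX⁻¹ := by simp [infHom]
  have h1 := coeff_LX_inv_mul (-1) (-1)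
  rw [PowerSeries.coe_sub, PowerSeries.coe_mul, ← LX_eq, ← r1, ← r2]
  rw [map_sub, map_mul, hX] at hDi ⊢
  rw [residue_algebra LX LX_ne _ _ ν hDi, h1]
  simp

end
end CamachoSad

namespace CamachoSad
open Polynomial

noncomputable section

/-! ### Germs, leading forms and blow-up charts -/

/-- The algebraic structure of the ring of germs of holomorphic functions at `0 ∈ ℂ²` that is used
in the reduction argument: coordinates `x`, `y`, the Taylor series `ρ` of the restriction to the line
`x = 0`, the exchange `σ` of the two coordinates, and the pullbacks `φ c` under the blow-up charts
`(x, y) ↦ (x, x (c + y))`. -/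
structure Model (A : Type*) [CommRing A] [Algebra ℂ A] where
  x : A
  y : A
  ρ : A →ₐ[ℂ] PowerSeries ℂ
  σ : A →ₐ[ℂ] A
  φ : ℂ → A →ₐ[ℂ] A
  ρx : ρ x = 0
  ρy : ρ y = PowerSeries.X
  dvd_of_ρ : ∀ f, ρ f = 0 → x ∣ f
  x_cancel : ∀ f, x * f = 0 → f = 0
  σσ : ∀ f, σ (σ f) = f
  σx : σ x = y
  φx : ∀ c, φ c x = x
  φy : ∀ c, φ c y = x * (algebraMap ℂ A c + y)
  isUnit_of_ev : ∀ f, PowerSeries.constantCoeff (ρ f) ≠ 0 → IsUnit f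
  max_of_ev : ∀ f, PowerSeries.constantCoeff (ρ f) = 0 → ∃ f1 f2, f = x * f1 + y * f2
  ρσφ : ∀ f, ρ (σ (φ 0 f)) = ρ (σ f)

namespace Model

variable {A : Type*} [CommRing A] [Algebra ℂ A] (M : Model A)

/-- The value at the origin. -/
def ev (f : A) : ℂ := PowerSeries.constantCoeff (M.ρ f)

/-- The maximal ideal. -/
def m : Ideal A := Ideal.span {M.x, M.y}

theorem σy : M.σ M.y = M.x := by rw [← M.σx, M.σσ]

theorem x_mem : M.x ∈ M.m := Ideal.subset_span (by simp)
theorem y_mem : M.y ∈ M.m := Ideal.subset_span (by simp)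

theorem mem_m_iff (f : A) : f ∈ M.m ↔ ∃ f1 f2, f = M.x * f1 + M.y * f2 := by
  rw [m, Ideal.mem_span_pair]
  constructor
  · rintro ⟨a, b, h⟩
    exact ⟨a, b, by rw [← h]; ring⟩
  · rintro ⟨a, b, h⟩
    exact ⟨a, b, by rw [h]; ring⟩

theorem mem_m_of_ev {f : A} (h : M.ev f = 0) : f ∈ M.m := (M.mem_m_iff f).2 (M.max_of_ev f h)

theorem ev_of_mem_m {f : A} (h : f ∈ M.m) : M.ev f = 0 := by
  obtain ⟨a, b, rfl⟩ := (M.mem_m_iff f).1 h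
  simp [ev, M.ρx, M.ρy]

theorem mem_pow_succ (n : ℕ) (f : A) :
    f ∈ M.m ^ (n + 1) ↔ ∃ f1 ∈ M.m ^ n, ∃ f2 ∈ M.m ^ n, f = M.x * f1 + M.y * f2 := by
  rw [pow_succ', m, Ideal.span_insert, Ideal.sup_mul, Submodule.mem_sup]
  simp only [Ideal.mem_span_singleton_mul]
  constructor
  · rintro ⟨_, ⟨a, ha, rfl⟩, _, ⟨b, hb, rfl⟩, rfl⟩
    exact ⟨a, ha, b, hb, rfl⟩
  · rintro ⟨a, ha, b, hb, rfl⟩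
    exact ⟨_, ⟨a, ha, rfl⟩, _, ⟨b, hb, rfl⟩, rfl⟩

theorem x_pow_cancel (n : ℕ) {f g : A} (h : M.x ^ n * f = M.x ^ n * g) : f = g := by
  induction n with
  | zero => simpa using h
  | succ n ih =>
    apply ih
    have : M.x * (M.x ^ n * f - M.x ^ n * g) = 0 := by linear_combination h
    exact sub_eq_zero.1 (M.x_cancel _ this)

/-- Homogenisation of degree `n` of a polynomial. -/
def H (n : ℕ) (p : ℂ[X]) : A :=
  ∑ i ∈ Finset.range (n + 1), algebraMap ℂ A (p.coeff i) * (M.x ^ (n - i) * M.y ^ i)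

theorem H_zero (n : ℕ) : M.H n 0 = 0 := by simp [H]

theorem H_add (n : ℕ) (p q : ℂ[X]) : M.H n (p + q) = M.H n p + M.H n q := by
  simp [H, add_mul, Finset.sum_add_distrib]

theorem H_X_mul (n : ℕ) (p : ℂ[X]) : M.H (n + 1) (X * p) = M.y * M.H n p := by
  rw [H, Finset.sum_range_succ', H, Finset.mul_sum]
  simp only [coeff_X_mul, coeff_X_mul_zero, map_zero, zero_mul, add_zero]
  refine Finset.sum_congr rfl fun i _ => ?_
  rw [Nat.add_sub_add_right]; ring

theorem H_succ (n : ℕ) (p : ℂ[X]) (hp : p.natDegree ≤ n) : M.H (n + 1) p = M.x * M.H n p := by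
  rw [H, Finset.sum_range_succ, coeff_eq_zero_of_natDegree_lt (by lia), H, Finset.mul_sum]
  simp only [map_zero, zero_mul, add_zero]
  refine Finset.sum_congr rfl fun i hi => ?_
  rw [Nat.succ_sub (by simpa [Nat.lt_succ_iff] using hi), pow_succ]; ring

theorem H_mem (n : ℕ) (p : ℂ[X]) : M.H n p ∈ M.m ^ n := by
  refine Ideal.sum_mem _ fun i hi => Ideal.mul_mem_left _ _ ?_
  have : n = (n - i) + i := by
    have := Finset.mem_range.1 hi
    lia
  conv in M.m ^ n => rw [this, pow_add]
  exact Ideal.mul_mem_mul (Ideal.pow_mem_pow M.x_mem _) (Ideal.pow_mem_pow M.y_mem _)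

/-- `p` is the (dehomogenised) leading form of degree `n` of `f`. -/
def Lead (n : ℕ) (f : A) (p : ℂ[X]) : Prop := p.natDegree ≤ n ∧ f - M.H n p ∈ M.m ^ (n + 1)

/-- Every germ of multiplicity at least `n` has a leading form of degree `n`, possibly zero. -/
theorem exists_lead (n : ℕ) {f : A} (hf : f ∈ M.m ^ n) : ∃ p, M.Lead n f p := by
  induction n generalizing f with
  | zero =>
    refine ⟨C (M.ev f), by simp, ?_⟩
    simp only [zero_add, pow_one]
    apply M.mem_m_of_ev
    simp [ev, H]
  | succ n ih =>
    obtain ⟨f1, h1, f2, h2, rfl⟩ := (M.mem_pow_succ n f).1 hf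
    obtain ⟨p1, d1, e1⟩ := ih h1
    obtain ⟨p2, d2, e2⟩ := ih h2
    refine ⟨p1 + X * p2, ?_, ?_⟩
    · refine (natDegree_add_le _ _).trans (max_le (by lia) ?_)
      refine natDegree_mul_le.trans ?_
      rw [natDegree_X]; lia
    · rw [H_add, H_X_mul, H_succ _ _ _ d1]
      refine (M.mem_pow_succ _ _).2 ⟨_, e1, _, e2, ?_⟩
      ring

theorem Lead.mem {n : ℕ} {f : A} {p : ℂ[X]} (h : M.Lead n f p) : f ∈ M.m ^ n := by
  have h1 := Ideal.pow_le_pow_right (Nat.le_succ n) h.2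
  have := Ideal.add_mem _ h1 (M.H_mem n p)
  simpa using this

theorem Lead.mem_succ {n : ℕ} {f : A} (h : M.Lead n f 0) : f ∈ M.m ^ (n + 1) := by
  simpa [H_zero] using h.2

theorem φ_mem (c : ℂ) (n : ℕ) {f : A} (hf : f ∈ M.m ^ n) : ∃ f', M.φ c f = M.x ^ n * f' := by
  induction n generalizing f with
  | zero => exact ⟨M.φ c f, by simp⟩
  | succ n ih =>
    obtain ⟨f1, h1, f2, h2, rfl⟩ := (M.mem_pow_succ n f).1 hf
    obtain ⟨g1, e1⟩ := ih h1
    obtain ⟨g2, e2⟩ := ih h2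
    refine ⟨g1 + (algebraMap ℂ A c + M.y) * g2, ?_⟩
    rw [map_add, map_mul, map_mul, M.φx, M.φy, e1, e2]
    ring

theorem φ_H (c : ℂ) (n : ℕ) (p : ℂ[X]) (hp : p.natDegree ≤ n) :
    M.φ c (M.H n p) = M.x ^ n * aeval (algebraMap ℂ A c + M.y) p := by
  rw [H, map_sum, aeval_eq_sum_range' (Nat.lt_succ_of_le hp), Finset.mul_sum]
  refine Finset.sum_congr rfl fun i hi => ?_
  have : n = (n - i) + i := by
    have := Finset.mem_range.1 hi
    lia
  rw [map_mul, map_mul, map_pow, map_pow, AlgHom.commutes, M.φx, M.φy, Algebra.smul_def]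
  have hx : M.x ^ n = M.x ^ (n - i) * M.x ^ i := by rw [← pow_add, ← this]
  rw [hx, mul_pow]
  ring

theorem ρ_aeval (c : ℂ) (p : ℂ[X]) :
    M.ρ (aeval (algebraMap ℂ A c + M.y) p) = expand c p := by
  rw [← aeval_algHom_apply, map_add, M.ρy, AlgHom.commutes, expand]
  induction p using Polynomial.induction_on' with
  | add p q hp hq => rw [map_add, hp, hq, map_add, Polynomial.coe_add]
  | monomial n a =>
    simp [aeval_monomial, taylor_monomial, add_comm]

/-- The strict transform restricted to the exceptional divisor is the leading form, expanded at the
centre of the chart. -/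
theorem Lead.ρ_eq {n : ℕ} {f : A} {p : ℂ[X]} (h : M.Lead n f p) {c : ℂ} {f' : A}
    (hf : M.φ c f = M.x ^ n * f') : M.ρ f' = expand c p := by
  obtain ⟨g, hg⟩ := M.φ_mem c _ h.2
  have : f' = aeval (algebraMap ℂ A c + M.y) p + M.x * g := by
    apply M.x_pow_cancel n
    rw [mul_add, ← M.φ_H c n p h.1, ← mul_assoc, ← pow_succ, ← hg, ← hf, map_sub]
    ring
  rw [this, map_add, map_mul, M.ρx, zero_mul, add_zero, ρ_aeval]

theorem expand_inj (c : ℂ) {p q : ℂ[X]} (h : expand c p = expand c q) : p = q :=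
  taylor_injective c (Polynomial.coe_injective ℂ h)

theorem expand_mul (c : ℂ) (p q : ℂ[X]) : expand c (p * q) = expand c p * expand c q := by
  simp [expand, taylor_mul]
theorem expand_sub (c : ℂ) (p q : ℂ[X]) : expand c (p - q) = expand c p - expand c q := by
  simp [expand]
theorem expand_X (c : ℂ) : expand c X = PowerSeries.C c + PowerSeries.X := by
  simp [expand, add_comm]
theorem expand_zero (c : ℂ) : expand c 0 = 0 := by
  simp [expand]
theorem expand_at_zero (p : ℂ[X]) : expand 0 p = (p : PowerSeries ℂ) := by
  simp [expand]
theorem constantCoeff_expand (c : ℂ) (p : ℂ[X]) :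
    PowerSeries.constantCoeff (expand c p) = p.eval c := by
  rw [expand, ← PowerSeries.coeff_zero_eq_constantCoeff_apply, Polynomial.coeff_coe,
    taylor_coeff_zero]

theorem lead_eq_zero {n : ℕ} {f : A} {p : ℂ[X]} (h : M.Lead n f p) (hf : f ∈ M.m ^ (n + 1)) :
    p = 0 := by
  obtain ⟨g, hg⟩ := M.φ_mem 0 _ hf
  have := h.ρ_eq M (c := 0) (f' := M.x * g) (by rw [hg]; ring)
  rw [map_mul, M.ρx, zero_mul] at this
  exact expand_inj 0 (by rw [← this, expand_zero])

theorem lead_mul {n k : ℕ} {f g : A} {p q r : ℂ[X]} (hf : M.Lead n f p) (hg : M.Lead k g q)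
    (hr : M.Lead (n + k) (f * g) r) : r = p * q := by
  obtain ⟨f', hf'⟩ := M.φ_mem 0 _ hf.mem
  obtain ⟨g', hg'⟩ := M.φ_mem 0 _ hg.mem
  have := hr.ρ_eq M (c := 0) (f' := f' * g') (by rw [map_mul, hf', hg']; ring)
  rw [map_mul, hf.ρ_eq M hf', hg.ρ_eq M hg', ← expand_mul] at this
  exact (expand_inj 0 this).symm

theorem mem_of_mul_mem {n : ℕ} {f : A} {p : ℂ[X]} (hf : M.Lead n f p) (hp : p ≠ 0) (k : ℕ) {g : A}
    (h : f * g ∈ M.m ^ (n + k)) : g ∈ M.m ^ k := by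
  induction k with
  | zero => simp
  | succ k ih =>
    have hg := ih (Ideal.pow_le_pow_right (by lia) h)
    obtain ⟨q, hq⟩ := M.exists_lead k hg
    obtain ⟨r, hr⟩ := M.exists_lead (n + k) (f := f * g) (Ideal.pow_le_pow_right (by lia) h)
    have h1 := M.lead_mul hf hq hr
    have h2 := M.lead_eq_zero hr h
    rw [h2] at h1
    have h3 : q = 0 := (mul_eq_zero.1 h1.symm).resolve_left hp
    subst h3
    exact hq.mem_succ

theorem lead_x_pow (n : ℕ) : M.Lead n (M.x ^ n) 1 := by
  refine ⟨by simp, ?_⟩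
  have : M.H n 1 = M.x ^ n := by
    rw [H, Finset.sum_eq_single 0]
    · simp
    · intro i _ hi
      simp [coeff_one, hi]
    · simp
  simp [this]

theorem not_pow_le (n : ℕ) : ¬ M.m ^ n ≤ M.m ^ (n + 1) := fun h =>
  one_ne_zero (M.lead_eq_zero (M.lead_x_pow n) (h (Ideal.pow_mem_pow M.x_mem n)))

theorem σ_mem (n : ℕ) {f : A} (hf : f ∈ M.m ^ n) : M.σ f ∈ M.m ^ n := by
  induction n generalizing f with
  | zero => simp
  | succ n ih =>
    obtain ⟨f1, h1, f2, h2, rfl⟩ := (M.mem_pow_succ n f).1 hf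
    refine (M.mem_pow_succ _ _).2 ⟨_, ih h2, _, ih h1, ?_⟩
    rw [map_add, map_mul, map_mul, M.σx, M.σy]; ring

theorem Lead.σ {n : ℕ} {f : A} {p : ℂ[X]} (h : M.Lead n f p) :
    M.Lead n (M.σ f) (reflect n p) := by
  refine ⟨natDegree_reflect_le.trans (by simpa using h.1), ?_⟩
  have : M.H n (reflect n p) = M.σ (M.H n p) := by
    rw [H, H, map_sum, ← Finset.sum_range_reflect]
    refine Finset.sum_congr rfl fun i hi => ?_
    have hi' := Finset.mem_range.1 hi
    rw [map_mul, map_mul, map_pow, map_pow, M.σx, M.σy, AlgHom.commutes, coeff_reflect,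
      show n + 1 - 1 - i = n - i by lia, revAt_le (by lia), show n - (n - i) = i by lia]
    ring
  rw [this, ← map_sub]
  exact M.σ_mem _ h.2

theorem ev_σ (f : A) : M.ev (M.σ f) = M.ev f := by
  have h : f - algebraMap ℂ A (M.ev f) ∈ M.m := M.mem_m_of_ev (by simp [ev])
  have h2 := M.ev_of_mem_m (by simpa using M.σ_mem 1 (by simpa using h))
  have h3 : M.ev (M.σ f) - M.ev f = 0 := by
    rw [← h2]; simp [ev]
  exact sub_eq_zero.1 h3

end Model
end
end CamachoSad

namespace CamachoSad
open Polynomial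

noncomputable section

/-! ### Codimension and its drop under blow-up -/

section linear

variable {A : Type*} [AddCommGroup A] [Module ℂ A]

/-- Codimension of a subspace (with junk value `0` in infinite codimension). -/
def cod (W : Submodule ℂ A) : ℕ := Module.finrank ℂ (A ⧸ W)

theorem finite_quot_of_le {W V : Submodule ℂ A} (h : W ≤ V) [Module.Finite ℂ (A ⧸ W)] :
    Module.Finite ℂ (A ⧸ V) :=
  Module.Finite.of_surjective (Submodule.factor h) (Submodule.factor_surjective h)

theorem finite_quot_of_le' {W V : Submodule ℂ A} (h : W ≤ V) [Module.Finite ℂ (A ⧸ V)]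
    [Module.Finite ℂ (V.map W.mkQ)] : Module.Finite ℂ (A ⧸ W) := by
  have e := Submodule.quotientQuotientEquivQuotient W V h
  have : Module.Finite ℂ ((A ⧸ W) ⧸ (V.map W.mkQ)) := Module.Finite.equiv e.symm
  exact Module.Finite.of_submodule_quotient (V.map W.mkQ)

theorem cod_eq {W V : Submodule ℂ A} (h : W ≤ V) [Module.Finite ℂ (A ⧸ W)] :
    cod W = cod V + Module.finrank ℂ (V.map W.mkQ) := by
  have e := Submodule.quotientQuotientEquivQuotient W V h
  rw [cod, cod, ← e.finrank_eq, Submodule.finrank_quotient_add_finrank]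

/-- A linear map from `V` onto `A ⧸ U` vanishing on `W` bounds `cod U` by `dim V / W`. -/
theorem cod_le_of_surj {W V U : Submodule ℂ A} [Module.Finite ℂ (A ⧸ W)]
    (ψ : V →ₗ[ℂ] (A ⧸ U)) (hs : Function.Surjective ψ) (hk : ∀ v : V, (v : A) ∈ W → ψ v = 0) :
    cod U ≤ Module.finrank ℂ (V.map W.mkQ) := by
  have : V.map W.mkQ = LinearMap.range (W.mkQ.comp V.subtype) := by
    rw [LinearMap.range_comp, Submodule.range_subtype]
  rw [this]
  have e := (W.mkQ.comp V.subtype).quotKerEquivRange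
  rw [← e.finrank_eq]
  have : Module.Finite ℂ (V ⧸ LinearMap.ker (W.mkQ.comp V.subtype)) := Module.Finite.equiv e.symm
  have hk' : LinearMap.ker (W.mkQ.comp V.subtype) ≤ LinearMap.ker ψ := by
    intro v hv
    apply hk
    simpa using hv
  apply LinearMap.finrank_le_finrank_of_surjective (f := Submodule.liftQ _ ψ hk')
  intro z
  obtain ⟨v, rfl⟩ := hs z
  exact ⟨Submodule.Quotient.mk v, by simp⟩

end linear

namespace Model

variable {A : Type*} [CommRing A] [Algebra ℂ A] (M : Model A)

/-- The complex subspace underlying an ideal. -/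
abbrev rs (I : Ideal A) : Submodule ℂ A := I.restrictScalars ℂ

/-- The homogenisation map as a linear map. -/
def Hlin (n : ℕ) : ℂ[X] →ₗ[ℂ] A where
  toFun := M.H n
  map_add' := M.H_add n
  map_smul' := by
    intro a p
    simp only [H, coeff_smul, smul_eq_mul, map_mul, RingHom.id_apply, Finset.smul_sum]
    refine Finset.sum_congr rfl fun i _ => ?_
    rw [Algebra.smul_def]; ring

theorem finite_pow_and (k : ℕ) :
    Module.Finite ℂ (A ⧸ rs (M.m ^ k)) ∧ 2 * cod (rs (M.m ^ k)) = k * (k + 1) := by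
  induction k with
  | zero =>
    have : Subsingleton (A ⧸ rs (M.m ^ 0)) := by
      refine Submodule.Quotient.subsingleton_iff.2 ?_
      ext; simp
    refine ⟨inferInstance, ?_⟩
    simp only [cod, Module.finrank_zero_of_subsingleton, mul_zero, zero_mul]
  | succ k ih =>
    obtain ⟨ihf, ihd⟩ := ih
    have hle : rs (M.m ^ (k + 1)) ≤ rs (M.m ^ k) := fun _ hx =>
      Ideal.pow_le_pow_right (Nat.le_succ k) hx
    let L : degreeLT ℂ (k + 1) →ₗ[ℂ] (A ⧸ rs (M.m ^ (k + 1))) :=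
      (rs (M.m ^ (k + 1))).mkQ.comp ((M.Hlin k).comp (degreeLT ℂ (k + 1)).subtype)
    have hdeg : ∀ p : ℂ[X], p ∈ degreeLT ℂ (k + 1) ↔ p.natDegree ≤ k := by
      intro p
      rw [mem_degreeLT, ← Nat.lt_succ_iff]
      by_cases hp : p = 0
      · simp [hp, bot_lt_iff_ne_bot]
      · rw [degree_eq_natDegree hp]; norm_cast
    have hLinj : Function.Injective L := by
      rw [injective_iff_map_eq_zero]
      rintro ⟨p, hp⟩ h
      have h1 : M.H k p ∈ M.m ^ (k + 1) := by
        exact (Submodule.Quotient.mk_eq_zero (rs (M.m ^ (k + 1)))).1 h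
      have hl : M.Lead k (M.H k p) p := ⟨(hdeg p).1 hp, by simp⟩
      have := M.lead_eq_zero hl h1
      simpa using this
    have hLr : LinearMap.range L = (rs (M.m ^ k)).map (rs (M.m ^ (k + 1))).mkQ := by
      apply le_antisymm
      · rintro _ ⟨p, rfl⟩
        exact ⟨_, M.H_mem k p, rfl⟩
      · rintro _ ⟨f, hf, rfl⟩
        obtain ⟨p, hp⟩ := M.exists_lead k hf
        refine ⟨⟨p, (hdeg p).2 hp.1⟩, ?_⟩
        symm
        rw [← sub_eq_zero]
        have : f - M.H k p ∈ rs (M.m ^ (k + 1)) := hp.2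
        simp only [L, LinearMap.comp_apply]
        rw [← map_sub]
        exact (Submodule.Quotient.mk_eq_zero _).2 this
    have hdl : Module.Finite ℂ (degreeLT ℂ (k + 1)) :=
      Module.Finite.equiv (degreeLTEquiv ℂ (k + 1)).symm
    have hfr : Module.finrank ℂ (degreeLT ℂ (k + 1)) = k + 1 := by
      rw [(degreeLTEquiv ℂ (k + 1)).finrank_eq]; simp
    have hfin : Module.Finite ℂ ((rs (M.m ^ k)).map (rs (M.m ^ (k + 1))).mkQ) := by
      rw [← hLr]; infer_instance
    have hF : Module.Finite ℂ (A ⧸ rs (M.m ^ (k + 1))) := finite_quot_of_le' hle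
    refine ⟨hF, ?_⟩
    rw [cod_eq hle, ← hLr, LinearMap.finrank_range_of_inj hLinj, hfr, mul_add, ihd]
    ring

instance finite_pow (k : ℕ) : Module.Finite ℂ (A ⧸ rs (M.m ^ k)) := (M.finite_pow_and k).1

theorem cod_pow (k : ℕ) : 2 * cod (rs (M.m ^ k)) = k * (k + 1) := (M.finite_pow_and k).2

/-- Multiplication induces a map of quotients. -/
def mulQ (a : A) (W V : Submodule ℂ A) (h : ∀ w ∈ W, a * w ∈ V) : (A ⧸ W) →ₗ[ℂ] (A ⧸ V) :=
  Submodule.mapQ W V (LinearMap.mulLeft ℂ a) h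

theorem mulQ_mk (a : A) (W V : Submodule ℂ A) (h : ∀ w ∈ W, a * w ∈ V) (f : A) :
    mulQ a W V h (Submodule.Quotient.mk f) = Submodule.Quotient.mk (a * f) := rfl

/-- The ideal contains a power of the maximal ideal. -/
def Cof (I : Ideal A) : Prop := ∃ N, M.m ^ N ≤ I

theorem Cof.finite {I : Ideal A} (h : M.Cof I) : Module.Finite ℂ (A ⧸ rs I) := by
  obtain ⟨N, hN⟩ := h
  have : rs (M.m ^ N) ≤ rs I := hN
  exact finite_quot_of_le this

/-- `x ^ N` lies in the transformed ideal. -/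
theorem x_pow_mem {n k N : ℕ} {a b a' b' : A} {c : ℂ} (ha : M.φ c a = M.x ^ n * a')
    (hb : M.φ c b = M.x ^ k * b') (hN : M.x ^ N ∈ Ideal.span {a, b}) :
    M.x ^ N ∈ Ideal.span {a', b'} := by
  obtain ⟨u, v, h⟩ := Ideal.mem_span_pair.1 hN
  refine Ideal.mem_span_pair.2 ⟨M.φ c u * M.x ^ n, M.φ c v * M.x ^ k, ?_⟩
  have := congrArg (M.φ c) h
  rw [map_add, map_mul, map_mul, ha, hb, map_pow, M.φx] at this
  rw [← this]; ring

/-- A germ not vanishing identically on `x = 0` is `y ^ l` times a unit modulo `x`. -/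
theorem exists_y_pow (l : ℕ) : ∀ {f : A}, PowerSeries.coeff l (M.ρ f) ≠ 0 →
    ∃ l, ∃ s t : A, M.y ^ l = f * t + M.x * s := by
  induction l with
  | zero =>
    intro f hf
    have hu := M.isUnit_of_ev f (by simpa using hf)
    obtain ⟨u, rfl⟩ := hu
    exact ⟨0, 0, ↑u⁻¹, by simp⟩
  | succ l ih =>
    intro f hf
    by_cases h0 : M.ev f = 0
    · obtain ⟨f1, f2, rfl⟩ := M.max_of_ev f h0
      have h2 : PowerSeries.coeff l (M.ρ f2) ≠ 0 := by
        rw [map_add, map_mul, map_mul, M.ρx, M.ρy, zero_mul, zero_add,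
          PowerSeries.coeff_succ_X_mul] at hf
        exact hf
      obtain ⟨l', s, t, h⟩ := ih h2
      refine ⟨l' + 1, M.y * s - f1 * t, t, ?_⟩
      rw [pow_succ, h]; ring
    · obtain ⟨u, rfl⟩ := M.isUnit_of_ev f h0
      exact ⟨0, 0, ↑u⁻¹, by simp⟩

theorem cof_of {I : Ideal A} {N : ℕ} (hx : M.x ^ N ∈ I) {f : A} (hf : f ∈ I) (h : M.ρ f ≠ 0) :
    M.Cof I := by
  obtain ⟨l, hl⟩ : ∃ l, PowerSeries.coeff l (M.ρ f) ≠ 0 := by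
    by_contra! h'
    exact h (PowerSeries.ext (by simpa using h'))
  obtain ⟨l, s, t, e⟩ := M.exists_y_pow l hl
  apply Ideal.exists_pow_le_of_le_radical_of_fg
  · rw [m, Ideal.span_le]
    rintro z (rfl | rfl)
    · exact ⟨N, hx⟩
    · refine ⟨l * N, ?_⟩
      have h1 := sub_dvd_pow_sub_pow (M.y ^ l) (M.x * s) N
      rw [e, add_sub_cancel_right, ← e] at h1
      have h2 : (M.y ^ l) ^ N - (M.x * s) ^ N ∈ I :=
        Ideal.mem_of_dvd _ ((dvd_mul_right f t).trans h1) hf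
      have h3 : (M.x * s) ^ N ∈ I := by rw [mul_pow]; exact Ideal.mul_mem_right _ _ hx
      rw [pow_mul]
      simpa using Ideal.add_mem _ h2 h3
  · exact Submodule.fg_span (Set.toFinite _)

/-- Every germ upstairs is, modulo `m ^ n` with `n ≤ k + 1`, the transform of an element of `m ^ k`. -/
theorem φ_surj (c : ℂ) (k n : ℕ) (hn : n ≤ k + 1) (g : A) :
    ∃ f ∈ M.m ^ k, ∃ f', M.φ c f = M.x ^ k * f' ∧ g - f' ∈ M.m ^ n := by
  induction n with
  | zero => exact ⟨0, by simp, 0, by simp, by simp⟩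
  | succ n ih =>
    obtain ⟨f, hf, f', e, hg⟩ := ih (by lia)
    obtain ⟨p, hp⟩ := M.exists_lead n hg
    have hmem : ∀ i ∈ Finset.range (n + 1),
        M.x ^ (k + n - 2 * i) * (M.y - algebraMap ℂ A c * M.x) ^ i ∈ M.m ^ k := by
      intro i hi
      have hi' := Finset.mem_range.1 hi
      have h1 : (M.y - algebraMap ℂ A c * M.x) ∈ M.m :=
        Ideal.sub_mem _ M.y_mem (Ideal.mul_mem_left _ _ M.x_mem)
      have h2 := Ideal.mul_mem_mul (Ideal.pow_mem_pow M.x_mem (k + n - 2 * i))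
        (Ideal.pow_mem_pow h1 i)
      rw [← pow_add] at h2
      exact Ideal.pow_le_pow_right (by lia) h2
    refine ⟨f + ∑ i ∈ Finset.range (n + 1), algebraMap ℂ A (p.coeff i) *
      (M.x ^ (k + n - 2 * i) * (M.y - algebraMap ℂ A c * M.x) ^ i),
      Ideal.add_mem _ hf (Ideal.sum_mem _ fun i hi => Ideal.mul_mem_left _ _ (hmem i hi)),
      f' + M.H n p, ?_, ?_⟩
    · rw [map_add, e, mul_add, map_sum, H, Finset.mul_sum]
      congr 1
      refine Finset.sum_congr rfl fun i hi => ?_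
      have hi' := Finset.mem_range.1 hi
      simp only [map_mul, map_pow, map_sub, AlgHom.commutes, M.φx, M.φy]
      have h1 : M.x * (algebraMap ℂ A c + M.y) - algebraMap ℂ A c * M.x = M.x * M.y := by ring
      have h2 : M.x ^ (k + n - 2 * i) * M.x ^ i = M.x ^ k * M.x ^ (n - i) := by
        rw [← pow_add, ← pow_add]; congr 1; lia
      rw [h1, mul_pow]
      linear_combination algebraMap ℂ A (p.coeff i) * M.y ^ i * h2
    · rw [← sub_sub]
      exact hp.2

/-- Dividing the pullback by the power of the exceptional divisor, as a linear map. -/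
def ψ (c : ℂ) (k : ℕ) : rs (M.m ^ k) →ₗ[ℂ] A where
  toFun f := (M.φ_mem c k f.2).choose
  map_add' f g := by
    apply M.x_pow_cancel k
    rw [← (M.φ_mem c k (f + g).2).choose_spec, mul_add, ← (M.φ_mem c k f.2).choose_spec,
      ← (M.φ_mem c k g.2).choose_spec]
    simp
  map_smul' a f := by
    apply M.x_pow_cancel k
    rw [← (M.φ_mem c k (a • f).2).choose_spec, RingHom.id_apply, mul_smul_comm,
      ← (M.φ_mem c k f.2).choose_spec]
    simp

theorem ψ_spec (c : ℂ) (k : ℕ) (f : rs (M.m ^ k)) : M.φ c f = M.x ^ k * M.ψ c k f :=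
  (M.φ_mem c k f.2).choose_spec

/-- Noether's inequality for the transform of a pair of germs: the codimension of
`(a, b)` drops by at least the product of the multiplicities. -/
theorem measure_drop {n k : ℕ} {a b a' b' : A} {p q : ℂ[X]} {c : ℂ} (hp : M.Lead n a p)
    (hq : M.Lead k b q) (hne : p ≠ 0 ∨ q ≠ 0) (ha : M.φ c a = M.x ^ n * a')
    (hb : M.φ c b = M.x ^ k * b') (hcof : M.Cof (Ideal.span {a, b})) :
    M.Cof (Ideal.span {a', b'}) ∧
      cod (rs (Ideal.span {a', b'})) + n * k ≤ cod (rs (Ideal.span {a, b})) := by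
  have hcof' : M.Cof (Ideal.span {a', b'}) := by
    obtain ⟨N, hN⟩ := hcof
    have hx := M.x_pow_mem ha hb (hN (Ideal.pow_mem_pow M.x_mem N))
    have hexp : ∀ r : ℂ[X], r ≠ 0 → expand c r ≠ 0 := fun r hr h0 =>
      hr (expand_inj c (h0.trans (expand_zero c).symm))
    rcases hne with h | h
    · exact M.cof_of hx (f := a') (Ideal.subset_span (by simp))
        (by rw [hp.ρ_eq M ha]; exact hexp _ h)
    · exact M.cof_of hx (f := b') (Ideal.subset_span (by simp))
        (by rw [hq.ρ_eq M hb]; exact hexp _ h)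
  refine ⟨hcof', ?_⟩
  obtain ⟨N, hN⟩ := hcof
  obtain ⟨N', hN'⟩ := hcof'
  obtain ⟨t, ht⟩ : ∃ t, t = N' := ⟨_, rfl⟩
  -- the degree `t + n + k` is large enough for all truncations
  set d := t + n + k with hd
  set K : Ideal A := Ideal.span {a} * M.m ^ (t + k) ⊔ Ideal.span {b} * M.m ^ (t + n) with hK
  have haK : ∀ w ∈ rs (M.m ^ (t + k)), a * w ∈ rs K := fun w hw =>
    Ideal.mem_sup_left (Ideal.mul_mem_mul (Ideal.mem_span_singleton_self a) hw)
  have hbK : ∀ w ∈ rs (M.m ^ (t + n)), b * w ∈ rs K := fun w hw =>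
    Ideal.mem_sup_right (Ideal.mul_mem_mul (Ideal.mem_span_singleton_self b) hw)
  have hKm : rs K ≤ rs (M.m ^ d) := by
    have h1 : Ideal.span {a} ≤ M.m ^ n := (Ideal.span_singleton_le_iff_mem _).2 hp.mem
    have h2 : Ideal.span {b} ≤ M.m ^ k := (Ideal.span_singleton_le_iff_mem _).2 hq.mem
    have : K ≤ M.m ^ d := by
      refine sup_le ?_ ?_
      · refine (Ideal.mul_mono_left h1).trans ?_
        rw [← pow_add]; exact Ideal.pow_le_pow_right (by lia)
      · refine (Ideal.mul_mono_left h2).trans ?_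
        rw [← pow_add]; exact Ideal.pow_le_pow_right (by lia)
    exact this
  have hKJ : rs K ≤ rs (Ideal.span {a, b}) := by
    have : K ≤ Ideal.span {a, b} := by
      rw [Ideal.span_insert]
      exact sup_le_sup Ideal.mul_le_left Ideal.mul_le_left
    exact this
  have hfinK : Module.Finite ℂ (A ⧸ rs K) := by
    apply Cof.finite M
    refine ⟨d + N, ?_⟩
    rw [pow_add]
    refine (Ideal.mul_mono_right hN).trans ?_
    rw [Ideal.span_insert, Ideal.mul_sup]
    refine sup_le_sup ?_ ?_
    · rw [mul_comm]; exact Ideal.mul_mono_right (Ideal.pow_le_pow_right (by lia))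
    · rw [mul_comm]; exact Ideal.mul_mono_right (Ideal.pow_le_pow_right (by lia))
  -- the map `(u, v) ↦ a u + b v` and the Koszul relations in its kernel
  let Θ : ((A ⧸ rs (M.m ^ (t + k))) × (A ⧸ rs (M.m ^ (t + n)))) →ₗ[ℂ] (A ⧸ rs K) :=
    (mulQ a _ _ haK).coprod (mulQ b _ _ hbK)
  have hb1 : ∀ w ∈ rs (M.m ^ t), b * w ∈ rs (M.m ^ (t + k)) := by
    intro w hw
    have := Ideal.mul_mem_mul hq.mem hw
    rw [← pow_add, add_comm] at this
    exact this
  have ha1 : ∀ w ∈ rs (M.m ^ t), -a * w ∈ rs (M.m ^ (t + n)) := by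
    intro w hw
    have := Ideal.mul_mem_mul (Ideal.neg_mem_iff _ |>.2 hp.mem) hw
    rw [← pow_add, add_comm] at this
    exact this
  let Ξ : (A ⧸ rs (M.m ^ t)) →ₗ[ℂ] ((A ⧸ rs (M.m ^ (t + k))) × (A ⧸ rs (M.m ^ (t + n)))) :=
    (mulQ b _ _ hb1).prod (mulQ (-a) _ _ ha1)
  have hΞinj : Function.Injective Ξ := by
    rw [injective_iff_map_eq_zero]
    intro w hw
    obtain ⟨f, rfl⟩ := Submodule.Quotient.mk_surjective _ w
    have h1 : Submodule.Quotient.mk (p := rs (M.m ^ (t + k))) (b * f) = 0 := congrArg Prod.fst hw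
    have h2 : Submodule.Quotient.mk (p := rs (M.m ^ (t + n))) (-a * f) = 0 := congrArg Prod.snd hw
    rw [Submodule.Quotient.mk_eq_zero] at h1 h2 ⊢
    have h1' : b * f ∈ M.m ^ (k + t) := by rw [add_comm]; exact h1
    have h2' : a * f ∈ M.m ^ (n + t) := by
      rw [add_comm]
      have h3 : -(-a * f) ∈ M.m ^ (t + n) := Ideal.neg_mem_iff _ |>.2 h2
      simpa using h3
    rcases hne with h | h
    · exact M.mem_of_mul_mem hp h t h2'
    · exact M.mem_of_mul_mem hq h t h1'
  have hΞΘ : LinearMap.range Ξ ≤ LinearMap.ker Θ := by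
    rintro _ ⟨w, rfl⟩
    obtain ⟨f, rfl⟩ := Submodule.Quotient.mk_surjective _ w
    rw [LinearMap.mem_ker]
    change Submodule.Quotient.mk (p := rs K) (a * (b * f)) +
      Submodule.Quotient.mk (p := rs K) (b * (-a * f)) = 0
    rw [← Submodule.Quotient.mk_add]
    convert Submodule.Quotient.mk_zero (rs K) using 2
    ring
  have hΘr : LinearMap.range Θ = (rs (Ideal.span {a, b})).map (rs K).mkQ := by
    apply le_antisymm
    · rintro _ ⟨⟨u, v⟩, rfl⟩
      obtain ⟨u, rfl⟩ := Submodule.Quotient.mk_surjective _ u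
      obtain ⟨v, rfl⟩ := Submodule.Quotient.mk_surjective _ v
      refine ⟨a * u + b * v, ?_, rfl⟩
      exact Ideal.mem_span_pair.2 ⟨u, v, by ring⟩
    · rintro _ ⟨f, hf, rfl⟩
      obtain ⟨u, v, rfl⟩ := Ideal.mem_span_pair.1 hf
      refine ⟨(Submodule.Quotient.mk u, Submodule.Quotient.mk v), ?_⟩
      change Submodule.Quotient.mk (p := rs K) (a * u + b * v) =
        Submodule.Quotient.mk (p := rs K) (u * a + v * b)
      congr 1; ring
  have e1 := LinearMap.finrank_range_add_finrank_ker Θ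
  have e2 := Submodule.finrank_mono hΞΘ
  rw [LinearMap.finrank_range_of_inj hΞinj] at e2
  rw [hΘr, Module.finrank_prod] at e1
  have e3 := cod_eq hKJ
  have e4 := cod_eq hKm
  -- the quotient by the transformed ideal is a quotient of `m ^ d / K`
  have hN'd : N' ≤ d + 1 := by lia
  have hkill : ∀ w ∈ K, ∃ w' ∈ Ideal.span {a', b'}, M.φ c w = M.x ^ d * w' := by
    intro w hw
    obtain ⟨w1, h1, w2, h2, rfl⟩ := Submodule.mem_sup.1 hw
    obtain ⟨u, hu, rfl⟩ := Ideal.mem_span_singleton_mul.1 h1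
    obtain ⟨v, hv, rfl⟩ := Ideal.mem_span_singleton_mul.1 h2
    obtain ⟨u', hu'⟩ := M.φ_mem c _ hu
    obtain ⟨v', hv'⟩ := M.φ_mem c _ hv
    refine ⟨u' * a' + v' * b', Ideal.mem_span_pair.2 ⟨_, _, rfl⟩, ?_⟩
    rw [map_add, map_mul, map_mul, ha, hb, hu', hv', hd]
    ring
  have e5 : cod (rs (Ideal.span {a', b'})) ≤
      Module.finrank ℂ ((rs (M.m ^ d)).map (rs K).mkQ) := by
    refine cod_le_of_surj (((rs (Ideal.span {a', b'})).mkQ).comp (M.ψ c d)) ?_ ?_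
    · intro z
      obtain ⟨g, rfl⟩ := Submodule.Quotient.mk_surjective _ z
      obtain ⟨f, hf, f', h1, h2⟩ := M.φ_surj c d N' hN'd g
      refine ⟨⟨f, hf⟩, ?_⟩
      have h3 : M.ψ c d ⟨f, hf⟩ = f' := by
        apply M.x_pow_cancel d
        rw [← M.ψ_spec, ← h1]
      rw [LinearMap.comp_apply, h3]
      symm
      exact (Submodule.Quotient.eq _).2 (hN' h2)
    · intro v hv
      obtain ⟨w', hw', e⟩ := hkill v hv
      have h3 : M.ψ c d v = w' := by
        apply M.x_pow_cancel d
        rw [← M.ψ_spec, ← e]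
      rw [LinearMap.comp_apply, h3]
      exact (Submodule.Quotient.mk_eq_zero _).2 hw'
  have c0 := M.cod_pow t
  have c1 := M.cod_pow (t + k)
  have c2 := M.cod_pow (t + n)
  have c3 := M.cod_pow d
  simp only [cod] at *
  rw [hd] at c3
  nlinarith

theorem cod_σ (a b : A) :
    cod (rs (Ideal.span {M.σ a, M.σ b})) = cod (rs (Ideal.span {a, b})) := by
  let e : A ≃ₗ[ℂ] A := LinearEquiv.ofInvolutive M.σ.toLinearMap M.σσ
  refine (LinearEquiv.finrank_eq (Submodule.Quotient.equiv _ _ e ?_)).symm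
  ext f
  simp only [Submodule.mem_map, Submodule.restrictScalars_mem, Ideal.mem_span_pair]
  constructor
  · rintro ⟨_, ⟨u, v, rfl⟩, rfl⟩
    exact ⟨M.σ u, M.σ v, (map_add M.σ _ _).trans (by rw [map_mul, map_mul]) |>.symm⟩
  · rintro ⟨u, v, rfl⟩
    exact ⟨_, ⟨M.σ u, M.σ v, rfl⟩, (map_add M.σ _ _).trans (by rw [map_mul, map_mul, M.σσ, M.σσ])⟩

theorem cof_σ {a b : A} (h : M.Cof (Ideal.span {a, b})) : M.Cof (Ideal.span {M.σ a, M.σ b}) := by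
  obtain ⟨N, hN⟩ := h
  refine ⟨N, fun f hf => ?_⟩
  obtain ⟨u, v, e⟩ := Ideal.mem_span_pair.1 (hN (M.σ_mem N hf))
  refine Ideal.mem_span_pair.2 ⟨M.σ u, M.σ v, ?_⟩
  rw [← M.σσ f, ← e]; simp

end Model
end
end CamachoSad

namespace CamachoSad
open Polynomial

noncomputable section

/-! ### Reduction by blow-ups -/

/-- Nonnegative rational complex numbers. -/
def NN (z : ℂ) : Prop := ∃ q : ℚ, 0 ≤ q ∧ z = q

theorem NN_zero : NN 0 := ⟨0, le_rfl, by simp⟩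

theorem NN_sum {ι : Type*} (s : Finset ι) (f : ι → ℂ) (h : ∀ i ∈ s, NN (f i)) :
    NN (∑ i ∈ s, f i) := by
  classical
  induction s using Finset.induction_on with
  | empty => simpa using NN_zero
  | insert i s hi ih =>
    obtain ⟨q, hq, e⟩ := ih fun j hj => h j (Finset.mem_insert_of_mem hj)
    obtain ⟨r, hr, e'⟩ := h i (Finset.mem_insert_self _ _)
    refine ⟨r + q, by positivity, ?_⟩
    rw [Finset.sum_insert hi, e, e']; push_cast; ring

theorem resq_zero (g : PowerSeries ℂ) : resq 0 g = 0 := by simp [resq]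

theorem resq_unit (f g : PowerSeries ℂ) (hg : PowerSeries.constantCoeff g ≠ 0) :
    resq f g = 0 := by
  rw [resq, div_eq_mul_inv, coe_inv_of_unit g hg, ← PowerSeries.coe_mul, coeff_coe_neg]

theorem resq_X_mul (f g : PowerSeries ℂ) (hg : PowerSeries.constantCoeff g ≠ 0) :
    resq f (PowerSeries.X * g) =
      PowerSeries.constantCoeff f / PowerSeries.constantCoeff g := by
  rw [resq, div_eq_mul_inv, PowerSeries.coe_mul, mul_inv, ← LX_eq, coe_inv_of_unit g hg,
    mul_left_comm, coeff_LX_inv_mul, ← PowerSeries.coe_mul, neg_add_cancel, coeff_coe_zero,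
    map_mul, PowerSeries.constantCoeff_inv, div_eq_mul_inv]

/-- The effect of a blow-up on the index along a component through its centre. -/
theorem resq_shift (u v : PowerSeries ℂ) (n : ℕ) (hv : v ≠ 0) :
    resq (u - v) (PowerSeries.X * v) =
      resq (PowerSeries.X ^ n * u) (PowerSeries.X * (PowerSeries.X ^ n * v)) - 1 := by
  have hv' : (v : LaurentSeries ℂ) ≠ 0 := fun h =>
    hv (HahnSeries.ofPowerSeries_injective (Γ := ℤ) (by simpa using h))
  have h1 : (LX⁻¹ * (1 : LaurentSeries ℂ)).coeff (-1) = 1 := by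
    rw [coeff_LX_inv_mul]; simp
  rw [← h1, resq, resq, ← HahnSeries.coeff_sub]
  congr 1
  simp only [PowerSeries.coe_mul, PowerSeries.coe_pow, PowerSeries.coe_sub, ← LX_eq]
  have hL := LX_ne
  generalize LX = t at *
  field_simp

theorem reflect_succ (n : ℕ) (p : ℂ[X]) (hp : p.natDegree ≤ n) :
    reflect (n + 1) p = X * reflect n p := by
  have := reflect_mul p 1 (F := n) (G := 1) hp (by simp)
  rw [mul_one] at this
  rw [this, mul_comm]
  congr 1
  rw [← C_1, reflect_C]; simp

theorem reflect_X_mul (n : ℕ) (p : ℂ[X]) (hp : p.natDegree ≤ n) :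
    reflect (n + 1) (X * p) = reflect n p := by
  have := reflect_mul p X (F := n) (G := 1) hp (by simp)
  rw [mul_comm, this]
  have h : reflect 1 (X : ℂ[X]) = 1 := by
    have := reflect_monomial 1 1 (R := ℂ)
    rwa [pow_one, revAt_le le_rfl, Nat.sub_self, pow_zero] at this
  rw [h, mul_one]

theorem exists_eval_ne (p : ℂ[X]) (hp : p ≠ 0) : ∃ c : ℂ, c ≠ 0 ∧ p.eval c ≠ 0 := by
  by_contra! h
  have : X * p = 0 := by
    apply Polynomial.funext
    intro c
    by_cases hc : c = 0
    · simp [hc]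
    · simp [h c hc]
  exact hp ((mul_eq_zero.1 this).resolve_left X_ne_zero)

theorem exists_last (Q : ℕ → Prop) (h0 : Q 0) {N : ℕ} (hN : ¬ Q N) : ∃ n, Q n ∧ ¬ Q (n + 1) := by
  by_contra! h
  exact hN (Nat.rec h0 h N)

theorem span_eq1 {A : Type*} [CommRing A] (a b u : A) :
    Ideal.span {a, b - u * a} = Ideal.span {a, b} := by
  ext f
  simp only [Ideal.mem_span_pair]
  constructor
  · rintro ⟨s, t, rfl⟩; exact ⟨s - t * u, t, by ring⟩
  · rintro ⟨s, t, rfl⟩; exact ⟨s + t * u, t, by ring⟩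

theorem span_eq2 {A : Type*} [CommRing A] (a b : A) :
    Ideal.span {b, a - b} = Ideal.span {a, b} := by
  ext f
  simp only [Ideal.mem_span_pair]
  constructor
  · rintro ⟨s, t, rfl⟩; exact ⟨t, s - t, by ring⟩
  · rintro ⟨s, t, rfl⟩; exact ⟨s + t, s, by ring⟩

theorem span_eq3 {A : Type*} [CommRing A] (a b u : A) (hu : IsUnit u) :
    Ideal.span {a, u * (b - a)} = Ideal.span {a, b} := by
  obtain ⟨u, rfl⟩ := hu
  ext f
  simp only [Ideal.mem_span_pair]
  have h := u.inv_mul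
  constructor
  · rintro ⟨s, t, rfl⟩; exact ⟨s - t * u, t * u, by ring⟩
  · rintro ⟨s, t, rfl⟩; exact ⟨s + t, t * ↑u⁻¹, by linear_combination t * (b - a) * h⟩

namespace Model

variable {A : Type*} [CommRing A] [Algebra ℂ A] (M : Model A)

/-- Closure rules for three predicates on pairs of germs, meaning respectively that
`S0 P Q`: the field `P ∂x + Q ∂y` has an invariant curve; `S1 a b`: the field `x a ∂x + b ∂y` has an
invariant curve other than `x = 0`; `S2 a b`: the field `x a ∂x + y b ∂y` has an invariant curve
other than the axes.  The rules are the Briot–Bouquet theorem and the images of curves under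
blow-ups. -/
structure Rules (S0 S1 S2 : A → A → Prop) : Prop where
  bb : ∀ a b, M.ev a ≠ 0 → M.ev b = 0 →
    (∀ n : ℕ, 1 ≤ n → PowerSeries.coeff 1 (M.ρ b) ≠ n * M.ev a) → S1 a b
  one_of_one : ∀ (c : ℂ) (n : ℕ) (a b a' b' : A), M.φ c a = M.x ^ n * a' →
    M.φ c b = M.x ^ (n + 1) * b' → S1 a' (b' - (algebraMap ℂ A c + M.y) * a') → S1 a b
  one_of_two : ∀ (n : ℕ) (a b a' b' : A), M.φ 0 (M.σ a) = M.x ^ n * a' →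
    M.φ 0 (M.σ b) = M.x ^ (n + 1) * b' → S2 b' (a' - b') → S1 a b
  two_of_one : ∀ (c : ℂ) (n : ℕ) (a b a' b' : A), c ≠ 0 → M.φ c a = M.x ^ n * a' →
    M.φ c b = M.x ^ n * b' → S1 a' ((algebraMap ℂ A c + M.y) * (b' - a')) → S2 a b
  two_of_two : ∀ (n : ℕ) (a b a' b' : A), M.φ 0 a = M.x ^ n * a' →
    M.φ 0 b = M.x ^ n * b' → S2 a' (b' - a') → S2 a b
  two_swap : ∀ a b, S2 (M.σ b) (M.σ a) → S2 a b
  zero_of_one : ∀ (c : ℂ) (n : ℕ) (a b a' b' : A), M.φ c a = M.x ^ n * a' →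
    M.φ c b = M.x ^ n * b' → S1 a' (b' - (algebraMap ℂ A c + M.y) * a') → S0 a b
  zero_swap : ∀ a b, S0 (M.σ b) (M.σ a) → S0 a b

/-- Codimension of the ideal generated by two germs. -/
abbrev cd (a b : A) : ℕ := cod (rs (Ideal.span {a, b}))

/-- A singular point on a single component of the exceptional divisor, `x = 0`, whose
Camacho–Sad index is not a nonnegative rational. -/
def St1 (a b : A) : Prop := M.Cof (Ideal.span {a, b}) ∧ ¬ NN (resq (M.ρ a) (M.ρ b))

/-- The Camacho–Sad index of `x a ∂x + y b ∂y` along `x = 0`. -/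
def ix (a b : A) : ℂ := resq (M.ρ a) (PowerSeries.X * M.ρ b)

/-- A corner `x y = 0` of the exceptional divisor whose two indices `ix a b` and
`ix (σ b) (σ a)` satisfy Cano's condition: for some rational `α > 0` the first one is a rational
number `≤ -α`, and the second one is not a rational number `≥ -1 / α`. -/
def St2 (a b : A) : Prop := M.Cof (Ideal.span {a, b}) ∧ ∃ α : ℚ, 0 < α ∧
  (∃ q : ℚ, q ≤ -α ∧ M.ix a b = q) ∧ ¬ ∃ q : ℚ, -1 / α ≤ q ∧ M.ix (M.σ b) (M.σ a) = q

theorem ρ_c_add_y (c : ℂ) : M.ρ (algebraMap ℂ A c + M.y) = expand c X := by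
  rw [map_add, AlgHom.commutes, M.ρy, expand_X]; rfl

/-- Two germs generating a cofinite ideal do not both vanish to arbitrarily high order. -/
theorem not_both {a b : A} {N : ℕ} (hN : M.m ^ N ≤ Ideal.span {a, b}) :
    ¬ (a ∈ M.m ^ (N + 1) ∧ b ∈ M.m ^ (N + 1)) := by
  rintro ⟨ha, hb⟩
  apply M.not_pow_le N
  refine hN.trans ?_
  rw [Ideal.span_le]
  rintro z (rfl | rfl)
  exacts [ha, hb]

variable {M} {S0 S1 S2 : A → A → Prop}

/-- Blowing up a point satisfying `St1`. If `a` is a unit, the hypothesis on the index is the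
nonresonance condition of the Briot–Bouquet theorem. Otherwise the exceptional divisor is either
transverse to the foliation at a general point, or it carries a point satisfying `St1`, or all its
points off the corner have nonnegative rational index, and then by the residue theorem the corner
satisfies `St2` with `α = 1`. In the last case the codimension need not decrease. -/
theorem step1 (R : M.Rules S0 S1 S2) {a b : A} (h : M.St1 a b)
    (ih1 : ∀ a' b', M.St1 a' b' → cd a' b' < cd a b → S1 a' b')
    (ih2 : ∀ a' b', M.St2 a' b' → cd a' b' ≤ cd a b → S2 a' b') : S1 a b := by
  obtain ⟨hcof, hidx⟩ := h
  have hb0 : M.ev b = 0 := by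
    by_contra hb
    exact hidx (by rw [resq_unit _ _ hb]; exact NN_zero)
  have hρb : M.ρ b ≠ 0 := by
    intro h0
    apply hidx
    rw [h0]; simpa [resq] using NN_zero
  by_cases ha0 : M.ev a = 0
  swap
  · refine R.bb a b ha0 hb0 fun n hn he => hidx ?_
    obtain ⟨g, hg⟩ := PowerSeries.X_dvd_iff.2 hb0
    rw [hg] at he ⊢
    have hg0 : PowerSeries.constantCoeff g = n * M.ev a := by
      rw [← he, ← zero_add 1, PowerSeries.coeff_succ_X_mul]; simp
    have hn0 : (n : ℂ) ≠ 0 := by exact_mod_cast (by lia : n ≠ 0)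
    rw [resq_X_mul _ _ (by rw [hg0]; exact mul_ne_zero hn0 ha0), hg0]
    refine ⟨1 / n, by positivity, ?_⟩
    change M.ev a / _ = _
    push_cast
    field_simp
  obtain ⟨N, hN⟩ := id hcof
  obtain ⟨n, ⟨han, hbn⟩, hlast⟩ := exists_last (fun n => a ∈ M.m ^ n ∧ b ∈ M.m ^ (n + 1))
    ⟨by simp, by simpa using M.mem_m_of_ev hb0⟩ (N := N + 1)
    (fun h => M.not_both hN ⟨h.1, Ideal.pow_le_pow_right (by lia) h.2⟩)
  obtain ⟨p, hp⟩ := M.exists_lead n han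
  obtain ⟨q, hq⟩ := M.exists_lead (n + 1) hbn
  have hne : p ≠ 0 ∨ q ≠ 0 := by
    by_contra! h0
    obtain ⟨rfl, rfl⟩ := h0
    exact hlast ⟨hp.mem_succ, hq.mem_succ⟩
  have chart : ∀ c : ℂ, ∃ a' b', M.φ c a = M.x ^ n * a' ∧ M.φ c b = M.x ^ (n + 1) * b' ∧
      M.ρ a' = expand c p ∧
      M.ρ (b' - (algebraMap ℂ A c + M.y) * a') = expand c (q - X * p) := by
    intro c
    obtain ⟨a', ha'⟩ := M.φ_mem c _ han
    obtain ⟨b', hb'⟩ := M.φ_mem c _ hbn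
    refine ⟨a', b', ha', hb', hp.ρ_eq M ha', ?_⟩
    rw [map_sub, map_mul, hq.ρ_eq M hb', hp.ρ_eq M ha', ρ_c_add_y, expand_sub, expand_mul]
  by_cases hD : q - X * p = 0
  · have hp0 : p ≠ 0 := by
      rintro rfl
      rcases hne with h | h
      · exact h rfl
      · exact h (by simpa using hD)
    obtain ⟨c, -, hc⟩ := exists_eval_ne p hp0
    obtain ⟨a', b', ha', hb', hρa, hρb'⟩ := chart c
    refine R.one_of_one c n a b a' b' ha' hb' (R.bb _ _ ?_ ?_ ?_)
    · rw [ev, hρa, constantCoeff_expand]; exact hc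
    · rw [ev, hρb', hD, expand_zero]; simp
    · intro k hk
      rw [hρb', hD, expand_zero, ev, hρa, constantCoeff_expand, map_zero]
      have hn0 : (k : ℂ) ≠ 0 := by exact_mod_cast (by lia : k ≠ 0)
      exact (mul_ne_zero hn0 hc).symm
  by_cases hall : ∀ c, NN (resq (expand c p) (expand c (q - X * p)))
  swap
  · push Not at hall
    obtain ⟨c, hc⟩ := hall
    obtain ⟨a', b', ha', hb', hρa, hρb'⟩ := chart c
    have hn : n ≠ 0 := by
      rintro rfl
      have : p = 0 := M.lead_eq_zero hp (by simpa using M.mem_m_of_ev ha0)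
      apply hc
      rw [this, expand_zero, resq_zero]
      exact NN_zero
    obtain ⟨hc1, hc2⟩ := M.measure_drop hp hq hne ha' hb' hcof
    refine R.one_of_one c n a b a' b' ha' hb' (ih1 _ _ ⟨?_, ?_⟩ ?_)
    · rw [span_eq1]; exact hc1
    · rw [hρa, hρb']; exact hc
    · rw [cd, span_eq1]
      have : 0 < n * (n + 1) := by positivity
      lia
  -- all the finite points have nonnegative rational index: use the corner
  obtain ⟨a', ha'⟩ := M.φ_mem 0 _ (M.σ_mem _ han)
  obtain ⟨b', hb'⟩ := M.φ_mem 0 _ (M.σ_mem _ hbn)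
  have hne' : reflect n p ≠ 0 ∨ reflect (n + 1) q ≠ 0 := by
    simpa [reflect_eq_zero_iff] using hne
  obtain ⟨hc1, hc2⟩ := M.measure_drop (hp.σ M) (hq.σ M) hne' ha' hb' (M.cof_σ hcof)
  rw [M.cod_σ] at hc2
  refine R.one_of_two n a b a' b' ha' hb' (ih2 _ _ ⟨?_, 1, one_pos, ?_, ?_⟩ ?_)
  · rw [span_eq2]; exact hc1
  · obtain ⟨S, hS⟩ := residue_sum (n + 1) p q (hp.1.trans (by lia)) hq.1 hD
    have hS' := hS S subset_rfl
    obtain ⟨s, hs, es⟩ := NN_sum S (fun c => resq (expand c p) (expand c (q - X * p)))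
      (fun c _ => hall c)
    rw [es] at hS'
    refine ⟨-1 - s, by linarith, ?_⟩
    rw [ix, map_sub, (hp.σ M).ρ_eq M ha', (hq.σ M).ρ_eq M hb', expand_at_zero, expand_at_zero]
    rw [reflect_succ n p hp.1, Polynomial.coe_mul, Polynomial.coe_X, ← mul_sub] at hS'
    push_cast
    linear_combination hS'
  · have e1 := M.ρσφ (M.σ a)
    have e2 := M.ρσφ (M.σ b)
    rw [ha', M.σσ, map_mul, map_mul, map_pow, map_pow, M.σx, M.ρy] at e1
    rw [hb', M.σσ, map_mul, map_mul, map_pow, map_pow, M.σx, M.ρy] at e2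
    rintro ⟨r, hr, er⟩
    apply hidx
    have hv : M.ρ (M.σ b') ≠ 0 := by
      intro h0
      rw [h0, mul_zero] at e2
      exact hρb e2.symm
    rw [ix, map_sub, map_sub, resq_shift _ _ n hv, e1, ← mul_assoc, ← pow_succ', e2] at er
    refine ⟨r + 1, by linarith, ?_⟩
    push_cast
    linear_combination er
  · rw [cd, span_eq2]
    have : 0 ≤ n * (n + 1) := by positivity
    lia

/-- Blowing up a corner satisfying `St2`. The exceptional divisor is either transverse to the
foliation at a general point, or it carries a point satisfying `St1`, or the residue theorem shows
that one of its two corners satisfies `St2`, with `α / (α + 1)` or `α + 1` in place of `α`. The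
codimension always decreases, because both germs vanish at the corner. -/
theorem step2 (R : M.Rules S0 S1 S2) {a b : A} (h : M.St2 a b)
    (ih1 : ∀ a' b', M.St1 a' b' → cd a' b' < cd a b → S1 a' b')
    (ih2 : ∀ a' b', M.St2 a' b' → cd a' b' < cd a b → S2 a' b') : S2 a b := by
  obtain ⟨hcof, α, hα, ⟨q0, hq0, eq0⟩, hidx⟩ := h
  have hq0' : (q0 : ℂ) ≠ 0 := by exact_mod_cast (by linarith : q0 < 0).ne
  have hα' : 0 < 1 / α := by positivity
  have hb0 : M.ev b = 0 := by
    by_contra hb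
    rw [ix, resq_X_mul _ _ hb] at eq0
    change M.ev a / M.ev b = q0 at eq0
    have ha : M.ev a ≠ 0 := by
      intro h0; rw [h0, zero_div] at eq0; exact hq0' eq0.symm
    apply hidx
    refine ⟨1 / q0, ?_, ?_⟩
    · have : 1 / (-q0) ≤ 1 / α := one_div_le_one_div_of_le hα (by linarith)
      rw [one_div_neg_eq_neg_one_div] at this
      rw [neg_div]
      linarith
    · rw [ix, resq_X_mul _ _ (by rw [← ev, M.ev_σ]; exact ha)]
      change M.ev (M.σ b) / M.ev (M.σ a) = _
      rw [M.ev_σ, M.ev_σ]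
      push_cast
      rw [← eq0, one_div_div]
  have ha0 : M.ev a = 0 := by
    by_contra ha
    apply hidx
    refine ⟨0, by rw [neg_div]; linarith, ?_⟩
    rw [ix, resq_X_mul _ _ (by rw [← ev, M.ev_σ]; exact ha)]
    change M.ev (M.σ b) / M.ev (M.σ a) = _
    rw [M.ev_σ, M.ev_σ, hb0]; simp
  have hρσa : M.ρ (M.σ a) ≠ 0 := by
    intro h0
    apply hidx
    refine ⟨0, by rw [neg_div]; linarith, ?_⟩
    rw [ix, h0]; simp [resq]
  have hρb : M.ρ b ≠ 0 := by
    intro h0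
    rw [ix, h0] at eq0
    apply hq0'
    rw [← eq0]; simp [resq]
  obtain ⟨N, hN⟩ := id hcof
  obtain ⟨n, ⟨han, hbn⟩, hlast⟩ := exists_last (fun n => a ∈ M.m ^ n ∧ b ∈ M.m ^ n)
    ⟨by simp, by simp⟩ (N := N + 1) (M.not_both hN)
  have hn : 0 < n := by
    rcases Nat.eq_zero_or_pos n with rfl | h
    · exact absurd ⟨by simpa using M.mem_m_of_ev ha0, by simpa using M.mem_m_of_ev hb0⟩ hlast
    · exact h
  have hnn : 0 < n * n := by positivity
  obtain ⟨p, hp⟩ := M.exists_lead n han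
  obtain ⟨q, hq⟩ := M.exists_lead n hbn
  have hne : p ≠ 0 ∨ q ≠ 0 := by
    by_contra! h0
    obtain ⟨rfl, rfl⟩ := h0
    exact hlast ⟨hp.mem_succ, hq.mem_succ⟩
  have chart : ∀ c : ℂ, ∃ a' b', M.φ c a = M.x ^ n * a' ∧ M.φ c b = M.x ^ n * b' ∧
      M.ρ a' = expand c p ∧ M.ρ b' = expand c q ∧
      M.ρ ((algebraMap ℂ A c + M.y) * (b' - a')) = expand c (X * (q - p)) := by
    intro c
    obtain ⟨a', ha'⟩ := M.φ_mem c _ han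
    obtain ⟨b', hb'⟩ := M.φ_mem c _ hbn
    refine ⟨a', b', ha', hb', hp.ρ_eq M ha', hq.ρ_eq M hb', ?_⟩
    rw [map_mul, map_sub, hq.ρ_eq M hb', hp.ρ_eq M ha', ρ_c_add_y, expand_mul, expand_sub]
  by_cases hD : q - p = 0
  · have hp0 : p ≠ 0 := by
      rintro rfl
      rcases hne with h | h
      · exact h rfl
      · exact h (by simpa using hD)
    obtain ⟨c, hc0, hc⟩ := exists_eval_ne p hp0
    obtain ⟨a', b', ha', hb', hρa, -, hρb'⟩ := chart c
    refine R.two_of_one c n a b a' b' hc0 ha' hb' (R.bb _ _ ?_ ?_ ?_)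
    · rw [ev, hρa, constantCoeff_expand]; exact hc
    · rw [ev, hρb', hD, mul_zero, expand_zero]; simp
    · intro k hk
      rw [hρb', hD, mul_zero, expand_zero, ev, hρa, constantCoeff_expand, map_zero]
      have hn0 : (k : ℂ) ≠ 0 := by exact_mod_cast (by lia : k ≠ 0)
      exact (mul_ne_zero hn0 hc).symm
  by_cases hall : ∀ c, c ≠ 0 → NN (resq (expand c p) (expand c (X * (q - p))))
  swap
  · push Not at hall
    obtain ⟨c, hc0, hc⟩ := hall
    obtain ⟨a', b', ha', hb', hρa, -, hρb'⟩ := chart c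
    obtain ⟨hc1, hc2⟩ := M.measure_drop hp hq hne ha' hb' hcof
    have hu : IsUnit (algebraMap ℂ A c + M.y) := by
      apply M.isUnit_of_ev
      rw [ρ_c_add_y, constantCoeff_expand]; simpa using hc0
    refine R.two_of_one c n a b a' b' hc0 ha' hb' (ih1 _ _ ⟨?_, ?_⟩ ?_)
    · rw [span_eq3 _ _ _ hu]; exact hc1
    · rw [hρa, hρb']; exact hc
    · rw [cd, span_eq3 _ _ _ hu]
      lia
  have hres : ∃ s : ℚ, 0 ≤ s ∧ resq (expand 0 p) (expand 0 (X * (q - p))) +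
      resq ((reflect n q : ℂ[X]) : PowerSeries ℂ) (PowerSeries.X *
        (((reflect n p : ℂ[X]) : PowerSeries ℂ) - ((reflect n q : ℂ[X]) : PowerSeries ℂ)))
        = -1 - s := by
    classical
    have hqX : (X * q).natDegree ≤ n + 1 := by
      refine natDegree_mul_le.trans ?_
      rw [natDegree_X]; have := hq.1; lia
    have hDX : X * q - X * p ≠ 0 := by
      rw [← mul_sub]; exact mul_ne_zero X_ne_zero hD
    obtain ⟨S, hS⟩ := residue_sum (n + 1) p (X * q) (hp.1.trans (by lia)) hqX hDX
    have hS' := hS (insert 0 S) (Finset.subset_insert _ _)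
    rw [← Finset.add_sum_erase _ _ (Finset.mem_insert_self 0 S), ← mul_sub] at hS'
    obtain ⟨s, hs, es⟩ := NN_sum ((insert 0 S).erase 0)
      (fun c => resq (expand c p) (expand c (X * (q - p))))
      (fun c hc => hall c (Finset.ne_of_mem_erase hc))
    rw [es, reflect_X_mul n q hq.1, reflect_succ n p hp.1, Polynomial.coe_mul, Polynomial.coe_X,
      ← mul_sub] at hS'
    exact ⟨s, hs, by linear_combination hS'⟩
  obtain ⟨s, hs, es⟩ := hres
  set κ := resq ((reflect n q : ℂ[X]) : PowerSeries ℂ) (PowerSeries.X *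
        (((reflect n p : ℂ[X]) : PowerSeries ℂ) - ((reflect n q : ℂ[X]) : PowerSeries ℂ))) with hκ
  by_cases hinf : ∃ r : ℚ, -1 / (α + 1) ≤ r ∧ κ = r
  -- The corner in the chart `c = 0` inherits the condition, with `α / (α + 1)`.
  · obtain ⟨r, hr, er⟩ := hinf
    obtain ⟨a', b', ha', hb', hρa, hρb', -⟩ := chart 0
    obtain ⟨hc1, hc2⟩ := M.measure_drop hp hq hne ha' hb' hcof
    have hsp : Ideal.span {a', b' - a'} = Ideal.span {a', b'} := by
      simpa only [one_mul] using span_eq1 a' b' 1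
    refine R.two_of_two n a b a' b' ha' hb' (ih2 _ _ ⟨?_, α / (α + 1), by positivity, ?_, ?_⟩ ?_)
    · rw [hsp]; exact hc1
    · refine ⟨-1 - s - r, ?_, ?_⟩
      · have : -1 / (α + 1) = -1 + α / (α + 1) := by field_simp; ring
        linarith
      · rw [ix, map_sub, hρa, hρb', ← expand_sub,
          ← (show expand 0 X = PowerSeries.X by simp [expand_X]), ← expand_mul]
        push_cast
        rw [er] at es
        linear_combination es
    · have e1 := M.ρσφ a
      have e2 := M.ρσφ b
      rw [ha', map_mul, map_mul, map_pow, map_pow, M.σx, M.ρy] at e1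
      rw [hb', map_mul, map_mul, map_pow, map_pow, M.σx, M.ρy] at e2
      rintro ⟨t, ht, et⟩
      apply hidx
      have hv : M.ρ (M.σ a') ≠ 0 := by
        intro h0
        rw [h0, mul_zero] at e1
        exact hρσa e1.symm
      rw [ix, map_sub, map_sub, resq_shift _ _ n hv, e1, e2] at et
      refine ⟨t + 1, ?_, ?_⟩
      · have : -1 / (α / (α + 1)) = -1 / α - 1 := by field_simp; ring
        linarith
      · rw [ix]; push_cast; linear_combination et
    · rw [cd, hsp]; lia
  -- The corner at infinity, seen in the same chart after exchanging the coordinates, inherits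
  -- the condition with `α + 1`.
  · apply R.two_swap
    obtain ⟨a', ha'⟩ := M.φ_mem 0 _ (M.σ_mem _ hbn)
    obtain ⟨b', hb'⟩ := M.φ_mem 0 _ (M.σ_mem _ han)
    have hne' : reflect n q ≠ 0 ∨ reflect n p ≠ 0 := by
      simpa [reflect_eq_zero_iff] using hne.symm
    have hcof2 : M.Cof (Ideal.span {b, a}) := by rw [Set.pair_comm]; exact hcof
    obtain ⟨hc1, hc2⟩ := M.measure_drop (hq.σ M) (hp.σ M) hne' ha' hb' (M.cof_σ hcof2)
    rw [M.cod_σ, Set.pair_comm b a] at hc2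
    have hsp : Ideal.span {a', b' - a'} = Ideal.span {a', b'} := by
      simpa only [one_mul] using span_eq1 a' b' 1
    have hρa := (hq.σ M).ρ_eq M ha'
    have hρb' := (hp.σ M).ρ_eq M hb'
    rw [expand_at_zero] at hρa hρb'
    have e1 := M.ρσφ (M.σ b)
    have e2 := M.ρσφ (M.σ a)
    rw [ha', M.σσ, map_mul, map_mul, map_pow, map_pow, M.σx, M.ρy] at e1
    rw [hb', M.σσ, map_mul, map_mul, map_pow, map_pow, M.σx, M.ρy] at e2
    have hv : M.ρ (M.σ a') ≠ 0 := by
      intro h0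
      rw [h0, mul_zero] at e1
      exact hρb e1.symm
    -- exchange once more so that the rational index comes first
    refine R.two_of_two n _ _ a' b' ha' hb' (R.two_swap _ _ (ih2 _ _
      ⟨?_, α + 1, by positivity, ?_, ?_⟩ ?_))
    · apply M.cof_σ; rw [Set.pair_comm, hsp]; exact hc1
    · refine ⟨q0 - 1, by linarith, ?_⟩
      rw [ix, map_sub, map_sub, resq_shift _ _ n hv, e1, e2]
      rw [ix] at eq0
      rw [eq0]; push_cast; ring
    · rw [M.σσ, M.σσ, ix, map_sub, hρa, hρb']
      exact hinf
    · rw [cd, M.cod_σ, Set.pair_comm, hsp]; lia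

/-- Induction on the codimension `d`. Corners are treated first, since `step1` may pass to a corner of
the same codimension, whereas `step2` always lowers it. -/
theorem main_induction (R : M.Rules S0 S1 S2) (d : ℕ) :
    (∀ a b, M.St1 a b → cd a b = d → S1 a b) ∧ (∀ a b, M.St2 a b → cd a b = d → S2 a b) := by
  induction d using Nat.strong_induction_on with
  | _ d ih =>
    have h2 : ∀ a b, M.St2 a b → cd a b = d → S2 a b := by
      rintro a b h rfl
      exact step2 R h (fun a' b' h' hlt => (ih _ hlt).1 a' b' h' rfl)
        (fun a' b' h' hlt => (ih _ hlt).2 a' b' h' rfl)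
    refine ⟨?_, h2⟩
    have hcorner : ∀ a b, M.St2 a b → cd a b ≤ d → S2 a b := by
      intro a b h hle
      rcases hle.lt_or_eq with hlt | he
      · exact (ih _ hlt).2 a b h rfl
      · exact h2 a b h he
    rintro a b h rfl
    exact step1 R h (fun a' b' h' hlt => (ih _ hlt).1 a' b' h' rfl) hcorner

/-- A field whose components generate a cofinite ideal has an invariant curve. After one blow-up the
indices along the exceptional divisor add up to `-1`, so they are not all nonnegative rationals, and
`main_induction` applies at one of the points. -/
theorem separatrix_of_rules (R : M.Rules S0 S1 S2) {a b : A}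
    (hcof : M.Cof (Ideal.span {a, b})) : S0 a b := by
  have one : ∀ a b, M.St1 a b → S1 a b := fun a b h => (main_induction R _).1 a b h rfl
  obtain ⟨N, hN⟩ := id hcof
  obtain ⟨n, ⟨han, hbn⟩, hlast⟩ := exists_last (fun n => a ∈ M.m ^ n ∧ b ∈ M.m ^ n)
    ⟨by simp, by simp⟩ (N := N + 1) (M.not_both hN)
  obtain ⟨p, hp⟩ := M.exists_lead n han
  obtain ⟨q, hq⟩ := M.exists_lead n hbn
  have hne : p ≠ 0 ∨ q ≠ 0 := by
    by_contra! h0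
    obtain ⟨rfl, rfl⟩ := h0
    exact hlast ⟨hp.mem_succ, hq.mem_succ⟩
  have chart : ∀ c : ℂ, ∃ a' b', M.φ c a = M.x ^ n * a' ∧ M.φ c b = M.x ^ n * b' ∧
      M.ρ a' = expand c p ∧
      M.ρ (b' - (algebraMap ℂ A c + M.y) * a') = expand c (q - X * p) := by
    intro c
    obtain ⟨a', ha'⟩ := M.φ_mem c _ han
    obtain ⟨b', hb'⟩ := M.φ_mem c _ hbn
    refine ⟨a', b', ha', hb', hp.ρ_eq M ha', ?_⟩
    rw [map_sub, map_mul, hq.ρ_eq M hb', hp.ρ_eq M ha', ρ_c_add_y, expand_sub, expand_mul]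
  by_cases hD : q - X * p = 0
  · have hp0 : p ≠ 0 := by
      rintro rfl
      rcases hne with h | h
      · exact h rfl
      · exact h (by simpa using hD)
    obtain ⟨c, -, hc⟩ := exists_eval_ne p hp0
    obtain ⟨a', b', ha', hb', hρa, hρb'⟩ := chart c
    refine R.zero_of_one c n a b a' b' ha' hb' (R.bb _ _ ?_ ?_ ?_)
    · rw [ev, hρa, constantCoeff_expand]; exact hc
    · rw [ev, hρb', hD, expand_zero]; simp
    · intro k hk
      rw [hρb', hD, expand_zero, ev, hρa, constantCoeff_expand, map_zero]
      have hn0 : (k : ℂ) ≠ 0 := by exact_mod_cast (by lia : k ≠ 0)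
      exact (mul_ne_zero hn0 hc).symm
  by_cases hall : ∀ c, NN (resq (expand c p) (expand c (q - X * p)))
  swap
  · push Not at hall
    obtain ⟨c, hc⟩ := hall
    obtain ⟨a', b', ha', hb', hρa, hρb'⟩ := chart c
    obtain ⟨hc1, hc2⟩ := M.measure_drop hp hq hne ha' hb' hcof
    refine R.zero_of_one c n a b a' b' ha' hb' (one _ _ ⟨?_, ?_⟩)
    · rw [span_eq1]; exact hc1
    · rw [hρa, hρb']; exact hc
  -- otherwise the point at infinity has index at most `-1`
  apply R.zero_swap
  obtain ⟨a', ha'⟩ := M.φ_mem 0 _ (M.σ_mem _ hbn)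
  obtain ⟨b', hb'⟩ := M.φ_mem 0 _ (M.σ_mem _ han)
  have hne' : reflect n q ≠ 0 ∨ reflect n p ≠ 0 := by
    simpa [reflect_eq_zero_iff] using hne.symm
  have hcof2 : M.Cof (Ideal.span {b, a}) := by rw [Set.pair_comm]; exact hcof
  obtain ⟨hc1, hc2⟩ := M.measure_drop (hq.σ M) (hp.σ M) hne' ha' hb' (M.cof_σ hcof2)
  refine R.zero_of_one 0 n _ _ a' b' ha' hb' (one _ _ ⟨?_, ?_⟩)
  · rw [span_eq1]; exact hc1
  · rw [map_sub, map_mul, (hq.σ M).ρ_eq M ha', (hp.σ M).ρ_eq M hb', ρ_c_add_y, expand_X,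
      expand_at_zero, expand_at_zero, map_zero, zero_add]
    obtain ⟨S, hS⟩ := residue_sum n p q hp.1 hq.1 hD
    have hS' := hS S subset_rfl
    obtain ⟨s, hs, es⟩ := NN_sum S (fun c => resq (expand c p) (expand c (q - X * p)))
      (fun c _ => hall c)
    rw [es] at hS'
    rintro ⟨r, hr, er⟩
    rw [er] at hS'
    have : s + r = -1 := by exact_mod_cast hS'
    linarith

end Model
end
end CamachoSad

namespace CamachoSad
open Filter Topology

noncomputable section

/-! ### Double power series -/

/-- The coefficients `a i j` have at most geometric growth, i.e. `∑ a i j x^i y^j` converges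
near the origin. -/
def Conv (a : ℕ → ℕ → ℂ) : Prop := ∃ C R : ℝ, 0 < C ∧ 0 < R ∧ ∀ i j, ‖a i j‖ ≤ C * R ^ (i + j)

/-- The monomial `a i j x^i y^j` evaluated at `p`. -/
def term (a : ℕ → ℕ → ℂ) (p : ℂ × ℂ) (ij : ℕ × ℕ) : ℂ := a ij.1 ij.2 * (p.1 ^ ij.1 * p.2 ^ ij.2)

/-- `F` is the sum of the convergent double power series with coefficients `a`. -/
def HasExp (a : ℕ → ℕ → ℂ) (F : ℂ × ℂ → ℂ) : Prop :=
  Conv a ∧ ∀ᶠ p in 𝓝 (0 : ℂ × ℂ), HasSum (term a p) (F p)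

theorem summable_geom {u v : ℝ} (hu0 : 0 ≤ u) (hu : u < 1) (hv0 : 0 ≤ v) (hv : v < 1) (C : ℝ) :
    Summable fun ij : ℕ × ℕ => C * (u ^ ij.1 * v ^ ij.2) :=
  ((summable_geometric_of_lt_one hu0 hu).mul_of_nonneg (summable_geometric_of_lt_one hv0 hv)
    (fun _ => by positivity) (fun _ => by positivity)).mul_left C

theorem norm_term_le {a : ℕ → ℕ → ℂ} {C R : ℝ} (h : ∀ i j, ‖a i j‖ ≤ C * R ^ (i + j))
    (p : ℂ × ℂ) (ij : ℕ × ℕ) :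
    ‖term a p ij‖ ≤ C * ((R * ‖p.1‖) ^ ij.1 * (R * ‖p.2‖) ^ ij.2) := by
  rw [term, norm_mul, norm_mul, norm_pow, norm_pow]
  calc _ ≤ C * R ^ (ij.1 + ij.2) * (‖p.1‖ ^ ij.1 * ‖p.2‖ ^ ij.2) := by
        gcongr; exact h _ _
    _ = _ := by rw [mul_pow, mul_pow, pow_add]; ring

theorem summable_term {a : ℕ → ℕ → ℂ} {C R : ℝ} (hR : 0 < R)
    (h : ∀ i j, ‖a i j‖ ≤ C * R ^ (i + j))
    {p : ℂ × ℂ} (h1 : R * ‖p.1‖ < 1) (h2 : R * ‖p.2‖ < 1) : Summable (fun ij => ‖term a p ij‖) :=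
  Summable.of_nonneg_of_le (fun _ => norm_nonneg _) (norm_term_le h p)
    (summable_geom (by positivity) h1 (by positivity) h2 C)

theorem eventually_small (R : ℝ) :
    ∀ᶠ p : ℂ × ℂ in 𝓝 0, R * ‖p.1‖ < 1 ∧ R * ‖p.2‖ < 1 := by
  have h1 : Continuous fun p : ℂ × ℂ => R * ‖p.1‖ := by fun_prop
  have h2 : Continuous fun p : ℂ × ℂ => R * ‖p.2‖ := by fun_prop
  exact (h1.continuousAt.eventually_lt_const (by simp)).and
    (h2.continuousAt.eventually_lt_const (by simp))

theorem Conv.summable {a : ℕ → ℕ → ℂ} (h : Conv a) :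
    ∀ᶠ p in 𝓝 (0 : ℂ × ℂ), Summable (fun ij => ‖term a p ij‖) := by
  obtain ⟨C, R, -, hR, h⟩ := h
  filter_upwards [eventually_small R] with p hp
  exact summable_term hR h hp.1 hp.2

theorem Conv.hasExp {a : ℕ → ℕ → ℂ} (h : Conv a) : HasExp a (fun p => ∑' ij, term a p ij) :=
  ⟨h, h.summable.mono fun _ hp => hp.of_norm.hasSum⟩

theorem hasSum_antidiagonal {f : ℕ × ℕ → ℂ} {s : ℂ} (h : HasSum f s) :
    HasSum (fun n => ∑ ij ∈ Finset.HasAntidiagonal.antidiagonal n, f ij) s := by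
  have h' := (Finset.HasAntidiagonal.sigmaAntidiagonalEquivProd (A := ℕ)).hasSum_iff.2 h
  have := h'.sigma (g := fun n => ∑ ij ∈ Finset.HasAntidiagonal.antidiagonal n, f ij) (fun n => by
    have := hasSum_fintype (fun c : Finset.HasAntidiagonal.antidiagonal n => f c)
    rw [Finset.sum_coe_sort (Finset.HasAntidiagonal.antidiagonal n) f] at this
    exact this)
  exact this

/-- The multilinear form `(v₁, …, vₙ) ↦ ∏_{k < i} (v_k)₁ ∏_{k ≥ i} (v_k)₂`. -/
def monForm (n i : ℕ) : ContinuousMultilinearMap ℂ (fun _ : Fin n => ℂ × ℂ) ℂ :=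
  (ContinuousMultilinearMap.mkPiAlgebra ℂ (Fin n) ℂ).compContinuousLinearMap
    (fun k => if (k : ℕ) < i then ContinuousLinearMap.fst ℂ ℂ ℂ else ContinuousLinearMap.snd ℂ ℂ ℂ)

theorem monForm_diag (i j : ℕ) (v : ℂ × ℂ) :
    monForm (i + j) i (fun _ => v) = v.1 ^ i * v.2 ^ j := by
  rw [monForm, ContinuousMultilinearMap.compContinuousLinearMap_apply,
    ContinuousMultilinearMap.mkPiAlgebra_apply, Fin.prod_univ_add]
  simp

theorem norm_monForm_le (n i : ℕ) : ‖monForm n i‖ ≤ 1 := by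
  refine ContinuousMultilinearMap.opNorm_le_bound zero_le_one fun v => ?_
  rw [monForm, ContinuousMultilinearMap.compContinuousLinearMap_apply,
    ContinuousMultilinearMap.mkPiAlgebra_apply, norm_prod, one_mul]
  refine Finset.prod_le_prod (fun _ _ => norm_nonneg _) fun k _ => ?_
  split_ifs
  · exact norm_fst_le _
  · exact norm_snd_le _

/-- The formal multilinear series attached to a double power series. -/
def toSeries (a : ℕ → ℕ → ℂ) : FormalMultilinearSeries ℂ (ℂ × ℂ) ℂ :=
  fun n => ∑ ij ∈ Finset.HasAntidiagonal.antidiagonal n, a ij.1 ij.2 • monForm n ij.1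

theorem toSeries_apply (a : ℕ → ℕ → ℂ) (n : ℕ) (v : ℂ × ℂ) :
    toSeries a n (fun _ => v) = ∑ ij ∈ Finset.HasAntidiagonal.antidiagonal n, term a v ij := by
  rw [toSeries, sum_apply]
  refine Finset.sum_congr rfl fun ij hij => ?_
  rw [Finset.HasAntidiagonal.mem_antidiagonal] at hij
  subst hij
  rw [smul_apply, monForm_diag, smul_eq_mul, term]

theorem norm_toSeries_le {a : ℕ → ℕ → ℂ} {C R : ℝ} (hC : 0 < C) (hR : 0 < R)
    (h : ∀ i j, ‖a i j‖ ≤ C * R ^ (i + j)) (n : ℕ) : ‖toSeries a n‖ ≤ C * (2 * R) ^ n := by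
  refine (norm_sum_le _ _).trans ?_
  have : ∀ ij ∈ Finset.HasAntidiagonal.antidiagonal n, ‖a ij.1 ij.2 • monForm n ij.1‖ ≤ C * R ^ n := by
    intro ij hij
    rw [norm_smul, ← Finset.HasAntidiagonal.mem_antidiagonal.1 hij]
    calc _ ≤ (C * R ^ (ij.1 + ij.2)) * 1 := by
          gcongr
          · exact h _ _
          · exact norm_monForm_le _ _
      _ = _ := mul_one _
  refine (Finset.sum_le_card_nsmul _ _ _ this).trans ?_
  rw [Finset.Nat.card_antidiagonal, nsmul_eq_mul, mul_pow]
  have h2 : ((n + 1 : ℕ) : ℝ) ≤ 2 ^ n := by exact_mod_cast Nat.lt_two_pow_self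
  calc _ ≤ 2 ^ n * (C * R ^ n) := by gcongr
    _ = _ := by ring

theorem HasExp.analyticAt {a : ℕ → ℕ → ℂ} {F : ℂ × ℂ → ℂ} (h : HasExp a F) :
    AnalyticAt ℂ F 0 := by
  obtain ⟨⟨C, R, hC, hR, hb⟩, hs⟩ := h
  have hrad : 0 < (toSeries a).radius := by
    have := (toSeries a).le_radius_of_bound C (r := Real.toNNReal (1 / (2 * R))) (fun n => by
      rw [Real.coe_toNNReal _ (by positivity)]
      calc _ ≤ C * (2 * R) ^ n * (1 / (2 * R)) ^ n := by
            gcongr; exact norm_toSeries_le hC hR hb n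
        _ = C := by rw [mul_assoc, ← mul_pow, mul_one_div_cancel (by positivity), one_pow, mul_one])
    refine lt_of_lt_of_le ?_ this
    simpa using hR
  have hF := (toSeries a).hasFPowerSeriesOnBall hrad
  refine hF.analyticAt.congr ?_
  filter_upwards [hs] with p hp
  have h1 := hasSum_antidiagonal hp
  simp_rw [← toSeries_apply] at h1
  exact h1.tsum_eq

/-- An analytic function of two variables is the sum of a convergent double power series. -/
theorem exists_hasExp {F : ℂ × ℂ → ℂ} (hF : AnalyticAt ℂ F 0) : ∃ a, HasExp a F := by
  classical
  obtain ⟨p, hp⟩ := hF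
  let e1 : ℂ × ℂ := (1, 0)
  let e2 : ℂ × ℂ := (0, 1)
  let b : ℕ → ℕ → ℂ := fun n i => ∑ s ∈ Finset.powersetCard i (Finset.univ : Finset (Fin n)),
    p n (s.piecewise (fun _ => e1) (fun _ => e2))
  let a : ℕ → ℕ → ℂ := fun i j => b (i + j) i
  have hdiag : ∀ n (v : ℂ × ℂ), p n (fun _ => v) = ∑ ij ∈ Finset.HasAntidiagonal.antidiagonal n, term a v ij := by
    intro n v
    have hv : (fun _ : Fin n => v) = (fun _ => v.1 • e1) + (fun _ => v.2 • e2) := by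
      funext k; simp [e1, e2]
    have hs : ∀ s : Finset (Fin n), p n (s.piecewise (fun _ => v.1 • e1) (fun _ => v.2 • e2)) =
        v.1 ^ s.card * v.2 ^ (n - s.card) * p n (s.piecewise (fun _ => e1) (fun _ => e2)) := by
      intro s
      have : s.piecewise (fun _ => v.1 • e1) (fun _ => v.2 • e2) = fun k =>
          (s.piecewise (fun _ => v.1) (fun _ => v.2) k) •
          (s.piecewise (fun _ => e1) (fun _ => e2) k) := by
        funext k
        by_cases hk : k ∈ s <;> simp [hk]
      rw [this, ContinuousMultilinearMap.map_smul_univ, Finset.prod_piecewise]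
      simp [Finset.card_sdiff, smul_eq_mul]
    rw [hv, ContinuousMultilinearMap.map_add_univ, Finset.Nat.sum_antidiagonal_eq_sum_range_succ_mk,
      ← Finset.powerset_univ, Finset.sum_powerset]
    simp only [Finset.card_univ, Fintype.card_fin]
    refine Finset.sum_congr rfl fun i hi => ?_
    have hin : i + (n - i) = n := by have := Finset.mem_range.1 hi; lia
    simp only [term, a]
    rw [hin, Finset.sum_mul]
    refine Finset.sum_congr rfl fun s hsi => ?_
    rw [hs, (Finset.mem_powersetCard.1 hsi).2]
    ring
  obtain ⟨r0, hr0, hr⟩ := ENNReal.lt_iff_exists_nnreal_btwn.1 hp.radius_pos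
  obtain ⟨C, hC, hCb⟩ := p.norm_mul_pow_le_of_lt_radius hr
  have hr0' : (0 : ℝ) < r0 := by exact_mod_cast hr0
  have hconv : Conv a := by
    refine ⟨C, 2 / r0, hC, by positivity, fun i j => ?_⟩
    refine (norm_sum_le _ _).trans ?_
    have : ∀ s ∈ Finset.powersetCard i (Finset.univ : Finset (Fin (i + j))),
        ‖p (i + j) (s.piecewise (fun _ => e1) (fun _ => e2))‖ ≤ C / r0 ^ (i + j) := by
      intro s _
      refine ((p (i + j)).le_opNorm _).trans ?_
      have h1 : ∏ k, ‖s.piecewise (fun _ => e1) (fun _ => e2) k‖ ≤ 1 := by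
        refine Finset.prod_le_one (fun _ _ => norm_nonneg _) fun k _ => ?_
        by_cases hk : k ∈ s <;> simp [hk, e1, e2, Prod.norm_def]
      calc _ ≤ ‖p (i + j)‖ * 1 := by gcongr
        _ ≤ _ := by rw [mul_one, le_div_iff₀ (by positivity)]; exact hCb _
    refine (Finset.sum_le_card_nsmul _ _ _ this).trans ?_
    rw [Finset.card_powersetCard, nsmul_eq_mul, Finset.card_univ, Fintype.card_fin, div_pow]
    have h2 : (((i + j).choose i : ℕ) : ℝ) ≤ 2 ^ (i + j) := by
      exact_mod_cast Nat.choose_le_two_pow _ _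
    calc _ ≤ 2 ^ (i + j) * (C / r0 ^ (i + j)) := by gcongr
      _ = _ := by ring
  refine ⟨a, hconv, ?_⟩
  filter_upwards [hconv.summable, hp.eventually_hasSum] with v hv hpv
  have h1 := hasSum_antidiagonal hv.of_norm.hasSum
  simp_rw [← hdiag] at h1
  rw [zero_add] at hpv
  rw [hpv.unique h1]
  exact hv.of_norm.hasSum

end

end CamachoSad

namespace CamachoSad
open Filter Topology

noncomputable section

/-! ### Taylor series in one variable -/

/-- The Taylor series at `0`. -/
def ps (g : ℂ → ℂ) : PowerSeries ℂ := PowerSeries.mk fun n => iteratedDeriv n g 0 / n.factorial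

theorem ps_hasSum {g : ℂ → ℂ} (hg : AnalyticAt ℂ g 0) :
    ∀ᶠ y in 𝓝 (0 : ℂ), HasSum (fun n => PowerSeries.coeff n (ps g) * y ^ n) (g y) := by
  have := hasFPowerSeriesAt_iff.1 hg.hasFPowerSeriesAt
  filter_upwards [this] with y hy
  simpa [ps, mul_comm, FormalMultilinearSeries.coeff_ofScalars] using hy

theorem ps_unique {g : ℂ → ℂ} {c : ℕ → ℂ}
    (h : ∀ᶠ y in 𝓝 (0 : ℂ), HasSum (fun n => c n * y ^ n) (g y)) : ps g = PowerSeries.mk c := by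
  have h1 : HasFPowerSeriesAt g (FormalMultilinearSeries.ofScalars ℂ c) 0 := by
    rw [hasFPowerSeriesAt_iff]
    filter_upwards [h] with y hy
    simpa [mul_comm, FormalMultilinearSeries.coeff_ofScalars] using hy
  have h2 := h1.eq_formalMultilinearSeries h1.analyticAt.hasFPowerSeriesAt
  have h3 := FormalMultilinearSeries.ofScalars_series_injective ℂ ℂ h2
  rw [h3]; rfl

theorem ps_congr {f g : ℂ → ℂ} (h : f =ᶠ[𝓝 0] g) : ps f = ps g := by
  ext n
  simp only [ps, PowerSeries.coeff_mk]
  rw [h.iteratedDeriv_eq]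

theorem hasSum_coeff_mul {f g : PowerSeries ℂ} {y u v : ℂ}
    (h1 : HasSum (fun n => PowerSeries.coeff n f * y ^ n) u)
    (h2 : HasSum (fun n => PowerSeries.coeff n g * y ^ n) v) :
    HasSum (fun n => PowerSeries.coeff n (f * g) * y ^ n) (u * v) := by
  have s1 := h1.summable.norm
  have s2 := h2.summable.norm
  have e := tsum_mul_tsum_eq_tsum_sum_antidiagonal_of_summable_norm s1 s2
  have s := (summable_norm_sum_mul_antidiagonal_of_summable_norm s1 s2).of_norm.hasSum
  rw [← e, h1.tsum_eq, h2.tsum_eq] at s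
  refine s.congr_fun ?_
  intro n
  rw [PowerSeries.coeff_mul, Finset.sum_mul]
  refine Finset.sum_congr rfl fun ij hij => ?_
  rw [← Finset.HasAntidiagonal.mem_antidiagonal.1 hij, pow_add]; ring

theorem ps_mul {f g : ℂ → ℂ} (hf : AnalyticAt ℂ f 0) (hg : AnalyticAt ℂ g 0) :
    ps (f * g) = ps f * ps g := by
  have : ps f * ps g = PowerSeries.mk fun n => PowerSeries.coeff n (ps f * ps g) := by ext; simp
  rw [this]
  apply ps_unique
  filter_upwards [ps_hasSum hf, ps_hasSum hg] with y h1 h2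
  exact hasSum_coeff_mul h1 h2

theorem ps_add {f g : ℂ → ℂ} (hf : AnalyticAt ℂ f 0) (hg : AnalyticAt ℂ g 0) :
    ps (f + g) = ps f + ps g := by
  have : ps f + ps g = PowerSeries.mk fun n => PowerSeries.coeff n (ps f + ps g) := by ext; simp
  rw [this]
  apply ps_unique
  filter_upwards [ps_hasSum hf, ps_hasSum hg] with y h1 h2
  simpa [add_mul] using h1.add h2

theorem ps_const (c : ℂ) : ps (fun _ => c) = PowerSeries.C c := by
  have : PowerSeries.C c = PowerSeries.mk fun n => if n = 0 then c else 0 := by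
    ext n; simp [PowerSeries.coeff_C]
  rw [this]
  refine ps_unique (Eventually.of_forall fun y => ?_)
  have := hasSum_single (f := fun n => (if n = 0 then c else 0) * y ^ n) 0
    (fun n hn => by simp [hn])
  simpa using this

theorem ps_id : ps (fun y => y) = PowerSeries.X := by
  have : (PowerSeries.X : PowerSeries ℂ) = PowerSeries.mk fun n => if n = 1 then 1 else 0 := by
    ext n; simp [PowerSeries.coeff_X]
  rw [this]
  refine ps_unique (Eventually.of_forall fun y => ?_)
  have := hasSum_single (f := fun n => (if n = 1 then (1 : ℂ) else 0) * y ^ n) 1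
    (fun n hn => by simp [hn])
  simpa using this

theorem constantCoeff_ps (g : ℂ → ℂ) : PowerSeries.constantCoeff (ps g) = g 0 := by
  rw [← PowerSeries.coeff_zero_eq_constantCoeff_apply, ps, PowerSeries.coeff_mk]; simp

theorem coeff_one_ps (g : ℂ → ℂ) : PowerSeries.coeff 1 (ps g) = deriv g 0 := by
  rw [ps, PowerSeries.coeff_mk]; simp

theorem eventually_zero_of_ps {g : ℂ → ℂ} (hg : AnalyticAt ℂ g 0) (h : ps g = 0) :
    ∀ᶠ y in 𝓝 (0 : ℂ), g y = 0 := by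
  filter_upwards [ps_hasSum hg] with y hy
  rw [h] at hy
  simpa using hy.unique (by simp)

/-! ### Division by a coordinate -/

theorem HasExp.restrict {a : ℕ → ℕ → ℂ} {F : ℂ × ℂ → ℂ} (h : HasExp a F) :
    ∀ᶠ y in 𝓝 (0 : ℂ), HasSum (fun j => a 0 j * y ^ j) (F (0, y)) := by
  have hc : Tendsto (fun y : ℂ => ((0 : ℂ), y)) (𝓝 0) (𝓝 0) := by
    have : Continuous fun y : ℂ => ((0 : ℂ), y) := by fun_prop
    exact this.tendsto 0
  filter_upwards [hc.eventually h.2] with y hy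
  have hinj : Function.Injective fun j : ℕ => ((0 : ℕ), j) := fun _ _ h => by simpa using h
  have := (hinj.hasSum_iff (f := term a (0, y)) (a := F (0, y)) (fun ij hij => by
    rcases ij with ⟨_ | i, j⟩
    · exact absurd ⟨j, rfl⟩ hij
    · simp [term])).2 hy
  simpa [term, Function.comp_def] using this

theorem HasExp.ps_eq {a : ℕ → ℕ → ℂ} {F : ℂ × ℂ → ℂ} (h : HasExp a F) :
    ps (fun y => F (0, y)) = PowerSeries.mk (a 0) := ps_unique h.restrict

theorem Conv.shift {a : ℕ → ℕ → ℂ} (h : Conv a) : Conv fun i j => a (i + 1) j := by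
  obtain ⟨C, R, hC, hR, h⟩ := h
  refine ⟨C * R, R, by positivity, hR, fun i j => (h _ _).trans (le_of_eq ?_)⟩
  ring

/-- A germ vanishing on the line `x = 0` is divisible by `x`. -/
theorem exists_div_x {F : ℂ × ℂ → ℂ} (hF : AnalyticAt ℂ F 0)
    (h0 : ps (fun y => F (0, y)) = 0) :
    ∃ G, AnalyticAt ℂ G 0 ∧ F =ᶠ[𝓝 0] fun p => p.1 * G p := by
  obtain ⟨a, ha⟩ := exists_hasExp hF
  have ha0 : ∀ j, a 0 j = 0 := by
    intro j
    have := ha.ps_eq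
    rw [h0] at this
    simpa using (congrArg (PowerSeries.coeff j) this).symm
  have hG := ha.1.shift.hasExp
  refine ⟨_, hG.analyticAt, ?_⟩
  filter_upwards [ha.2, hG.2] with p h1 h2
  have h3 := h2.mul_left p.1
  have hinj : Function.Injective fun ij : ℕ × ℕ => (ij.1 + 1, ij.2) := fun _ _ h => by
    simpa [Prod.ext_iff] using h
  have h4 := (hinj.hasSum_iff (f := term a p) (a := F p) (fun ij hij => by
    rcases ij with ⟨_ | i, j⟩
    · simp [term, ha0]
    · exact absurd ⟨(i, j), rfl⟩ hij)).2 h1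
  refine h4.unique ?_
  refine h3.congr_fun fun ij => ?_
  simp only [Function.comp, term, pow_succ]; ring

/-- The complement of the axis `x = 0` is dense. -/
theorem neBot_x (p : ℂ × ℂ) : (𝓝[{q : ℂ × ℂ | q.1 ≠ 0}] p).NeBot := by
  rw [← mem_closure_iff_nhdsWithin_neBot]
  have h : {q : ℂ × ℂ | q.1 ≠ 0} = ({0}ᶜ : Set ℂ) ×ˢ (Set.univ : Set ℂ) := by ext; simp
  rw [h]
  exact (dense_compl_singleton (0 : ℂ)).prod dense_univ p

/-- Two germs agreeing off the axis `x = 0` agree. -/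
theorem eq_of_eq_off_x {F G : ℂ × ℂ → ℂ} (hF : AnalyticAt ℂ F 0) (hG : AnalyticAt ℂ G 0)
    (h : ∀ᶠ p in 𝓝 (0 : ℂ × ℂ), p.1 ≠ 0 → F p = G p) : F =ᶠ[𝓝 0] G := by
  filter_upwards [hF.eventually_analyticAt, hG.eventually_analyticAt,
    eventually_eventually_nhds.2 h] with p h1 h2 h3
  have := neBot_x p
  have h4 : F =ᶠ[𝓝[{q : ℂ × ℂ | q.1 ≠ 0}] p] G := by
    rw [EventuallyEq, eventually_nhdsWithin_iff]
    exact h3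
  exact tendsto_nhds_unique (h1.continuousAt.tendsto.mono_left nhdsWithin_le_nhds)
    ((h2.continuousAt.tendsto.mono_left nhdsWithin_le_nhds).congr' h4.symm)

end

end CamachoSad

namespace CamachoSad
open Filter Topology

noncomputable section

/-! ### The ring of germs -/

/-- Functions on `ℂ²` that are analytic at the origin. -/
def An : Subalgebra ℂ (ℂ × ℂ → ℂ) where
  carrier := {f | AnalyticAt ℂ f 0}
  mul_mem' := fun hf hg => AnalyticAt.mul hf hg
  add_mem' := fun hf hg => AnalyticAt.add hf hg
  algebraMap_mem' := fun _ => analyticAt_const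

/-- Functions vanishing near the origin. -/
def nullIdeal : Ideal An where
  carrier := {f | (f : ℂ × ℂ → ℂ) =ᶠ[𝓝 0] 0}
  zero_mem' := EventuallyEq.rfl
  add_mem' := fun {f g} hf hg => by
    have := EventuallyEq.add hf hg
    rw [add_zero] at this
    exact this
  smul_mem' := fun c f hf => by
    have := (EventuallyEq.refl (𝓝 0) (c : ℂ × ℂ → ℂ)).mul hf
    rw [mul_zero] at this
    exact this

/-- Germs of holomorphic functions at `0 ∈ ℂ²`. -/
def Germ2 := An ⧸ nullIdeal

instance : CommRing Germ2 := inferInstanceAs (CommRing (An ⧸ nullIdeal))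

instance : Algebra ℂ Germ2 := inferInstanceAs (Algebra ℂ (An ⧸ nullIdeal))

/-- The germ of an analytic function. -/
def germ (F : ℂ × ℂ → ℂ) (hF : AnalyticAt ℂ F 0) : Germ2 := Ideal.Quotient.mk nullIdeal ⟨F, hF⟩

theorem germ_eq_iff {F G : ℂ × ℂ → ℂ} {hF : AnalyticAt ℂ F 0} {hG : AnalyticAt ℂ G 0} :
    germ F hF = germ G hG ↔ F =ᶠ[𝓝 0] G := by
  refine Ideal.Quotient.eq.trans ?_
  change (∀ᶠ p in 𝓝 0, F p - G p = 0) ↔ ∀ᶠ p in 𝓝 0, F p = G p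
  simp only [sub_eq_zero]

/-- A representative of a germ. -/
def rep (a : Germ2) : ℂ × ℂ → ℂ := (Quotient.out a : An)

theorem rep_an (a : Germ2) : AnalyticAt ℂ (rep a) 0 := (Quotient.out a : An).2

theorem germ_rep (a : Germ2) : germ (rep a) (rep_an a) = a := Quotient.out_eq a

theorem rep_germ {F : ℂ × ℂ → ℂ} (hF : AnalyticAt ℂ F 0) : rep (germ F hF) =ᶠ[𝓝 0] F :=
  germ_eq_iff.1 (germ_rep (germ F hF))

theorem germ_ext {a b : Germ2} (h : rep a =ᶠ[𝓝 0] rep b) : a = b := by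
  rw [← germ_rep a, ← germ_rep b]
  exact germ_eq_iff.2 h

theorem rep_mul (a b : Germ2) : rep (a * b) =ᶠ[𝓝 0] rep a * rep b := by
  have : a * b = germ _ ((rep_an a).mul (rep_an b)) := by
    conv_lhs => rw [← germ_rep a, ← germ_rep b]
    rfl
  rw [this]
  exact rep_germ _

theorem rep_add (a b : Germ2) : rep (a + b) =ᶠ[𝓝 0] rep a + rep b := by
  have : a + b = germ _ ((rep_an a).add (rep_an b)) := by
    conv_lhs => rw [← germ_rep a, ← germ_rep b]
    rfl
  rw [this]
  exact rep_germ _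

theorem rep_sub (a b : Germ2) : rep (a - b) =ᶠ[𝓝 0] rep a - rep b := by
  have : a - b = germ _ ((rep_an a).sub (rep_an b)) := by
    conv_lhs => rw [← germ_rep a, ← germ_rep b]
    rfl
  rw [this]
  exact rep_germ _

theorem rep_pow (a : Germ2) (n : ℕ) : rep (a ^ n) =ᶠ[𝓝 0] rep a ^ n := by
  have : a ^ n = germ _ ((rep_an a).pow n) := by
    conv_lhs => rw [← germ_rep a]
    rfl
  rw [this]
  exact rep_germ _

theorem rep_const (c : ℂ) : rep (algebraMap ℂ Germ2 c) =ᶠ[𝓝 0] fun _ => c := by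
  have : algebraMap ℂ Germ2 c = germ (fun _ => c) analyticAt_const := rfl
  rw [this]
  exact rep_germ _

theorem rep_zero : rep 0 =ᶠ[𝓝 0] 0 := by
  have : (0 : Germ2) = germ (fun _ => 0) analyticAt_const := rfl
  rw [this]
  exact rep_germ _

/-- Pullback of functions under an analytic map fixing the origin. -/
def pullAn (ψ : ℂ × ℂ → ℂ × ℂ) (hψ : AnalyticAt ℂ ψ 0) (h0 : ψ 0 = 0) : An →ₐ[ℂ] An where
  toFun f := ⟨f.1 ∘ ψ, AnalyticAt.comp (by rw [h0]; exact f.2) hψ⟩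
  map_one' := rfl
  map_mul' _ _ := rfl
  map_zero' := rfl
  map_add' _ _ := rfl
  commutes' _ := rfl

theorem tendsto_of_an {ψ : ℂ × ℂ → ℂ × ℂ} (hψ : AnalyticAt ℂ ψ 0) (h0 : ψ 0 = 0) :
    Tendsto ψ (𝓝 0) (𝓝 0) := by
  have := hψ.continuousAt.tendsto
  rwa [h0] at this

/-- Pullback of germs under an analytic map fixing the origin. -/
def pull (ψ : ℂ × ℂ → ℂ × ℂ) (hψ : AnalyticAt ℂ ψ 0) (h0 : ψ 0 = 0) : Germ2 →ₐ[ℂ] Germ2 :=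
  Ideal.quotientMapₐ nullIdeal (pullAn ψ hψ h0) (fun _ hf =>
    (tendsto_of_an hψ h0).eventually hf)

theorem rep_pull {ψ : ℂ × ℂ → ℂ × ℂ} (hψ : AnalyticAt ℂ ψ 0) (h0 : ψ 0 = 0) (a : Germ2) :
    rep (pull ψ hψ h0 a) =ᶠ[𝓝 0] rep a ∘ ψ := by
  have : pull ψ hψ h0 a = germ (rep a ∘ ψ) (AnalyticAt.comp (by rw [h0]; exact rep_an a) hψ) := by
    conv_lhs => rw [← germ_rep a]
    rfl
  rw [this]
  exact rep_germ _

theorem an_restrict {F : ℂ × ℂ → ℂ} (hF : AnalyticAt ℂ F 0) :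
    AnalyticAt ℂ (fun y => F (0, y)) 0 :=
  AnalyticAt.fun_comp (g := F) (f := fun y : ℂ => ((0 : ℂ), y)) hF
    (analyticAt_const.prod analyticAt_id)

theorem tendsto_inr : Tendsto (fun y : ℂ => ((0 : ℂ), y)) (𝓝 0) (𝓝 0) := by
  have : Continuous fun y : ℂ => ((0 : ℂ), y) := by fun_prop
  exact this.tendsto 0

/-- Taylor series of the restriction to the line `x = 0`. -/
def rhoAn : An →ₐ[ℂ] PowerSeries ℂ where
  toFun f := ps (fun y => f.1 (0, y))
  map_one' := (ps_const 1).trans (map_one _)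
  map_mul' f g := ps_mul (an_restrict f.2) (an_restrict g.2)
  map_zero' := (ps_const 0).trans (map_zero _)
  map_add' f g := ps_add (an_restrict f.2) (an_restrict g.2)
  commutes' c := ps_const c

/-- Taylor series of the restriction of a germ to the line `x = 0`. -/
def rho : Germ2 →ₐ[ℂ] PowerSeries ℂ :=
  Ideal.Quotient.liftₐ nullIdeal rhoAn (fun f hf => by
    have : (fun y => f.1 (0, y)) =ᶠ[𝓝 0] fun _ => 0 := tendsto_inr.eventually hf
    exact (ps_congr this).trans ((ps_const 0).trans (map_zero _)))

theorem rho_germ {F : ℂ × ℂ → ℂ} (hF : AnalyticAt ℂ F 0) :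
    rho (germ F hF) = ps (fun y => F (0, y)) := rfl

theorem rho_eq (a : Germ2) : rho a = ps (fun y => rep a (0, y)) := by
  conv_lhs => rw [← germ_rep a]
  rfl

theorem an_swap : AnalyticAt ℂ (Prod.swap : ℂ × ℂ → ℂ × ℂ) 0 :=
  analyticAt_snd.prod analyticAt_fst

/-- The blow-up chart `(x, y) ↦ (x, x (c + y))`. -/
def chart (c : ℂ) (p : ℂ × ℂ) : ℂ × ℂ := (p.1, p.1 * (c + p.2))

theorem an_chart (c : ℂ) : AnalyticAt ℂ (chart c) 0 :=
  analyticAt_fst.prod (analyticAt_fst.mul (analyticAt_const.add analyticAt_snd))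

theorem chart_zero (c : ℂ) : chart c 0 = 0 := by simp [chart]

theorem swap_zero : Prod.swap (0 : ℂ × ℂ) = 0 := rfl

/-- The germs of holomorphic functions at the origin of `ℂ²`. -/
def germModel : Model Germ2 where
  x := germ Prod.fst analyticAt_fst
  y := germ Prod.snd analyticAt_snd
  ρ := rho
  σ := pull Prod.swap an_swap swap_zero
  φ c := pull (chart c) (an_chart c) (chart_zero c)
  ρx := by rw [rho_germ]; exact (ps_const 0).trans (map_zero _)
  ρy := by rw [rho_germ]; exact ps_id
  dvd_of_ρ f hf := by
    rw [rho_eq] at hf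
    obtain ⟨G, hG, h⟩ := exists_div_x (rep_an f) hf
    refine ⟨germ G hG, germ_ext ?_⟩
    filter_upwards [h, rep_mul (germ Prod.fst analyticAt_fst) (germ G hG),
      rep_germ hG, rep_germ (F := Prod.fst) analyticAt_fst] with p h1 h2 h3 h4
    rw [h1, h2, Pi.mul_apply, h3, h4]
  x_cancel f hf := by
    apply germ_ext
    refine EventuallyEq.trans ?_ rep_zero.symm
    refine eq_of_eq_off_x (rep_an f) analyticAt_const ?_
    have h := rep_zero
    rw [← hf] at h
    filter_upwards [h, rep_mul (germ Prod.fst analyticAt_fst) f,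
      rep_germ (F := Prod.fst) analyticAt_fst] with p h1 h2 h3 hp
    rw [h2, Pi.mul_apply, h3] at h1
    exact (mul_eq_zero.1 h1).resolve_left hp
  σσ f := by
    apply germ_ext
    filter_upwards [rep_pull an_swap swap_zero (pull Prod.swap an_swap swap_zero f),
      (tendsto_of_an an_swap swap_zero).eventually (rep_pull an_swap swap_zero f)] with p h1 h2
    rw [h1, Function.comp, h2, Function.comp, Prod.swap_swap]
  σx := rfl
  φx c := rfl
  φy c := rfl
  isUnit_of_ev f hf := by
    rw [rho_eq, constantCoeff_ps] at hf
    have hi := (rep_an f).inv hf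
    refine IsUnit.of_mul_eq_one (germ _ hi) (germ_ext ?_)
    have hne := (rep_an f).continuousAt.eventually_ne hf
    have h1 := rep_const 1
    rw [map_one] at h1
    filter_upwards [h1, hne, rep_mul f (germ _ hi), rep_germ hi] with p h1 h2 h3 h4
    rw [h3, h1, Pi.mul_apply, h4]
    exact mul_inv_cancel₀ h2
  max_of_ev f hf := by
    rw [rho_eq, constantCoeff_ps] at hf
    have hr := an_restrict (rep_an f)
    have hr2 : AnalyticAt ℂ (fun p : ℂ × ℂ => rep f (0, p.2)) 0 :=
      AnalyticAt.fun_comp (g := fun y => rep f (0, y)) (f := Prod.snd) hr analyticAt_snd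
    have hr1 : AnalyticAt ℂ (fun p : ℂ × ℂ => rep f (0, p.1)) 0 :=
      AnalyticAt.fun_comp (g := fun y => rep f (0, y)) (f := Prod.fst) hr analyticAt_fst
    obtain ⟨G, hG, h⟩ := exists_div_x ((rep_an f).sub hr2) (by
      rw [show (fun y : ℂ => (rep f - fun p : ℂ × ℂ => rep f (0, p.2)) (0, y)) = fun _ => 0 by
        funext y; simp]
      exact (ps_const 0).trans (map_zero _))
    obtain ⟨G', hG', h'⟩ := exists_div_x hr1 (by
      rw [show (fun y : ℂ => rep f (0, (0, y).1)) = fun _ => 0 by funext y; exact hf]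
      exact (ps_const 0).trans (map_zero _))
    have hG'' : AnalyticAt ℂ (G' ∘ Prod.swap) 0 := AnalyticAt.comp hG' an_swap
    refine ⟨germ G hG, germ _ hG'', germ_ext ?_⟩
    filter_upwards [h, (tendsto_of_an an_swap swap_zero).eventually h', rep_germ hG,
      rep_germ hG'', rep_germ (F := Prod.fst) analyticAt_fst,
      rep_germ (F := Prod.snd) analyticAt_snd,
      rep_mul (germ Prod.fst analyticAt_fst) (germ G hG),
      rep_mul (germ Prod.snd analyticAt_snd) (germ _ hG''),
      rep_add (germ Prod.fst analyticAt_fst * germ G hG)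
        (germ Prod.snd analyticAt_snd * germ _ hG'')] with p h1 h2 h3 h4 h5 h6 h7 h8 h9
    rw [h9, Pi.add_apply, h7, h8, Pi.mul_apply, Pi.mul_apply, h3, h4, h5, h6, ← h1]
    simp only [Prod.fst_swap] at h2
    rw [Function.comp, ← h2, Pi.sub_apply]
    ring
  ρσφ f := by
    rw [rho_eq, rho_eq]
    apply ps_congr
    have e1 := tendsto_inr.eventually (rep_pull an_swap swap_zero
      (pull (chart 0) (an_chart 0) (chart_zero 0) f))
    have e2 := tendsto_inr.eventually (rep_pull an_swap swap_zero f)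
    have e3 := ((tendsto_of_an an_swap swap_zero).comp tendsto_inr).eventually
      (rep_pull (an_chart 0) (chart_zero 0) f)
    filter_upwards [e1, e2, e3] with y h1 h2 h3
    rw [h1, h2, Function.comp, Function.comp]
    simp only [Function.comp] at h3
    rw [h3]
    simp [chart]

end

end CamachoSad

namespace CamachoSad
open Filter Topology

noncomputable section

/-! ### Weighted partial norms of power series -/

/-- The partial sum of order `N` of the weighted `ℓ¹`-norm of radius `r`. -/
def nrm (r : ℝ) (N : ℕ) (f : PowerSeries ℂ) : ℝ :=
  ∑ n ∈ Finset.range (N + 1), ‖PowerSeries.coeff n f‖ * r ^ n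

theorem nrm_nonneg {r : ℝ} (hr : 0 ≤ r) (N : ℕ) (f : PowerSeries ℂ) : 0 ≤ nrm r N f :=
  Finset.sum_nonneg fun _ _ => by positivity

theorem nrm_add_le {r : ℝ} (hr : 0 ≤ r) (N : ℕ) (f g : PowerSeries ℂ) :
    nrm r N (f + g) ≤ nrm r N f + nrm r N g := by
  rw [nrm, nrm, nrm, ← Finset.sum_add_distrib]
  refine Finset.sum_le_sum fun n _ => ?_
  rw [← add_mul, map_add]
  gcongr
  exact norm_add_le _ _

theorem nrm_mul_le {r : ℝ} (hr : 0 ≤ r) (N : ℕ) (f g : PowerSeries ℂ) :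
    nrm r N (f * g) ≤ nrm r N f * nrm r N g := by
  classical
  let F : ℕ × ℕ → ℝ := fun p => (‖PowerSeries.coeff p.1 f‖ * r ^ p.1) *
    (‖PowerSeries.coeff p.2 g‖ * r ^ p.2)
  have hF : ∀ p, 0 ≤ F p := fun p => by positivity
  have h1 : nrm r N f * nrm r N g =
      ∑ p ∈ Finset.range (N + 1) ×ˢ Finset.range (N + 1), F p := by
    rw [nrm, nrm, Finset.sum_mul_sum, Finset.sum_product]
  rw [h1]
  set D := (Finset.range (N + 1) ×ˢ Finset.range (N + 1)).filter fun p => p.1 + p.2 ∈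
    Finset.range (N + 1) with hD
  refine le_trans ?_ (Finset.sum_le_sum_of_subset_of_nonneg (Finset.filter_subset _ _)
    fun p _ _ => hF p : ∑ p ∈ D, F p ≤ _)
  rw [← Finset.sum_fiberwise_of_maps_to (s := D) (t := Finset.range (N + 1)) (g := fun p => p.1 + p.2)
    (fun p hp => (Finset.mem_filter.1 hp).2)]
  refine Finset.sum_le_sum fun n hn => ?_
  have : D.filter (fun p => p.1 + p.2 = n) = Finset.HasAntidiagonal.antidiagonal n := by
    ext p
    simp only [hD, Finset.mem_filter, Finset.mem_product, Finset.mem_range,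
      Finset.HasAntidiagonal.mem_antidiagonal] at hn ⊢
    lia
  rw [this, PowerSeries.coeff_mul]
  refine (mul_le_mul_of_nonneg_right (norm_sum_le _ _) (by positivity)).trans ?_
  rw [Finset.sum_mul]
  refine Finset.sum_le_sum fun p hp => le_of_eq ?_
  rw [← Finset.HasAntidiagonal.mem_antidiagonal.1 hp, norm_mul, pow_add]
  simp only [F]; ring

theorem nrm_X_pow_le {r : ℝ} (hr : 0 ≤ r) (N i : ℕ) :
    nrm r N (PowerSeries.X ^ i) ≤ r ^ i := by
  rw [nrm]
  simp only [PowerSeries.coeff_X_pow]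
  rw [Finset.sum_congr rfl (g := fun n => if n = i then r ^ i else 0) (fun n _ => by
    split_ifs with h <;> simp [h]), Finset.sum_ite_eq']
  split_ifs
  · exact le_rfl
  · positivity

theorem nrm_one_le {r : ℝ} (hr : 0 ≤ r) (N : ℕ) : nrm r N 1 ≤ 1 := by
  simpa using nrm_X_pow_le hr N 0

theorem nrm_pow_le {r : ℝ} (hr : 0 ≤ r) (N : ℕ) (f : PowerSeries ℂ) (j : ℕ) :
    nrm r N (f ^ j) ≤ nrm r N f ^ j := by
  induction j with
  | zero => simpa using nrm_one_le hr N
  | succ j ih =>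
    rw [pow_succ, pow_succ]
    exact (nrm_mul_le hr N _ _).trans (mul_le_mul_of_nonneg_right ih (nrm_nonneg hr N f))

theorem nrm_mono {r : ℝ} (hr : 0 ≤ r) {N M : ℕ} (h : N ≤ M) (f : PowerSeries ℂ) :
    nrm r N f ≤ nrm r M f :=
  Finset.sum_le_sum_of_subset_of_nonneg (Finset.range_subset_range.2 (by lia))
    fun _ _ _ => by positivity

theorem summable_of_nrm {r B : ℝ} (hr : 0 ≤ r) {f : PowerSeries ℂ} (h : ∀ N, nrm r N f ≤ B) :
    Summable (fun n => ‖PowerSeries.coeff n f‖ * r ^ n) ∧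
      ∑' n, ‖PowerSeries.coeff n f‖ * r ^ n ≤ B := by
  have h' : ∀ N, ∑ n ∈ Finset.range N, ‖PowerSeries.coeff n f‖ * r ^ n ≤ B := fun N =>
    (Finset.sum_le_sum_of_subset_of_nonneg (Finset.range_subset_range.2 (by lia : N ≤ N + 1))
      fun _ _ _ => by positivity).trans (h N)
  exact ⟨summable_of_sum_range_le (fun _ => by positivity) h',
    Real.tsum_le_of_sum_range_le (fun _ => by positivity) h'⟩

theorem geom_le {u : ℝ} (h0 : 0 ≤ u) (h : u ≤ 1 / 2) (n : ℕ) :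
    ∑ i ∈ Finset.range n, u ^ i ≤ 2 := by
  have h1 : u < 1 := by linarith
  refine ((summable_geometric_of_lt_one h0 h1).sum_le_tsum _ fun _ _ => by positivity).trans ?_
  rw [tsum_geometric_of_lt_one h0 h1]
  rw [inv_le_comm₀ (by linarith) (by norm_num)]
  linarith

end

end CamachoSad

namespace CamachoSad
open Filter Topology

noncomputable section

/-! ### Briot–Bouquet equations -/

theorem coeff_mul_pow_congr {A B : PowerSeries ℂ} {n : ℕ} (hA : PowerSeries.X ∣ A)
    (hB : PowerSeries.X ∣ B) (hAB : PowerSeries.X ^ n ∣ A - B) {i j : ℕ}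
    (hij : ¬ (i = 0 ∧ j = 1)) :
    PowerSeries.coeff n (PowerSeries.X ^ i * A ^ j) =
      PowerSeries.coeff n (PowerSeries.X ^ i * B ^ j) := by
  have key : (PowerSeries.X : PowerSeries ℂ) ^ (n + 1) ∣
      PowerSeries.X ^ i * A ^ j - PowerSeries.X ^ i * B ^ j := by
    rw [← mul_sub]
    rcases Nat.eq_zero_or_pos i with rfl | hi
    · rw [pow_zero, one_mul]
      rcases Nat.eq_zero_or_pos j with rfl | hj
      · simp
      · have hj2 : 2 ≤ j := by
          by_contra h
          exact hij ⟨rfl, by lia⟩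
        rw [← geom_sum₂_mul, mul_comm, pow_succ]
        refine mul_dvd_mul hAB (Finset.dvd_sum fun k hk => ?_)
        rcases Nat.eq_zero_or_pos k with rfl | hk0
        · exact Dvd.dvd.mul_left (dvd_pow hB (by lia)) _
        · exact Dvd.dvd.mul_right (dvd_pow hA (by lia)) _
    · rw [add_comm, pow_add, pow_one]
      exact mul_dvd_mul (dvd_pow_self _ (by lia)) (hAB.trans (sub_dvd_pow_sub_pow _ _ _))
  have := PowerSeries.X_pow_dvd_iff.1 key n (by lia)
  rwa [map_sub, sub_eq_zero] at this

theorem coeff_mul_pow_eq_zero {A : PowerSeries ℂ} {n : ℕ} (hA : PowerSeries.X ∣ A) {i j : ℕ}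
    (hij : n < i + j) : PowerSeries.coeff n (PowerSeries.X ^ i * A ^ j) = 0 := by
  have : (PowerSeries.X : PowerSeries ℂ) ^ (i + j) ∣ PowerSeries.X ^ i * A ^ j := by
    rw [pow_add]; exact mul_dvd_mul_left _ (pow_dvd_pow_of_dvd hA j)
  exact PowerSeries.X_pow_dvd_iff.1 this n hij

/-- The coefficient of order `n` of `g(X, A)`. -/
def subst (g : ℕ → ℕ → ℂ) (n : ℕ) (A : PowerSeries ℂ) : ℂ :=
  ∑ i ∈ Finset.range (n + 1), ∑ j ∈ Finset.range (n + 1),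
    g i j * PowerSeries.coeff n (PowerSeries.X ^ i * A ^ j)

theorem subst_eq (g : ℕ → ℕ → ℂ) {n N : ℕ} (hn : n ≤ N) {A : PowerSeries ℂ}
    (hA : PowerSeries.X ∣ A) : subst g n A =
    ∑ i ∈ Finset.range (N + 1), ∑ j ∈ Finset.range (N + 1),
      g i j * PowerSeries.coeff n (PowerSeries.X ^ i * A ^ j) := by
  rw [subst, ← Finset.sum_product', ← Finset.sum_product']
  refine Finset.sum_subset (Finset.product_subset_product
    (Finset.range_subset_range.2 (by lia)) (Finset.range_subset_range.2 (by lia))) ?_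
  rintro ⟨i, j⟩ - h
  simp only [Finset.mem_product, Finset.mem_range, not_and_or, not_lt] at h
  simp only
  rw [coeff_mul_pow_eq_zero hA (by lia), mul_zero]

theorem subst_congr {g : ℕ → ℕ → ℂ} (h01 : g 0 1 = 0) {n : ℕ} {A B : PowerSeries ℂ}
    (hA : PowerSeries.X ∣ A) (hB : PowerSeries.X ∣ B) (hAB : PowerSeries.X ^ n ∣ A - B) :
    subst g n A = subst g n B := by
  refine Finset.sum_congr rfl fun i _ => Finset.sum_congr rfl fun j _ => ?_
  by_cases hij : i = 0 ∧ j = 1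
  · rw [hij.1, hij.2, h01, zero_mul, zero_mul]
  · rw [coeff_mul_pow_congr hA hB hAB hij]

/-- Successive truncations of the formal solution of `x y' - l y = g(x, y)`. -/
def bbTrunc (g : ℕ → ℕ → ℂ) (l : ℂ) : ℕ → PowerSeries ℂ
  | 0 => 0
  | n + 1 => bbTrunc g l n +
      PowerSeries.C ((n - l)⁻¹ * subst g n (bbTrunc g l n)) * PowerSeries.X ^ n

/-- The coefficients of the formal solution. -/
def bbCoeff (g : ℕ → ℕ → ℂ) (l : ℂ) (n : ℕ) : ℂ := (n - l)⁻¹ * subst g n (bbTrunc g l n)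

theorem coeff_bbTrunc (g : ℕ → ℕ → ℂ) (l : ℂ) (n m : ℕ) :
    PowerSeries.coeff m (bbTrunc g l n) = if m < n then bbCoeff g l m else 0 := by
  induction n with
  | zero => simp [bbTrunc]
  | succ n ih =>
    rw [bbTrunc, map_add, ih, PowerSeries.coeff_C_mul_X_pow, ← bbCoeff]
    by_cases h1 : m < n
    · simp [h1, h1.ne, h1.trans (Nat.lt_succ_self n)]
    · by_cases h2 : m = n
      · subst h2; simp
      · simp [h1, h2, show ¬ m < n + 1 by lia]

theorem bbCoeff_zero {g : ℕ → ℕ → ℂ} (l : ℂ) (h00 : g 0 0 = 0) : bbCoeff g l 0 = 0 := by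
  simp [bbCoeff, subst, h00]

/-- Numerical form of the majorant estimate. -/
theorem majorant_le {g : ℕ → ℕ → ℂ} (h00 : g 0 0 = 0) (h01 : g 0 1 = 0) {C R : ℝ} (hC : 0 < C)
    (hR : 0 < R) (hg : ∀ i j, ‖g i j‖ ≤ C * R ^ (i + j)) {r s : ℝ} (hr : 0 ≤ r) (hs : 0 ≤ s)
    (hr2 : R * r ≤ 1 / 2) (hs2 : R * s ≤ 1 / 2) (N : ℕ) :
    ∑ i ∈ Finset.range (N + 1), ∑ j ∈ Finset.range (N + 1), ‖g i j‖ * (r ^ i * s ^ j) ≤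
      4 * C * (R * r) + 2 * C * (R * s) ^ 2 := by
  have hb : ∀ i j, ‖g i j‖ * (r ^ i * s ^ j) ≤ C * ((R * r) ^ i * (R * s) ^ j) := by
    intro i j
    calc _ ≤ C * R ^ (i + j) * (r ^ i * s ^ j) := by gcongr; exact hg i j
      _ = _ := by rw [mul_pow, mul_pow, pow_add]; ring
  rw [Finset.sum_range_succ']
  refine add_le_add ?_ ?_
  · calc _ ≤ ∑ i ∈ Finset.range N, 2 * C * (R * r) * (R * r) ^ i := by
          refine Finset.sum_le_sum fun i _ => ?_
          calc _ ≤ ∑ j ∈ Finset.range (N + 1), C * (R * r) ^ (i + 1) * (R * s) ^ j := by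
                refine Finset.sum_le_sum fun j _ => (hb _ _).trans (le_of_eq (by ring))
            _ = C * (R * r) ^ (i + 1) * ∑ j ∈ Finset.range (N + 1), (R * s) ^ j := by
                rw [Finset.mul_sum]
            _ ≤ C * (R * r) ^ (i + 1) * 2 := by
                gcongr; exact geom_le (by positivity) hs2 _
            _ = _ := by ring
      _ = 2 * C * (R * r) * ∑ i ∈ Finset.range N, (R * r) ^ i := by rw [Finset.mul_sum]
      _ ≤ 2 * C * (R * r) * 2 := by gcongr; exact geom_le (by positivity) hr2 _
      _ = _ := by ring
  · calc _ ≤ ∑ j ∈ Finset.range (N + 2), ‖g 0 j‖ * (r ^ 0 * s ^ j) :=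
          Finset.sum_le_sum_of_subset_of_nonneg (Finset.range_subset_range.2 (by lia))
            fun _ _ _ => by positivity
      _ = ∑ j ∈ Finset.range N, ‖g 0 (j + 2)‖ * (r ^ 0 * s ^ (j + 2)) := by
          rw [Finset.sum_range_succ', Finset.sum_range_succ']
          simp [h00, h01]
      _ ≤ ∑ j ∈ Finset.range N, C * (R * s) ^ 2 * (R * s) ^ j :=
          Finset.sum_le_sum fun j _ => (hb _ _).trans (le_of_eq (by ring))
      _ = C * (R * s) ^ 2 * ∑ j ∈ Finset.range N, (R * s) ^ j := by rw [Finset.mul_sum]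
      _ ≤ C * (R * s) ^ 2 * 2 := by gcongr; exact geom_le (by positivity) hs2 _
      _ = _ := by ring

theorem exists_gap (l : ℂ) (hl : ∀ n : ℕ, 1 ≤ n → l ≠ n) :
    ∃ δ > (0 : ℝ), ∀ n : ℕ, 1 ≤ n → δ ≤ ‖(n : ℂ) - l‖ := by
  obtain ⟨N, hN⟩ := exists_nat_ge (‖l‖ + 1)
  have hlarge : ∀ n : ℕ, N ≤ n → 1 ≤ ‖(n : ℂ) - l‖ := by
    intro n hn
    have h1 := norm_sub_norm_le (n : ℂ) l
    rw [Complex.norm_natCast] at h1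
    have h2 : (N : ℝ) ≤ n := by exact_mod_cast hn
    linarith
  have hfin : ∀ M : ℕ, ∃ δ > (0 : ℝ), ∀ n : ℕ, 1 ≤ n → n < M → δ ≤ ‖(n : ℂ) - l‖ := by
    intro M
    induction M with
    | zero => exact ⟨1, one_pos, fun n _ h => absurd h (by lia)⟩
    | succ M ih =>
      obtain ⟨δ, hδ, h⟩ := ih
      by_cases hM : 1 ≤ M
      · have hpos : 0 < ‖(M : ℂ) - l‖ := norm_pos_iff.2 (sub_ne_zero.2 (hl M hM).symm)
        refine ⟨min δ ‖(M : ℂ) - l‖, lt_min hδ hpos, fun n h1 h2 => ?_⟩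
        rcases (Nat.lt_succ_iff_lt_or_eq.1 h2) with h3 | rfl
        · exact (min_le_left _ _).trans (h n h1 h3)
        · exact min_le_right _ _
      · exact ⟨δ, hδ, fun n h1 h2 => absurd h2 (by lia)⟩
  obtain ⟨δ, hδ, h⟩ := hfin N
  refine ⟨min δ 1, lt_min hδ one_pos, fun n hn => ?_⟩
  rcases lt_or_ge n N with h1 | h1
  · exact (min_le_left _ _).trans (h n hn h1)
  · exact (min_le_right _ _).trans (hlarge n h1)

/-- The formal solution of the equation `x y' - l y = g(x, y)` has a positive radius of convergence; the
radii `r` and `s` are small enough for substitution into `g`. -/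
theorem bb_series {g : ℕ → ℕ → ℂ} (h00 : g 0 0 = 0) (h01 : g 0 1 = 0) {C R : ℝ} (hC : 0 < C)
    (hR : 0 < R) (hg : ∀ i j, ‖g i j‖ ≤ C * R ^ (i + j)) (l : ℂ)
    (hl : ∀ n : ℕ, 1 ≤ n → l ≠ n) :
    ∃ (Y : PowerSeries ℂ) (r s : ℝ), 0 < r ∧ 0 < s ∧ R * r ≤ 1 / 2 ∧ R * s ≤ 1 / 2 ∧
      PowerSeries.X ∣ Y ∧ (∀ N, nrm r N Y ≤ s) ∧
      ∀ n : ℕ, (n - l) * PowerSeries.coeff n Y = subst g n Y := by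
  obtain ⟨δ, hδ, hgap⟩ := exists_gap l hl
  have hTX : ∀ n, PowerSeries.X ∣ bbTrunc g l n := by
    intro n
    rw [PowerSeries.X_dvd_iff, ← PowerSeries.coeff_zero_eq_constantCoeff_apply, coeff_bbTrunc,
      bbCoeff_zero l h00, ite_self]
  have hTT : ∀ n N, n ≤ N → PowerSeries.X ^ n ∣ bbTrunc g l n - bbTrunc g l N := by
    intro n N hn
    rw [PowerSeries.X_pow_dvd_iff]
    intro m hm
    rw [map_sub, coeff_bbTrunc, coeff_bbTrunc, if_pos hm, if_pos (by lia), sub_self]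
  set K : ℝ := 8 * C * R / δ with hK
  have hKpos : 0 < K := by positivity
  obtain ⟨r, hr, hr1, hr2, hr3⟩ : ∃ r : ℝ, 0 < r ∧ R * r ≤ 1 / 2 ∧ R * (K * r) ≤ 1 / 2 ∧
      R * K ^ 2 * r ≤ 2 := by
    refine ⟨1 / (2 * R + 2 * (R * K) + R * K ^ 2), by positivity, ?_, ?_, ?_⟩
    · rw [mul_one_div, div_le_iff₀ (by positivity)]
      have : 0 < R * K := by positivity
      have : 0 < R * K ^ 2 := by positivity
      linarith
    · rw [← mul_assoc, mul_one_div, div_le_iff₀ (by positivity)]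
      have : 0 < R * K ^ 2 := by positivity
      linarith
    · rw [mul_one_div, div_le_iff₀ (by positivity)]
      have : 0 < R * K := by positivity
      have : 0 < R * K ^ 2 := by positivity
      linarith
  have hbound : ∀ N, nrm r N (bbTrunc g l N) ≤ K * r := by
    intro N
    induction N with
    | zero => simp only [nrm, bbTrunc, map_zero]; simp; positivity
    | succ N ih =>
      have hlast : nrm r (N + 1) (bbTrunc g l (N + 1)) =
          ∑ n ∈ Finset.range (N + 1), ‖bbCoeff g l n‖ * r ^ n := by
        rw [nrm, Finset.sum_range_succ, coeff_bbTrunc, if_neg (lt_irrefl _), norm_zero, zero_mul,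
          add_zero]
        refine Finset.sum_congr rfl fun n hn => ?_
        rw [coeff_bbTrunc, if_pos (Finset.mem_range.1 hn)]
      set T := bbTrunc g l N
      have hc : ∀ n ∈ Finset.range (N + 1), δ * (‖bbCoeff g l n‖ * r ^ n) ≤
          ∑ i ∈ Finset.range (N + 1), ∑ j ∈ Finset.range (N + 1),
            ‖g i j‖ * (‖PowerSeries.coeff n (PowerSeries.X ^ i * T ^ j)‖ * r ^ n) := by
        intro n hn
        rcases Nat.eq_zero_or_pos n with rfl | hn1
        · rw [bbCoeff_zero l h00, norm_zero, zero_mul, mul_zero]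
          exact Finset.sum_nonneg fun _ _ => Finset.sum_nonneg fun _ _ => by positivity
        have hnN : n ≤ N := by have := Finset.mem_range.1 hn; lia
        have hpos : 0 < ‖(n : ℂ) - l‖ := norm_pos_iff.2 (sub_ne_zero.2 (hl n hn1).symm)
        have e : subst g n (bbTrunc g l n) = subst g n T :=
          subst_congr h01 (hTX n) (hTX N) (hTT n N hnN)
        have e2 : δ * ‖bbCoeff g l n‖ ≤ ‖subst g n T‖ := by
          rw [bbCoeff, e, norm_mul, norm_inv]
          calc _ ≤ ‖(n : ℂ) - l‖ * (‖(n : ℂ) - l‖⁻¹ * ‖subst g n T‖) := by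
                gcongr; exact hgap n hn1
            _ = _ := by rw [← mul_assoc, mul_inv_cancel₀ hpos.ne', one_mul]
        have e3 : ‖subst g n T‖ ≤ ∑ i ∈ Finset.range (N + 1), ∑ j ∈ Finset.range (N + 1),
            ‖g i j‖ * ‖PowerSeries.coeff n (PowerSeries.X ^ i * T ^ j)‖ := by
          rw [subst_eq g hnN (hTX N)]
          refine (norm_sum_le _ _).trans (Finset.sum_le_sum fun i _ => ?_)
          refine (norm_sum_le _ _).trans (Finset.sum_le_sum fun j _ => ?_)
          rw [norm_mul]
        calc _ = δ * ‖bbCoeff g l n‖ * r ^ n := by ring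
          _ ≤ (∑ i ∈ Finset.range (N + 1), ∑ j ∈ Finset.range (N + 1),
            ‖g i j‖ * ‖PowerSeries.coeff n (PowerSeries.X ^ i * T ^ j)‖) * r ^ n := by
              gcongr; exact e2.trans e3
          _ = _ := by simp only [Finset.sum_mul, mul_assoc]
      have hT0 : 0 ≤ nrm r N T := nrm_nonneg hr.le _ _
      have hsum : δ * nrm r (N + 1) (bbTrunc g l (N + 1)) ≤
          ∑ i ∈ Finset.range (N + 1), ∑ j ∈ Finset.range (N + 1),
            ‖g i j‖ * (r ^ i * (K * r) ^ j) := by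
        rw [hlast, Finset.mul_sum]
        refine (Finset.sum_le_sum hc).trans ?_
        rw [Finset.sum_comm]
        refine Finset.sum_le_sum fun i _ => ?_
        rw [Finset.sum_comm]
        refine Finset.sum_le_sum fun j _ => ?_
        rw [← Finset.mul_sum]
        gcongr
        calc _ ≤ nrm r N (PowerSeries.X ^ i) * nrm r N (T ^ j) := nrm_mul_le hr.le _ _ _
          _ ≤ r ^ i * (nrm r N T) ^ j := by
              gcongr
              · exact nrm_nonneg hr.le _ _
              · exact nrm_X_pow_le hr.le _ _
              · exact nrm_pow_le hr.le _ _ _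
          _ ≤ _ := by gcongr
      have hmaj := hsum.trans (majorant_le h00 h01 hC hR hg hr.le (by positivity) hr1 hr2 N)
      have h5 : 4 * C * (R * r) + 2 * C * (R * (K * r)) ^ 2 ≤ δ * (K * r) := by
        have e1 : δ * (K * r) = 8 * C * R * r := by rw [hK]; field_simp
        have e2 : 2 * C * (R * (K * r)) ^ 2 = 2 * C * R * r * (R * K ^ 2 * r) := by ring
        have e3 : 2 * C * R * r * (R * K ^ 2 * r) ≤ 2 * C * R * r * 2 := by gcongr
        rw [e1, e2]; linarith
      exact le_of_mul_le_mul_left (hmaj.trans h5) hδ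
  set Y : PowerSeries ℂ := PowerSeries.mk (bbCoeff g l) with hY
  have hYX : PowerSeries.X ∣ Y := by
    rw [PowerSeries.X_dvd_iff, ← PowerSeries.coeff_zero_eq_constantCoeff_apply, hY,
      PowerSeries.coeff_mk, bbCoeff_zero l h00]
  refine ⟨Y, r, K * r, hr, by positivity, hr1, hr2, hYX, fun N => ?_, fun n => ?_⟩
  · have : nrm r N Y = nrm r N (bbTrunc g l (N + 1)) := by
      refine Finset.sum_congr rfl fun n hn => ?_
      rw [coeff_bbTrunc, if_pos (Finset.mem_range.1 hn), hY, PowerSeries.coeff_mk]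
    rw [this]
    exact (nrm_mono hr.le (Nat.le_succ N) _).trans (hbound (N + 1))
  · rw [hY, PowerSeries.coeff_mk, ← hY]
    rcases Nat.eq_zero_or_pos n with rfl | hn1
    · rw [bbCoeff_zero l h00]; simp [subst, h00]
    rw [bbCoeff, ← mul_assoc, mul_inv_cancel₀ (sub_ne_zero.2 (hl n hn1).symm), one_mul]
    refine subst_congr h01 (hTX n) hYX ?_
    rw [PowerSeries.X_pow_dvd_iff]
    intro m hm
    rw [map_sub, coeff_bbTrunc, if_pos hm, hY, PowerSeries.coeff_mk, sub_self]

end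

end CamachoSad

namespace CamachoSad
open Filter Topology

noncomputable section

/-! ### Convergent solutions of Briot–Bouquet equations -/

theorem exists_analytic_of_bound {c : ℕ → ℂ} {C R : ℝ} (hC : 0 < C) (hR : 0 < R)
    (h : ∀ n, ‖c n‖ ≤ C * R ^ n) :
    ∃ y : ℂ → ℂ, AnalyticAt ℂ y 0 ∧ ∀ᶠ t in 𝓝 (0 : ℂ), HasSum (fun n => c n * t ^ n) (y t) := by
  have hconv : Conv fun i j => if i = 0 then c j else 0 := by
    refine ⟨C, R, hC, hR, fun i j => ?_⟩
    beta_reduce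
    split_ifs with hi
    · subst hi; simpa using h j
    · rw [norm_zero]; positivity
  refine ⟨_, an_restrict hconv.hasExp.analyticAt, ?_⟩
  simpa using hconv.hasExp.restrict

theorem hasSum_coeff_pow {f : PowerSeries ℂ} {y u : ℂ}
    (h : HasSum (fun n => PowerSeries.coeff n f * y ^ n) u) (j : ℕ) :
    HasSum (fun n => PowerSeries.coeff n (f ^ j) * y ^ n) (u ^ j) := by
  induction j with
  | zero =>
    rw [pow_zero, pow_zero]
    have := hasSum_single (f := fun n => PowerSeries.coeff n (1 : PowerSeries ℂ) * y ^ n) 0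
      (fun n hn => by simp [PowerSeries.coeff_one, hn])
    simpa using this
  | succ j ih => rw [pow_succ, pow_succ]; exact hasSum_coeff_mul ih h

theorem hasSum_coeff_X (y : ℂ) :
    HasSum (fun n => PowerSeries.coeff n (PowerSeries.X : PowerSeries ℂ) * y ^ n) y := by
  have := hasSum_single (f := fun n => PowerSeries.coeff n (PowerSeries.X : PowerSeries ℂ) * y ^ n)
    1 (fun n hn => by simp [PowerSeries.coeff_X, hn])
  simpa using this

theorem hasSum_deriv {y : ℂ → ℂ} (hy : AnalyticAt ℂ y 0) :
    ∀ᶠ t in 𝓝 (0 : ℂ), HasSum (fun n : ℕ => (n : ℂ) * PowerSeries.coeff n (ps y) * t ^ n)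
      (t * deriv y t) := by
  have h1 : AnalyticAt ℂ (fun t : ℂ => t) 0 := analyticAt_id
  have h2 := ps_mul h1 hy.deriv
  filter_upwards [ps_hasSum (h1.mul hy.deriv)] with t ht
  refine ht.congr_fun fun n => ?_
  rw [h2, ps_id]
  rcases n with _ | n
  · simp
  · rw [PowerSeries.coeff_succ_X_mul, ps, ps, PowerSeries.coeff_mk, PowerSeries.coeff_mk,
      ← iteratedDeriv_succ', Nat.factorial_succ]
    have : ((n.factorial : ℕ) : ℂ) ≠ 0 := by exact_mod_cast n.factorial_ne_zero
    have : ((n : ℂ) + 1) ≠ 0 := by exact_mod_cast n.succ_ne_zero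
    push_cast
    field_simp

/-- Termwise substitution of a convergent series `y(t)` into `∑ g i j x^i y^j`. -/
theorem hasSum_subst {g : ℕ → ℕ → ℂ} {C R : ℝ} (hR : 0 < R)
    (hg : ∀ i j, ‖g i j‖ ≤ C * R ^ (i + j)) {Y : PowerSeries ℂ} {r s : ℝ} (hr : 0 < r)
    (hs : 0 < s) (hr1 : R * r ≤ 1 / 2) (hs1 : R * s ≤ 1 / 2) (hX : PowerSeries.X ∣ Y)
    (hN : ∀ N, nrm r N Y ≤ s) {t u w : ℂ} (ht : ‖t‖ ≤ r)
    (hu : HasSum (fun n => PowerSeries.coeff n Y * t ^ n) u)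
    (hw : HasSum (term g (t, u)) w) : HasSum (fun n => subst g n Y * t ^ n) w := by
  let F : (ℕ × ℕ) × ℕ → ℂ := fun q =>
    g q.1.1 q.1.2 * (PowerSeries.coeff q.2 (PowerSeries.X ^ q.1.1 * Y ^ q.1.2) * t ^ q.2)
  have hrow : ∀ ij : ℕ × ℕ, HasSum (fun n => F (ij, n)) (term g (t, u) ij) := fun ij =>
    (hasSum_coeff_mul (hasSum_coeff_pow (hasSum_coeff_X t) ij.1)
      (hasSum_coeff_pow hu ij.2)).mul_left (g ij.1 ij.2)
  have hbd : ∀ (ij : ℕ × ℕ), ∑' n, ‖F (ij, n)‖ ≤ C * ((R * r) ^ ij.1 * (R * s) ^ ij.2) := by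
    intro ij
    have h1 : ∀ N, nrm r N (PowerSeries.X ^ ij.1 * Y ^ ij.2) ≤ r ^ ij.1 * s ^ ij.2 := by
      intro N
      calc _ ≤ nrm r N (PowerSeries.X ^ ij.1) * nrm r N (Y ^ ij.2) := nrm_mul_le hr.le _ _ _
        _ ≤ r ^ ij.1 * (nrm r N Y) ^ ij.2 := by
            gcongr
            · exact nrm_nonneg hr.le _ _
            · exact nrm_X_pow_le hr.le _ _
            · exact nrm_pow_le hr.le _ _ _
        _ ≤ _ := by
            gcongr
            · exact nrm_nonneg hr.le _ _
            · exact hN N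
    obtain ⟨s1, s2⟩ := summable_of_nrm hr.le h1
    have h2 : ∀ n, ‖F (ij, n)‖ ≤ ‖g ij.1 ij.2‖ *
        (‖PowerSeries.coeff n (PowerSeries.X ^ ij.1 * Y ^ ij.2)‖ * r ^ n) := by
      intro n
      simp only [F, norm_mul, norm_pow]
      gcongr
    calc _ ≤ ∑' n, ‖g ij.1 ij.2‖ *
        (‖PowerSeries.coeff n (PowerSeries.X ^ ij.1 * Y ^ ij.2)‖ * r ^ n) :=
          (hrow ij).summable.norm.tsum_le_tsum h2 (s1.mul_left _)
      _ = ‖g ij.1 ij.2‖ * ∑' n,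
        (‖PowerSeries.coeff n (PowerSeries.X ^ ij.1 * Y ^ ij.2)‖ * r ^ n) := tsum_mul_left
      _ ≤ (C * R ^ (ij.1 + ij.2)) * (r ^ ij.1 * s ^ ij.2) := by
          gcongr
          · exact (norm_nonneg _).trans (hg _ _)
          · exact hg _ _
      _ = _ := by rw [mul_pow, mul_pow, pow_add]; ring
  have hsum : Summable fun q => ‖F q‖ := by
    rw [summable_prod_of_nonneg fun _ => norm_nonneg _]
    refine ⟨fun ij => (hrow ij).summable.norm, ?_⟩
    exact Summable.of_nonneg_of_le (fun _ => tsum_nonneg fun _ => norm_nonneg _) hbd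
      (summable_geom (by positivity) (by linarith) (by positivity) (by linarith) C)
  have hF := hsum.of_norm.hasSum
  have hw' := (hF.prod_fiberwise hrow).unique hw
  rw [hw'] at hF
  have hF' := (Equiv.prodComm ℕ (ℕ × ℕ)).hasSum_iff.2 hF
  refine hF'.prod_fiberwise fun n => ?_
  rw [subst, ← Finset.sum_product', Finset.sum_mul]
  have h0 : HasSum (fun ij : ℕ × ℕ => F (ij, n))
      (∑ ij ∈ Finset.range (n + 1) ×ˢ Finset.range (n + 1), F (ij, n)) :=
    hasSum_sum_of_ne_finset_zero (fun ij hij => by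
      simp only [Finset.mem_product, Finset.mem_range, not_and_or, not_lt] at hij
      simp only [F]
      rw [coeff_mul_pow_eq_zero hX (by lia), zero_mul, mul_zero])
  simpa [F, mul_assoc] using h0

/-- The Briot–Bouquet equation `t y' = h(t, y)` has a holomorphic solution when `∂h/∂y(0)` is not
a positive integer. -/
theorem briot_bouquet {h : ℂ × ℂ → ℂ} (hh : AnalyticAt ℂ h 0) (h0 : h 0 = 0)
    (hl : ∀ n : ℕ, 1 ≤ n → PowerSeries.coeff 1 (ps fun y => h (0, y)) ≠ n) :
    ∃ y : ℂ → ℂ, AnalyticAt ℂ y 0 ∧ y 0 = 0 ∧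
      ∀ᶠ t in 𝓝 (0 : ℂ), t * deriv y t = h (t, y t) := by
  obtain ⟨a, ⟨C, R, hC, hR, ha⟩, hsum⟩ := exists_hasExp hh
  have hps := HasExp.ps_eq ⟨⟨C, R, hC, hR, ha⟩, hsum⟩
  rw [hps, PowerSeries.coeff_mk] at hl
  have ha0 : a 0 0 = 0 := by
    have := constantCoeff_ps fun y => h (0, y)
    rw [hps, ← PowerSeries.coeff_zero_eq_constantCoeff_apply, PowerSeries.coeff_mk] at this
    rw [this]; exact h0
  let g : ℕ → ℕ → ℂ := fun i j => if i = 0 ∧ j = 1 then 0 else a i j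
  have hg : ∀ i j, ‖g i j‖ ≤ C * R ^ (i + j) := by
    intro i j
    simp only [g]
    split_ifs
    · rw [norm_zero]; positivity
    · exact ha i j
  obtain ⟨Y, r, s, hr, hs, hr1, hs1, hX, hN, hY⟩ :=
    bb_series (g := g) (by simp [g, ha0]) (by simp [g]) hC hR hg (a 0 1) hl
  have hYb : ∀ n, ‖PowerSeries.coeff n Y‖ ≤ s * (1 / r) ^ n := by
    intro n
    have h1 : ‖PowerSeries.coeff n Y‖ * r ^ n ≤ s :=
      (Finset.single_le_sum (f := fun n => ‖PowerSeries.coeff n Y‖ * r ^ n)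
        (fun _ _ => by positivity) (Finset.self_mem_range_succ n)).trans (hN n)
    rw [one_div, inv_pow, ← div_eq_mul_inv, le_div_iff₀ (by positivity)]
    exact h1
  obtain ⟨y, hy, hys⟩ := exists_analytic_of_bound hs (by positivity) hYb
  have hpsy : ps y = Y := by rw [ps_unique hys]; ext; simp
  have hy0 : y 0 = 0 := by
    rw [← constantCoeff_ps y, hpsy]; exact PowerSeries.X_dvd_iff.1 hX
  have hγ : Tendsto (fun t => (t, y t)) (𝓝 (0 : ℂ)) (𝓝 (0 : ℂ × ℂ)) := by
    have : ContinuousAt (fun t => (t, y t)) (0 : ℂ) := continuousAt_id.prodMk hy.continuousAt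
    have h := this.tendsto
    rw [hy0] at h
    exact h
  refine ⟨y, hy, hy0, ?_⟩
  have hball : ∀ᶠ t : ℂ in 𝓝 0, ‖t‖ ≤ r := by
    filter_upwards [Metric.closedBall_mem_nhds (0 : ℂ) hr] with t ht
    simpa using ht
  filter_upwards [hys, hγ.eventually hsum, hasSum_deriv hy, hball] with t h1 h2 h3 h4
  have hw : HasSum (term g (t, y t)) (h (t, y t) - a 0 1 * y t) := by
    have h5 := hasSum_single (f := fun ij : ℕ × ℕ => if ij = (0, 1) then a 0 1 * y t else 0)
      (0, 1) (fun ij hij => by simp [hij])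
    rw [if_pos rfl] at h5
    refine (h2.sub h5).congr_fun fun ij => ?_
    rcases ij with ⟨i, j⟩
    simp only [term, g, Prod.mk.injEq]
    by_cases hij : i = 0 ∧ j = 1
    · obtain ⟨rfl, rfl⟩ := hij; simp
    · simp [hij]
  have h6 := hasSum_subst hR hg hr hs hr1 hs1 hX hN h4 h1 hw
  rw [hpsy] at h3
  have h7 := h3.sub (h1.mul_left (a 0 1))
  have h8 := h7.unique (h6.congr_fun fun n => by rw [← hY]; ring)
  linear_combination h8

end

end CamachoSad

namespace CamachoSad
open Filter Topology

noncomputable section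

/-! ### Invariant curves and the blow-up rules -/

/-- A parametrized curve germ `t ↦ (X t, Y t)` through the origin of `ℂ²`. -/
def IsCurve (X Y : ℂ → ℂ) : Prop := AnalyticAt ℂ X 0 ∧ AnalyticAt ℂ Y 0 ∧ X 0 = 0 ∧ Y 0 = 0

/-- `P ∂x + Q ∂y` is tangent to a nonconstant curve germ. -/
def HasCurve0 (P Q : ℂ × ℂ → ℂ) : Prop :=
  ∃ X Y : ℂ → ℂ, IsCurve X Y ∧
    ((∀ᶠ t in 𝓝[≠] (0 : ℂ), X t ≠ 0) ∨ ∀ᶠ t in 𝓝[≠] (0 : ℂ), Y t ≠ 0) ∧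
    ∀ᶠ t in 𝓝 (0 : ℂ), P (X t, Y t) * deriv Y t = Q (X t, Y t) * deriv X t

/-- `x a ∂x + b ∂y` is tangent to a curve germ not contained in `x = 0`. -/
def HasCurve1 (a b : ℂ × ℂ → ℂ) : Prop :=
  ∃ X Y : ℂ → ℂ, IsCurve X Y ∧ (∀ᶠ t in 𝓝[≠] (0 : ℂ), X t ≠ 0) ∧
    ∀ᶠ t in 𝓝 (0 : ℂ), a (X t, Y t) * X t * deriv Y t = b (X t, Y t) * deriv X t

/-- `x a ∂x + y b ∂y` is tangent to a curve germ not contained in `x y = 0`. -/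
def HasCurve2 (a b : ℂ × ℂ → ℂ) : Prop :=
  ∃ X Y : ℂ → ℂ, IsCurve X Y ∧ (∀ᶠ t in 𝓝[≠] (0 : ℂ), X t ≠ 0) ∧
    (∀ᶠ t in 𝓝[≠] (0 : ℂ), Y t ≠ 0) ∧
    ∀ᶠ t in 𝓝 (0 : ℂ), a (X t, Y t) * X t * deriv Y t = Y t * b (X t, Y t) * deriv X t

theorem IsCurve.tendsto {X Y : ℂ → ℂ} (h : IsCurve X Y) :
    Tendsto (fun t => (X t, Y t)) (𝓝 0) (𝓝 (0 : ℂ × ℂ)) := by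
  have := (h.1.continuousAt.prodMk h.2.1.continuousAt).tendsto
  rwa [h.2.2.1, h.2.2.2] at this

theorem IsCurve.chart {X T : ℂ → ℂ} (h : IsCurve X T) (c : ℂ) :
    IsCurve X (fun t => X t * (c + T t)) :=
  ⟨h.1, h.1.mul (analyticAt_const.add h.2.1), h.2.2.1, by simp [h.2.2.1]⟩

theorem IsCurve.deriv_chart {X T : ℂ → ℂ} (h : IsCurve X T) (c : ℂ) :
    ∀ᶠ t in 𝓝 (0 : ℂ), deriv (fun t => X t * (c + T t)) t =
      deriv X t * (c + T t) + X t * deriv T t := by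
  filter_upwards [h.1.eventually_analyticAt, h.2.1.eventually_analyticAt] with t h1 h2
  have := h1.differentiableAt.hasDerivAt.mul (h2.differentiableAt.hasDerivAt.const_add c)
  exact this.deriv

theorem rep_chart {c : ℂ} {n : ℕ} {a a' : Germ2}
    (h : germModel.φ c a = germModel.x ^ n * a') :
    ∀ᶠ p in 𝓝 (0 : ℂ × ℂ), rep a (p.1, p.1 * (c + p.2)) = p.1 ^ n * rep a' p := by
  have h1 := rep_pull (an_chart c) (chart_zero c) a
  rw [show pull (chart c) (an_chart c) (chart_zero c) a = germModel.x ^ n * a' from h] at h1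
  filter_upwards [h1, rep_mul (germModel.x ^ n) a', rep_pow germModel.x n,
    rep_germ (F := Prod.fst) analyticAt_fst] with p h1 h2 h3 h4
  have h4 : rep germModel.x p = p.1 := h4
  rw [h2] at h1
  simp only [Function.comp, CamachoSad.chart, Pi.mul_apply, h3, Pi.pow_apply, h4] at h1
  exact h1.symm

theorem rep_swap_germ (a : Germ2) :
    ∀ᶠ p in 𝓝 (0 : ℂ × ℂ), rep (germModel.σ a) p = rep a (p.2, p.1) :=
  rep_pull an_swap swap_zero a

theorem rep_affine (c : ℂ) :
    ∀ᶠ p in 𝓝 (0 : ℂ × ℂ), rep (algebraMap ℂ Germ2 c + germModel.y) p = c + p.2 := by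
  filter_upwards [rep_add (algebraMap ℂ Germ2 c) germModel.y, rep_const c,
    rep_germ (F := Prod.snd) analyticAt_snd] with p h1 h2 h3
  rw [h1, Pi.add_apply, h2]
  exact congrArg (c + ·) h3

/-- The Briot–Bouquet theorem produces the first invariant curve; the other rules say that the image
of an invariant curve under a blow-up chart, or under the exchange of coordinates, is invariant. -/
theorem rules : germModel.Rules (fun a b => HasCurve0 (rep a) (rep b))
    (fun a b => HasCurve1 (rep a) (rep b)) (fun a b => HasCurve2 (rep a) (rep b)) where
  bb a b ha hb hn := by
    have ha : rep a 0 ≠ 0 := by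
      rw [Model.ev, show germModel.ρ a = rho a from rfl, rho_eq, constantCoeff_ps] at ha; exact ha
    have hb : rep b 0 = 0 := by
      rw [Model.ev, show germModel.ρ b = rho b from rfl, rho_eq, constantCoeff_ps] at hb; exact hb
    have hq : AnalyticAt ℂ (rep b / rep a) 0 := (rep_an b).div (rep_an a) ha
    have hne := (rep_an a).continuousAt.eventually_ne ha
    have hρ : rho b = ps (fun y => (rep b / rep a) (0, y)) * rho a := by
      rw [rho_eq, rho_eq, ← ps_mul (an_restrict hq) (an_restrict (rep_an a))]
      apply ps_congr
      filter_upwards [tendsto_inr.eventually hne] with y hy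
      simp [hy]
    have h00 : (rep b / rep a) 0 = 0 := by simp [hb]
    obtain ⟨y, hy, hy0, hyt⟩ := briot_bouquet hq h00 (fun n hn1 he => by
      apply hn n hn1
      change PowerSeries.coeff 1 (rho b) = n * PowerSeries.constantCoeff (rho a)
      have h0 : PowerSeries.constantCoeff (ps (fun y => (rep b / rep a) (0, y))) = 0 := by
        rw [constantCoeff_ps]; exact h00
      generalize (ps fun y => (rep b / rep a) (0, y)) = f at hρ he h0
      rw [hρ, PowerSeries.coeff_mul, Finset.Nat.antidiagonal_succ, Finset.sum_cons]
      simp [he, h0])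
    refine ⟨fun t => t, y, ⟨analyticAt_id, hy, rfl, hy0⟩, eventually_mem_nhdsWithin, ?_⟩
    have hc : IsCurve (fun t => t) y := ⟨analyticAt_id, hy, rfl, hy0⟩
    filter_upwards [hyt, hc.tendsto.eventually hne] with t h1 h2
    rw [mul_assoc, h1, Pi.div_apply, deriv_id'', mul_one, mul_div_cancel₀ _ h2]
  one_of_one c n a b a' b' h1 h2 := by
    rintro ⟨X, T, hc, hX, he⟩
    refine ⟨X, _, hc.chart c, hX, ?_⟩
    filter_upwards [he, hc.deriv_chart c, hc.tendsto.eventually (rep_chart h1),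
      hc.tendsto.eventually (rep_chart h2), hc.tendsto.eventually (rep_affine c),
      hc.tendsto.eventually (rep_sub b' ((algebraMap ℂ Germ2 c + germModel.y) * a')),
      hc.tendsto.eventually (rep_mul (algebraMap ℂ Germ2 c + germModel.y) a')]
      with t e0 e1 e2 e3 e4 e5 e6
    rw [e5, Pi.sub_apply, e6, Pi.mul_apply, e4] at e0
    rw [e1, e2, e3]
    linear_combination X t ^ (n + 1) * e0
  one_of_two n a b a' b' h1 h2 := by
    rintro ⟨U, V, hc, hU, hV, he⟩
    have hc' : IsCurve (fun t => U t * V t) U :=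
      ⟨hc.1.mul hc.2.1, hc.1, by simp [hc.2.2.1], hc.2.2.1⟩
    have hc0 := (hc.chart 0).tendsto
    have hd := hc.deriv_chart 0
    simp only [zero_add] at hc0 hd
    refine ⟨_, U, hc', ?_, ?_⟩
    · filter_upwards [hU, hV] with t h1 h2 using mul_ne_zero h1 h2
    filter_upwards [he, hd, hc.tendsto.eventually (rep_chart h1),
      hc.tendsto.eventually (rep_chart h2), hc0.eventually (rep_swap_germ a),
      hc0.eventually (rep_swap_germ b),
      hc.tendsto.eventually (rep_sub a' b')] with t e0 e1 e2 e3 e4 e5 e6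
    simp only [zero_add] at e2 e3
    rw [e4] at e2
    rw [e5] at e3
    rw [e6, Pi.sub_apply] at e0
    rw [e1, e2, e3]
    linear_combination -U t ^ (n + 1) * e0
  two_of_one c n a b a' b' hc0 h1 h2 := by
    rintro ⟨X, T, hc, hX, he⟩
    refine ⟨X, _, hc.chart c, hX, ?_, ?_⟩
    · have h3 : ContinuousAt (fun t => c + T t) 0 := continuousAt_const.add hc.2.1.continuousAt
      have h4 := h3.eventually_ne (y := 0) (by simpa [hc.2.2.2] using hc0)
      filter_upwards [hX, h4.filter_mono nhdsWithin_le_nhds] with t h5 h6 using mul_ne_zero h5 h6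
    filter_upwards [he, hc.deriv_chart c, hc.tendsto.eventually (rep_chart h1),
      hc.tendsto.eventually (rep_chart h2), hc.tendsto.eventually (rep_affine c),
      hc.tendsto.eventually (rep_sub b' a'),
      hc.tendsto.eventually (rep_mul (algebraMap ℂ Germ2 c + germModel.y) (b' - a'))]
      with t e0 e1 e2 e3 e4 e5 e6
    rw [e6, Pi.mul_apply, e5, Pi.sub_apply, e4] at e0
    rw [e1, e2, e3]
    linear_combination X t ^ (n + 1) * e0
  two_of_two n a b a' b' h1 h2 := by
    rintro ⟨X, T, hc, hX, hT, he⟩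
    refine ⟨X, _, hc.chart 0, hX, ?_, ?_⟩
    · filter_upwards [hX, hT] with t h5 h6
      simpa using And.intro h5 h6
    filter_upwards [he, hc.deriv_chart 0, hc.tendsto.eventually (rep_chart h1),
      hc.tendsto.eventually (rep_chart h2), hc.tendsto.eventually (rep_sub b' a')]
      with t e0 e1 e2 e3 e5
    rw [e5, Pi.sub_apply] at e0
    rw [e1, e2, e3]
    linear_combination X t ^ (n + 1) * e0
  two_swap a b := by
    rintro ⟨X, Y, hc, hX, hY, he⟩
    refine ⟨Y, X, ⟨hc.2.1, hc.1, hc.2.2.2, hc.2.2.1⟩, hY, hX, ?_⟩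
    filter_upwards [he, hc.tendsto.eventually (rep_swap_germ a),
      hc.tendsto.eventually (rep_swap_germ b)] with t e0 e1 e2
    rw [e1, e2] at e0
    linear_combination -e0
  zero_of_one c n a b a' b' h1 h2 := by
    rintro ⟨X, T, hc, hX, he⟩
    refine ⟨X, _, hc.chart c, Or.inl hX, ?_⟩
    filter_upwards [he, hc.deriv_chart c, hc.tendsto.eventually (rep_chart h1),
      hc.tendsto.eventually (rep_chart h2), hc.tendsto.eventually (rep_affine c),
      hc.tendsto.eventually (rep_sub b' ((algebraMap ℂ Germ2 c + germModel.y) * a')),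
      hc.tendsto.eventually (rep_mul (algebraMap ℂ Germ2 c + germModel.y) a')]
      with t e0 e1 e2 e3 e4 e5 e6
    rw [e5, Pi.sub_apply, e6, Pi.mul_apply, e4] at e0
    rw [e1, e2, e3]
    linear_combination X t ^ n * e0
  zero_swap a b := by
    rintro ⟨X, Y, hc, hn, he⟩
    refine ⟨Y, X, ⟨hc.2.1, hc.1, hc.2.2.2, hc.2.2.1⟩, hn.symm, ?_⟩
    filter_upwards [he, hc.tendsto.eventually (rep_swap_germ a),
      hc.tendsto.eventually (rep_swap_germ b)] with t e0 e1 e2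
    rw [e1, e2] at e0
    linear_combination -e0

end

end CamachoSad

namespace CamachoSad
open Filter Topology

noncomputable section

/-! ### Weierstrass division -/

theorem nrm_neg (r : ℝ) (N : ℕ) (f : PowerSeries ℂ) : nrm r N (-f) = nrm r N f := by
  simp [nrm]

theorem nrm_sum_le {r : ℝ} (hr : 0 ≤ r) (N : ℕ) {ι : Type*} (s : Finset ι)
    (f : ι → PowerSeries ℂ) : nrm r N (∑ i ∈ s, f i) ≤ ∑ i ∈ s, nrm r N (f i) := by
  classical
  induction s using Finset.induction_on with
  | empty => simp [nrm]
  | insert a s ha ih =>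
    rw [Finset.sum_insert ha, Finset.sum_insert ha]
    exact (nrm_add_le hr N _ _).trans (by gcongr)

/-- The quotient of a power series by `X ^ k`, forgetting the terms of degree less than `k`. -/
def tl (k : ℕ) (g : PowerSeries ℂ) : PowerSeries ℂ :=
  PowerSeries.mk fun n => PowerSeries.coeff (n + k) g

theorem tl_spec (k : ℕ) (g : PowerSeries ℂ) :
    g = PowerSeries.X ^ k * tl k g +
      ∑ m ∈ Finset.range k, PowerSeries.C (PowerSeries.coeff m g) * PowerSeries.X ^ m := by
  ext n
  simp only [map_add, map_sum, PowerSeries.coeff_C_mul, PowerSeries.coeff_X_pow, mul_ite, mul_one,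
    mul_zero, Finset.sum_ite_eq, Finset.mem_range, PowerSeries.coeff_X_pow_mul']
  by_cases h : k ≤ n
  · simp [h, tl, not_lt.2 h, Nat.sub_add_cancel h]
  · simp [h, not_le.1 h]

theorem nrm_tl_le {r : ℝ} (hr : 0 ≤ r) (N k : ℕ) (g : PowerSeries ℂ) :
    r ^ k * nrm r N (tl k g) ≤ nrm r (N + k) g := by
  rw [nrm, nrm, Finset.mul_sum, show N + k + 1 = k + (N + 1) by ring, Finset.sum_range_add _ k (N + 1)]
  refine le_add_of_nonneg_of_le (Finset.sum_nonneg fun _ _ => by positivity) (le_of_eq ?_)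
  refine Finset.sum_congr rfl fun n _ => ?_
  rw [tl, PowerSeries.coeff_mk, pow_add, add_comm n k]
  ring

/-- The coefficients of the Weierstrass quotient. -/
def wq (k : ℕ) (f p : ℕ → PowerSeries ℂ) : ℕ → PowerSeries ℂ
  | i => tl k (f i - ∑ j : Fin i, wq k f p j * p (i - j))
decreasing_by exact j.2

/-- The series divided by `X ^ k` at each step of the Weierstrass division. -/
def wg (k : ℕ) (f p : ℕ → PowerSeries ℂ) (i : ℕ) : PowerSeries ℂ :=
  f i - ∑ j ∈ Finset.range i, wq k f p j * p (i - j)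

theorem wq_eq (k : ℕ) (f p : ℕ → PowerSeries ℂ) (i : ℕ) : wq k f p i = tl k (wg k f p i) := by
  rw [wq, wg, Finset.sum_range]

theorem wg_bound {k : ℕ} {f p : ℕ → PowerSeries ℂ} {r A R : ℝ} (hr : 0 < r) (hA : 0 < A)
    (hR : 0 < R) (hf : ∀ i N, nrm r N (f i) ≤ A * R ^ i) (hp : ∀ i N, nrm r N (p i) ≤ A * R ^ i)
    (i : ℕ) : ∀ N, nrm r N (wg k f p i) ≤ 2 * A * (R * (1 + 2 * A / r ^ k)) ^ i := by
  set B := 2 * A / r ^ k with hB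
  set K := R * (1 + B) with hK
  have hB0 : 0 < B := by positivity
  have hK0 : 0 < K := by positivity
  have hRK : R ≤ K := by nlinarith
  induction i using Nat.strong_induction_on with
  | _ i ih =>
    intro N
    have hq : ∀ j < i, ∀ N, nrm r N (wq k f p j) ≤ B * K ^ j := by
      intro j hj N
      have h1 := (nrm_tl_le hr.le N k (wg k f p j)).trans (ih j hj (N + k))
      rw [wq_eq, hB, div_mul_eq_mul_div, le_div_iff₀ (by positivity)]
      linarith
    have h1 : nrm r N (∑ j ∈ Finset.range i, wq k f p j * p (i - j)) ≤
        ∑ j ∈ Finset.range i, (B * K ^ j) * (A * R ^ (i - j)) := by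
      refine (nrm_sum_le hr.le N _ _).trans (Finset.sum_le_sum fun j hj => ?_)
      refine (nrm_mul_le hr.le N _ _).trans ?_
      exact mul_le_mul (hq j (Finset.mem_range.1 hj) N) (hp _ N) (nrm_nonneg hr.le _ _)
        (by positivity)
    have h2 : ∑ j ∈ Finset.range i, (B * K ^ j) * (A * R ^ (i - j)) = A * (K ^ i - R ^ i) := by
      rw [← geom_sum₂_mul K R i, Finset.sum_mul, Finset.mul_sum]
      refine Finset.sum_congr rfl fun j hj => ?_
      rw [show i - j = (i - 1 - j) + 1 by have := Finset.mem_range.1 hj; lia, pow_succ,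
        show K - R = R * B by rw [hK]; ring]
      ring
    have h3 : nrm r N (wg k f p i) ≤ A * R ^ i + A * (K ^ i - R ^ i) := by
      rw [wg, sub_eq_add_neg]
      refine (nrm_add_le hr.le N _ _).trans (add_le_add (hf i N) ?_)
      rw [nrm_neg]
      exact h1.trans h2.le
    have h4 : 0 ≤ A * K ^ i := by positivity
    linarith

theorem conv_of_nrm {g : ℕ → PowerSeries ℂ} {r D K : ℝ} (hr : 0 < r) (hD : 0 < D) (hK : 0 < K)
    (h : ∀ i N, nrm r N (g i) ≤ D * K ^ i) : Conv fun i n => PowerSeries.coeff n (g i) := by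
  refine ⟨D, max K (1 / r), hD, by positivity, fun i n => ?_⟩
  have h1 : ‖PowerSeries.coeff n (g i)‖ * r ^ n ≤ D * K ^ i :=
    (Finset.single_le_sum (f := fun n => ‖PowerSeries.coeff n (g i)‖ * r ^ n)
      (fun _ _ => by positivity) (Finset.self_mem_range_succ n)).trans (h i n)
  calc ‖PowerSeries.coeff n (g i)‖ ≤ D * K ^ i * (1 / r) ^ n := by
        rw [one_div, inv_pow, ← div_eq_mul_inv, le_div_iff₀ (by positivity)]; exact h1
    _ ≤ D * (max K (1 / r)) ^ i * (max K (1 / r)) ^ n := by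
        gcongr
        · exact le_max_left _ _
        · exact le_max_right _ _
    _ = _ := by rw [pow_add]; ring

theorem nrm_of_bound {a : ℕ → ℕ → ℂ} {C R : ℝ} (hC : 0 < C) (hR : 0 < R)
    (h : ∀ i j, ‖a i j‖ ≤ C * R ^ (i + j)) (i N : ℕ) :
    nrm (1 / (2 * R)) N (PowerSeries.mk (a i)) ≤ 2 * C * R ^ i := by
  rw [nrm]
  calc _ ≤ ∑ n ∈ Finset.range (N + 1), C * R ^ i * (1 / 2 : ℝ) ^ n := by
        refine Finset.sum_le_sum fun n _ => ?_
        rw [PowerSeries.coeff_mk]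
        calc _ ≤ C * R ^ (i + n) * (1 / (2 * R)) ^ n := by gcongr; exact h i n
          _ = C * R ^ i * (R * (1 / (2 * R))) ^ n := by rw [mul_pow, pow_add]; ring
          _ = _ := by congr 2; field_simp
    _ ≤ C * R ^ i * 2 := by
        rw [← Finset.mul_sum]
        gcongr
        exact geom_le (by norm_num) le_rfl _
    _ = _ := by ring

/-- Convergent Weierstrass division, on the level of coefficients. -/
theorem weierstrass_core {p f : ℕ → ℕ → ℂ} (k : ℕ) (hp : Conv p) (hf : Conv f)
    (hp0 : PowerSeries.mk (p 0) = PowerSeries.X ^ k) :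
    ∃ q s : ℕ → ℕ → ℂ, Conv q ∧ Conv s ∧ ∀ i, PowerSeries.mk (f i) =
      ∑ jl ∈ Finset.HasAntidiagonal.antidiagonal i,
        PowerSeries.mk (q jl.1) * PowerSeries.mk (p jl.2) +
      ∑ m ∈ Finset.range k, PowerSeries.C (s i m) * PowerSeries.X ^ m := by
  obtain ⟨C, R, hC, hR, hp⟩ := hp
  obtain ⟨C', R', hC', hR', hf⟩ := hf
  set D := max C C'
  set S := max R R'
  have hD : 0 < D := lt_max_of_lt_left hC
  have hS : 0 < S := lt_max_of_lt_left hR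
  have hp' : ∀ i j, ‖p i j‖ ≤ D * S ^ (i + j) := fun i j => (hp i j).trans (by
    gcongr
    · exact le_max_left _ _
    · exact le_max_left _ _)
  have hf' : ∀ i j, ‖f i j‖ ≤ D * S ^ (i + j) := fun i j => (hf i j).trans (by
    gcongr
    · exact le_max_right _ _
    · exact le_max_right _ _)
  set r := 1 / (2 * S)
  have hr : 0 < r := by positivity
  set F : ℕ → PowerSeries ℂ := fun i => PowerSeries.mk (f i)
  set G : ℕ → PowerSeries ℂ := fun i => PowerSeries.mk (p i)
  have hg := wg_bound (k := k) (f := F) (p := G) hr (by positivity : 0 < 2 * D) hS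
    (nrm_of_bound hD hS hf') (nrm_of_bound hD hS hp')
  have hq : ∀ i N, nrm r N (wq k F G i) ≤
      (2 * (2 * D) / r ^ k) * (S * (1 + 2 * (2 * D) / r ^ k)) ^ i := by
    intro i N
    have h1 := (nrm_tl_le hr.le N k (wg k F G i)).trans (hg i (N + k))
    rw [wq_eq, div_mul_eq_mul_div, le_div_iff₀ (by positivity)]
    linarith
  refine ⟨_, _, conv_of_nrm hr (by positivity) (by positivity) hq,
    conv_of_nrm hr (by positivity) (by positivity) hg, fun i => ?_⟩
  have h1 : ∀ i, PowerSeries.mk (fun n => PowerSeries.coeff n (wq k F G i)) = wq k F G i := by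
    intro i; ext; simp
  have h2 := tl_spec k (wg k F G i)
  rw [← wq_eq] at h2
  have h3 : F i = wg k F G i + ∑ j ∈ Finset.range i, wq k F G j * G (i - j) := by
    rw [wg]; ring
  rw [Finset.Nat.sum_antidiagonal_eq_sum_range_succ (fun j l =>
      PowerSeries.mk (fun n => PowerSeries.coeff n (wq k F G j)) * PowerSeries.mk (p l)),
    Finset.sum_range_succ, Nat.sub_self, hp0, h1]
  simp only [h1]
  change F i = _
  rw [h3]
  conv_lhs => rw [h2]
  ring

end

end CamachoSad

namespace CamachoSad
open Filter Topology

noncomputable section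

/-! ### Weierstrass division of germs -/

/-- Summation of a convergent double series by rows. -/
theorem HasExp.rows {a : ℕ → ℕ → ℂ} {F : ℂ × ℂ → ℂ} (h : HasExp a F) :
    ∀ᶠ p in 𝓝 (0 : ℂ × ℂ), ∃ E : ℕ → ℂ, (∀ i, HasSum (fun j => a i j * p.2 ^ j) (E i)) ∧
      HasSum (fun i => E i * p.1 ^ i) (F p) := by
  obtain ⟨⟨C, R, hC, hR, ha⟩, hs⟩ := h
  filter_upwards [hs, eventually_small R] with p hp hsm
  have hrow : ∀ i, Summable fun j => a i j * p.2 ^ j := by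
    intro i
    refine Summable.of_norm_bounded
      ((summable_geometric_of_lt_one (by positivity) hsm.2).mul_left (C * R ^ i)) fun j => ?_
    rw [norm_mul, norm_pow]
    calc _ ≤ C * R ^ (i + j) * ‖p.2‖ ^ j := by gcongr; exact ha i j
      _ = _ := by rw [mul_pow, pow_add]; ring
  refine ⟨_, fun i => (hrow i).hasSum, ?_⟩
  refine hp.prod_fiberwise fun i => ?_
  refine ((hrow i).hasSum.mul_right (p.1 ^ i)).congr_fun fun j => ?_
  simp only [term]
  ring

theorem hasSum_C_mul_X_pow (c y : ℂ) (m : ℕ) :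
    HasSum (fun n => PowerSeries.coeff n (PowerSeries.C c * PowerSeries.X ^ m : PowerSeries ℂ) *
      y ^ n) (c * y ^ m) := by
  have := hasSum_single (f := fun n =>
    PowerSeries.coeff n (PowerSeries.C c * PowerSeries.X ^ m : PowerSeries ℂ) * y ^ n)
    m (fun n hn => by simp [PowerSeries.coeff_X_pow, hn])
  simpa using this

/-- Weierstrass division by a germ whose restriction to `x = 0` is exactly `y ^ k`. -/
theorem weierstrass_monic {P F : ℂ × ℂ → ℂ} (hP : AnalyticAt ℂ P 0) (hF : AnalyticAt ℂ F 0)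
    {k : ℕ} (hk : ps (fun y => P (0, y)) = PowerSeries.X ^ k) :
    ∃ (q : ℂ × ℂ → ℂ) (r : ℕ → ℂ → ℂ), AnalyticAt ℂ q 0 ∧ (∀ m, AnalyticAt ℂ (r m) 0) ∧
      ∀ᶠ p in 𝓝 (0 : ℂ × ℂ), F p = q p * P p + ∑ m ∈ Finset.range k, r m p.1 * p.2 ^ m := by
  obtain ⟨a, ha⟩ := exists_hasExp hP
  obtain ⟨f, hf⟩ := exists_hasExp hF
  rw [ha.ps_eq] at hk
  obtain ⟨q, s, hq, hs, hqs⟩ := weierstrass_core k ha.1 hf.1 hk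
  obtain ⟨C, R, hC, hR, hb⟩ := hs
  have hcol : ∀ m, ∃ y : ℂ → ℂ, AnalyticAt ℂ y 0 ∧
      ∀ᶠ t in 𝓝 (0 : ℂ), HasSum (fun i => s i m * t ^ i) (y t) := fun m =>
    exists_analytic_of_bound (C := C * R ^ m) (by positivity) hR fun i =>
      (hb i m).trans (le_of_eq (by rw [pow_add]; ring))
  choose r hr hrs using hcol
  refine ⟨_, r, hq.hasExp.analyticAt, hr, ?_⟩
  have hr' : ∀ᶠ p in 𝓝 (0 : ℂ × ℂ), ∀ m ∈ Finset.range k,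
      HasSum (fun i => s i m * p.1 ^ i) (r m p.1) := by
    rw [Filter.eventually_all_finset]
    intro m _
    exact (continuous_fst.tendsto (0 : ℂ × ℂ)).eventually (hrs m)
  filter_upwards [ha.rows, hf.rows, hq.hasExp.rows, hr'] with p h1 h2 h3 h4
  obtain ⟨A, hA, hA'⟩ := h1
  obtain ⟨E, hE, hE'⟩ := h2
  obtain ⟨B, hB, hB'⟩ := h3
  have hrow : ∀ i, E i = PowerSeries.coeff i (PowerSeries.mk B * PowerSeries.mk A) +
      ∑ m ∈ Finset.range k, s i m * p.2 ^ m := by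
    intro i
    rw [PowerSeries.coeff_mul]
    simp only [PowerSeries.coeff_mk]
    have e1 : HasSum (fun n => PowerSeries.coeff n (PowerSeries.mk (f i)) * p.2 ^ n) (E i) := by
      simpa using hE i
    have e2 : HasSum (fun n => ∑ jl ∈ Finset.HasAntidiagonal.antidiagonal i,
        PowerSeries.coeff n (PowerSeries.mk (q jl.1) * PowerSeries.mk (a jl.2)) * p.2 ^ n)
        (∑ jl ∈ Finset.HasAntidiagonal.antidiagonal i, B jl.1 * A jl.2) :=
      hasSum_sum fun jl _ => hasSum_coeff_mul (by simpa using hB jl.1) (by simpa using hA jl.2)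
    have e3 : HasSum (fun n => ∑ m ∈ Finset.range k, PowerSeries.coeff n
        (PowerSeries.C (s i m) * PowerSeries.X ^ m : PowerSeries ℂ) * p.2 ^ n)
        (∑ m ∈ Finset.range k, s i m * p.2 ^ m) :=
      hasSum_sum fun m _ => hasSum_C_mul_X_pow _ _ _
    refine e1.unique ((e2.add e3).congr_fun fun n => ?_)
    rw [hqs i, map_add, map_sum, map_sum, add_mul, Finset.sum_mul, Finset.sum_mul]
  have e1 := hasSum_coeff_mul (f := PowerSeries.mk B) (g := PowerSeries.mk A) (y := p.1)
    (by simpa using hB') (by simpa using hA')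
  have e2 : HasSum (fun i => ∑ m ∈ Finset.range k, s i m * p.1 ^ i * p.2 ^ m)
      (∑ m ∈ Finset.range k, r m p.1 * p.2 ^ m) :=
    hasSum_sum fun m hm => (h4 m hm).mul_right _
  refine hE'.unique ((e1.add e2).congr_fun fun i => ?_)
  rw [hrow i, add_mul, Finset.sum_mul]
  congr 1
  exact Finset.sum_congr rfl fun m _ => by ring

theorem ps_pow_id (k : ℕ) : ps (fun y => y ^ k) = PowerSeries.X ^ k := by
  induction k with
  | zero => simpa using ps_const 1
  | succ k ih =>
    rw [pow_succ, ← ih, ← ps_id, ← ps_mul (by fun_prop) (by fun_prop)]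
    rfl

/-- **Weierstrass division** by a germ which is of order `k` on the line `x = 0`. -/
theorem weierstrass_division {P F : ℂ × ℂ → ℂ} (hP : AnalyticAt ℂ P 0) (hF : AnalyticAt ℂ F 0)
    {k : ℕ} {v : ℂ → ℂ} (hv : AnalyticAt ℂ v 0) (hv0 : v 0 ≠ 0)
    (hk : ∀ᶠ y in 𝓝 (0 : ℂ), P (0, y) = y ^ k * v y) :
    ∃ (q : ℂ × ℂ → ℂ) (r : ℕ → ℂ → ℂ), AnalyticAt ℂ q 0 ∧ (∀ m, AnalyticAt ℂ (r m) 0) ∧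
      ∀ᶠ p in 𝓝 (0 : ℂ × ℂ), F p = q p * P p + ∑ m ∈ Finset.range k, r m p.1 * p.2 ^ m := by
  have hv2 : AnalyticAt ℂ (fun p : ℂ × ℂ => v p.2) 0 :=
    AnalyticAt.fun_comp (g := v) (f := Prod.snd) hv analyticAt_snd
  have hvi := hv2.inv hv0
  have hne := hv.continuousAt.eventually_ne hv0
  obtain ⟨q, r, hq, hr, h⟩ := weierstrass_monic (k := k) (hP.mul hvi) hF (by
    rw [← ps_pow_id]
    apply ps_congr
    filter_upwards [hk, hne] with y h1 h2
    simp only [Pi.mul_apply, Pi.inv_apply]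
    rw [h1, mul_inv_cancel_right₀ h2])
  refine ⟨_, r, hq.mul hvi, hr, ?_⟩
  filter_upwards [h] with p hp
  rw [hp]
  simp only [Pi.mul_apply]
  ring

theorem exists_order {g : ℂ → ℂ} (hg : AnalyticAt ℂ g 0) (h : ¬ ∀ᶠ y in 𝓝 (0 : ℂ), g y = 0) :
    ∃ (k : ℕ) (v : ℂ → ℂ), AnalyticAt ℂ v 0 ∧ v 0 ≠ 0 ∧ ∀ᶠ y in 𝓝 (0 : ℂ), g y = y ^ k * v y := by
  obtain ⟨n, v, h1, h2, h3⟩ := hg.exists_eventuallyEq_pow_smul_nonzero_iff.2 h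
  exact ⟨n, v, h1, h2, by simpa using h3⟩

end

end CamachoSad

namespace CamachoSad
open Filter Topology

noncomputable section

/-! ### An isolated common zero generates a cofinite ideal -/

/-- Functions on `ℂ` that are analytic at the origin. -/
def An1 : Subalgebra ℂ (ℂ → ℂ) where
  carrier := {f | AnalyticAt ℂ f 0}
  mul_mem' := fun hf hg => AnalyticAt.mul hf hg
  add_mem' := fun hf hg => AnalyticAt.add hf hg
  algebraMap_mem' := fun _ => analyticAt_const

theorem an_fst {f : ℂ → ℂ} (hf : AnalyticAt ℂ f 0) : AnalyticAt ℂ (fun p : ℂ × ℂ => f p.1) 0 :=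
  AnalyticAt.fun_comp (g := f) (f := Prod.fst) hf analyticAt_fst

/-- A function of `x` as a germ on `ℂ²`. -/
def ofX : An1 →+* Germ2 where
  toFun f := germ (fun p => f.1 p.1) (an_fst f.2)
  map_one' := rfl
  map_mul' _ _ := rfl
  map_zero' := rfl
  map_add' _ _ := rfl

theorem germ_add {F G : ℂ × ℂ → ℂ} (hF : AnalyticAt ℂ F 0) (hG : AnalyticAt ℂ G 0) :
    germ F hF + germ G hG = germ (F + G) (hF.add hG) := rfl

theorem germ_sub {F G : ℂ × ℂ → ℂ} (hF : AnalyticAt ℂ F 0) (hG : AnalyticAt ℂ G 0) :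
    germ F hF - germ G hG = germ (F - G) (hF.sub hG) := rfl

theorem germ_mul {F G : ℂ × ℂ → ℂ} (hF : AnalyticAt ℂ F 0) (hG : AnalyticAt ℂ G 0) :
    germ F hF * germ G hG = germ (F * G) (hF.mul hG) := rfl

theorem germ_pow {F : ℂ × ℂ → ℂ} (hF : AnalyticAt ℂ F 0) (n : ℕ) :
    germ F hF ^ n = germ (F ^ n) (hF.pow n) := rfl

theorem an_polyY {r : ℕ → ℂ → ℂ} (hr : ∀ m, AnalyticAt ℂ (r m) 0) (k : ℕ) :
    AnalyticAt ℂ (fun p : ℂ × ℂ => ∑ m ∈ Finset.range k, r m p.1 * p.2 ^ m) 0 :=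
  Finset.analyticAt_fun_sum _ fun m _ => (an_fst (hr m)).mul (analyticAt_snd.pow m)

theorem germ_polyY {r : ℕ → ℂ → ℂ} (hr : ∀ m, AnalyticAt ℂ (r m) 0) (k : ℕ) :
    germ (fun p : ℂ × ℂ => ∑ m ∈ Finset.range k, r m p.1 * p.2 ^ m) (an_polyY hr k) =
      ∑ m ∈ Finset.range k, ofX ⟨r m, hr m⟩ * germModel.y ^ m := by
  induction k with
  | zero => rfl
  | succ k ih =>
    rw [Finset.sum_range_succ, ← ih]
    change _ = germ _ _ + germ _ _ * germ _ _ ^ k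
    rw [germ_pow, germ_mul, germ_add, germ_eq_iff]
    exact Eventually.of_forall fun p => Finset.sum_range_succ _ _

/-- Evaluation of functions at a point. -/
def evalAt (x : ℂ) : An1 →+* ℂ := (Pi.evalRingHom (fun _ : ℂ => ℂ) x).comp An1.val.toRingHom

/-- The polynomial `∑ m < k, r m y ^ m`. -/
def polyY {r : ℕ → ℂ → ℂ} (hr : ∀ m, AnalyticAt ℂ (r m) 0) (k : ℕ) : Polynomial An1 :=
  ∑ m ∈ Finset.range k, Polynomial.C (⟨r m, hr m⟩ : An1) * Polynomial.X ^ m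

theorem degree_polyY {r : ℕ → ℂ → ℂ} (hr : ∀ m, AnalyticAt ℂ (r m) 0) (k : ℕ) :
    (polyY hr k).degree < k := by
  rw [polyY, ← Polynomial.mem_degreeLT]
  refine Submodule.sum_mem _ fun m hm => ?_
  rw [Polynomial.mem_degreeLT]
  exact (Polynomial.degree_C_mul_X_pow_le _ _).trans_lt (by exact_mod_cast Finset.mem_range.1 hm)

theorem eval_polyY {r : ℕ → ℂ → ℂ} (hr : ∀ m, AnalyticAt ℂ (r m) 0) (k : ℕ) (x y : ℂ) :
    ((polyY hr k).map (evalAt x)).eval y = ∑ m ∈ Finset.range k, r m x * y ^ m := by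
  simp only [polyY, Polynomial.map_sum, Polynomial.map_mul, Polynomial.map_C, Polynomial.map_pow,
    Polynomial.map_X, Polynomial.eval_finsetSum, Polynomial.eval_mul, Polynomial.eval_C,
    Polynomial.eval_pow, Polynomial.eval_X]
  rfl

theorem eval₂_polyY {r : ℕ → ℂ → ℂ} (hr : ∀ m, AnalyticAt ℂ (r m) 0) (k : ℕ) :
    (polyY hr k).eval₂ ofX germModel.y =
      germ (fun p : ℂ × ℂ => ∑ m ∈ Finset.range k, r m p.1 * p.2 ^ m) (an_polyY hr k) := by
  rw [germ_polyY hr]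
  simp [polyY, Polynomial.eval₂_finsetSum]

/-- The roots of a monic polynomial with small lower coefficients are small. -/
theorem root_small {k : ℕ} {c : ℕ → ℂ} {y : ℂ} {δ : ℝ} (hδ : 0 < δ) (hδ1 : δ ≤ 1)
    (hc : ∑ m ∈ Finset.range k, ‖c m‖ < δ ^ k)
    (hy : y ^ k = ∑ m ∈ Finset.range k, c m * y ^ m) : ‖y‖ < δ := by
  by_contra! h
  have hy0 : 0 < ‖y‖ := hδ.trans_le h
  have h1 : ‖y‖ ^ k * δ ^ k ≤ (∑ m ∈ Finset.range k, ‖c m‖) * ‖y‖ ^ k := by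
    calc ‖y‖ ^ k * δ ^ k = ‖∑ m ∈ Finset.range k, c m * y ^ m‖ * δ ^ k := by
          rw [← hy, norm_pow]
      _ ≤ (∑ m ∈ Finset.range k, ‖c m * y ^ m‖) * δ ^ k := by gcongr; exact norm_sum_le _ _
      _ = ∑ m ∈ Finset.range k, ‖c m‖ * (‖y‖ ^ m * δ ^ k) := by
          rw [Finset.sum_mul]
          exact Finset.sum_congr rfl fun m _ => by rw [norm_mul, norm_pow]; ring
      _ ≤ ∑ m ∈ Finset.range k, ‖c m‖ * ‖y‖ ^ k := by
          refine Finset.sum_le_sum fun m hm => ?_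
          have hm := Finset.mem_range.1 hm
          gcongr
          calc ‖y‖ ^ m * δ ^ k ≤ ‖y‖ ^ m * δ ^ (k - m) := by
                gcongr ?_ * ?_
                exact pow_le_pow_of_le_one hδ.le hδ1 (Nat.sub_le _ _)
            _ ≤ ‖y‖ ^ m * ‖y‖ ^ (k - m) := by gcongr
            _ = ‖y‖ ^ k := by rw [← pow_add, Nat.add_sub_cancel' hm.le]
      _ = _ := by rw [Finset.sum_mul]
  have h2 : 0 < ‖y‖ ^ k := by positivity
  nlinarith

theorem ps_polyY (c : ℕ → ℂ) (k : ℕ) : ps (fun y => ∑ m ∈ Finset.range k, c m * y ^ m) =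
    PowerSeries.mk fun m => if m < k then c m else 0 := by
  refine ps_unique (Eventually.of_forall fun y => ?_)
  have : HasSum (fun m => (if m < k then c m else 0) * y ^ m)
      (∑ m ∈ Finset.range k, (if m < k then c m else 0) * y ^ m) :=
    hasSum_sum_of_ne_finset_zero (fun m hm => by
      rw [Finset.mem_range] at hm
      simp [hm])
  rw [Finset.sum_congr rfl fun m hm => by rw [if_pos (Finset.mem_range.1 hm)]] at this
  exact this

/-- The Weierstrass polynomial `y ^ k - ∑ r m y ^ m = q P` of a germ of order `k` on `x = 0`:
the `r m` vanish at `0`, and `q` does not. -/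
theorem weierstrass_preparation {P : ℂ × ℂ → ℂ} (hP : AnalyticAt ℂ P 0)
    {k : ℕ} {v : ℂ → ℂ} (hv : AnalyticAt ℂ v 0) (hv0 : v 0 ≠ 0)
    (hk : ∀ᶠ y in 𝓝 (0 : ℂ), P (0, y) = y ^ k * v y) :
    ∃ (q : ℂ × ℂ → ℂ) (r : ℕ → ℂ → ℂ), AnalyticAt ℂ q 0 ∧ (∀ m, AnalyticAt ℂ (r m) 0) ∧
      q 0 ≠ 0 ∧ (∀ m < k, r m 0 = 0) ∧
      ∀ᶠ p in 𝓝 (0 : ℂ × ℂ), p.2 ^ k = q p * P p + ∑ m ∈ Finset.range k, r m p.1 * p.2 ^ m := by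
  obtain ⟨q, r, hq, hr, h⟩ := weierstrass_division hP (F := fun p => p.2 ^ k)
    (analyticAt_snd.pow k) hv hv0 hk
  have h0 := tendsto_inr.eventually h
  have hqv : AnalyticAt ℂ (fun y => q (0, y) * v y) 0 := (an_restrict hq).mul hv
  have hpow : AnalyticAt ℂ (fun y : ℂ => y ^ k) 0 := by fun_prop
  have hsum : AnalyticAt ℂ (fun y : ℂ => ∑ m ∈ Finset.range k, r m 0 * y ^ m) 0 := by fun_prop
  have e : PowerSeries.X ^ k = PowerSeries.X ^ k * ps (fun y => q (0, y) * v y) +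
      PowerSeries.mk fun m => if m < k then r m 0 else 0 := by
    rw [← ps_polyY, ← ps_pow_id, ← ps_mul hpow hqv, ← ps_add (hpow.mul hqv) hsum]
    apply ps_congr
    filter_upwards [h0, hk] with y h1 h2
    simp only [Pi.add_apply, Pi.mul_apply]
    conv_lhs => rw [h1]
    rw [h2]
    ring
  have hr0 : ∀ m < k, r m 0 = 0 := by
    intro m hm
    have := congrArg (PowerSeries.coeff m) e
    rw [map_add, PowerSeries.coeff_X_pow_mul', PowerSeries.coeff_X_pow, PowerSeries.coeff_mk,
      if_pos hm, if_neg hm.ne, if_neg (not_le.2 hm), zero_add] at this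
    exact this.symm
  refine ⟨q, r, hq, hr, fun hq0 => ?_, hr0, h⟩
  have := congrArg (PowerSeries.coeff k) e
  rw [map_add, PowerSeries.coeff_X_pow_mul', PowerSeries.coeff_X_pow, PowerSeries.coeff_mk,
    if_pos rfl, if_pos le_rfl, if_neg (lt_irrefl k), Nat.sub_self,
    PowerSeries.coeff_zero_eq_constantCoeff_apply, constantCoeff_ps, Prod.mk_zero_zero, hq0] at this
  simp at this

/-- The case in which `P` does not vanish identically on `x = 0`. Dividing `Q` by the Weierstrass
polynomial of `P`, the resultant of the two polynomials in `y` lies in the ideal `(P, Q)` and is, up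
to a unit, a power of `x`. -/
theorem cof_of_isolated_aux {P Q : ℂ × ℂ → ℂ} (hP : AnalyticAt ℂ P 0) (hQ : AnalyticAt ℂ Q 0)
    (hP0 : P 0 = 0) (hiso : ∀ᶠ p in 𝓝 (0 : ℂ × ℂ), p ≠ 0 → P p ≠ 0 ∨ Q p ≠ 0)
    (hPy : ¬ ∀ᶠ y in 𝓝 (0 : ℂ), P (0, y) = 0) :
    germModel.Cof (Ideal.span {germ P hP, germ Q hQ}) := by
  obtain ⟨k, v, hv, hv0, hk⟩ := exists_order (an_restrict hP) hPy
  have hk0 : k ≠ 0 := by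
    rintro rfl
    have := hk.self_of_nhds
    rw [pow_zero, one_mul, Prod.mk_zero_zero, hP0] at this
    exact hv0 this.symm
  obtain ⟨q, r, hq, hr, hq0, hr0, hw⟩ := weierstrass_preparation hP hv hv0 hk
  obtain ⟨q', s, hq', hs, hw'⟩ := weierstrass_division hP hQ hv hv0 hk
  set W : Polynomial An1 := Polynomial.X ^ k - polyY hr k with hW
  set G : Polynomial An1 := polyY hs k with hG
  have hWm : W.Monic := Polynomial.monic_X_pow_sub (degree_polyY hr k)
  have hWd : W.natDegree = k := by
    have := Polynomial.natDegree_eq_of_degree_eq (Polynomial.degree_sub_eq_left_of_degree_lt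
      (p := Polynomial.X ^ k) (q := polyY hr k) (by
        rw [Polynomial.degree_X_pow]; exact degree_polyY hr k))
    rwa [Polynomial.natDegree_X_pow] at this
  have hGd : G.natDegree ≤ k := Polynomial.natDegree_le_of_degree_le (degree_polyY hs k).le
  set R : An1 := W.resultant G k k with hR
  obtain ⟨p1, p2, -, -, hres⟩ := Polynomial.exists_mul_add_mul_eq_C_resultant (m := k) (n := k)
    W G hWd.le hGd (Or.inl hk0)
  -- The resultant does not vanish off `x = 0`, since a common root would be a common zero.
  have hRne : ∀ᶠ x in 𝓝 (0 : ℂ), x ≠ 0 → R.1 x ≠ 0 := by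
    have hgood := ((hw.and hw').and (hq.continuousAt.eventually_ne hq0)).and hiso
    obtain ⟨ε, hε, hball⟩ := Metric.eventually_nhds_iff_ball.1 hgood
    set δ := min ε 1 with hδ
    have hδ0 : 0 < δ := lt_min hε one_pos
    have hsm : ∀ᶠ x in 𝓝 (0 : ℂ), ∑ m ∈ Finset.range k, ‖r m x‖ < δ ^ k := by
      have hc : ContinuousAt (fun x => ∑ m ∈ Finset.range k, ‖r m x‖) 0 :=
        tendsto_finsetSum _ fun m _ => (hr m).continuousAt.norm
      refine hc.eventually_lt_const ?_
      have h0 : ∑ m ∈ Finset.range k, ‖r m 0‖ = 0 :=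
        Finset.sum_eq_zero fun m hm => by rw [hr0 m (Finset.mem_range.1 hm), norm_zero]
      change ∑ m ∈ Finset.range k, ‖r m 0‖ < δ ^ k
      rw [h0]
      positivity
    filter_upwards [hsm, Metric.ball_mem_nhds (0 : ℂ) hε] with x hx hxε hx0 hRx
    have e1 : (W.map (evalAt x)).resultant (G.map (evalAt x)) k k = 0 := by
      rw [Polynomial.resultant_map_map]; exact hRx
    have hd : (W.map (evalAt x)).natDegree = k := by rw [hWm.natDegree_map, hWd]
    have e2 := Polynomial.resultant_eq_prod_eval (W.map (evalAt x)) (G.map (evalAt x)) k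
      (Polynomial.natDegree_map_le.trans hGd) (IsAlgClosed.splits _)
    rw [hd, e1, (hWm.map _).leadingCoeff, one_pow, one_mul] at e2
    obtain ⟨y, hy, hGy⟩ := Multiset.mem_map.1 (Multiset.prod_eq_zero_iff.1 e2.symm)
    have hWy := Polynomial.isRoot_of_mem_roots hy
    rw [Polynomial.IsRoot, hW, Polynomial.map_sub, Polynomial.eval_sub, eval_polyY,
      Polynomial.map_pow, Polynomial.map_X, Polynomial.eval_pow, Polynomial.eval_X,
      sub_eq_zero] at hWy
    rw [hG, eval_polyY] at hGy
    have hyδ := root_small hδ0 (min_le_right _ _) hx hWy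
    have hmem : (x, y) ∈ Metric.ball (0 : ℂ × ℂ) ε := by
      rw [mem_ball_zero_iff, Prod.norm_mk, max_lt_iff]
      exact ⟨by simpa using hxε, hyδ.trans_le (min_le_left _ _)⟩
    obtain ⟨⟨⟨f1, f2⟩, f3⟩, f4⟩ := hball _ hmem
    dsimp only at f1 f2
    rw [hWy] at f1
    have hPz : P (x, y) = 0 := by
      have : q (x, y) * P (x, y) = 0 := by linear_combination -f1
      exact (mul_eq_zero.1 this).resolve_left f3
    rw [hPz, mul_zero, zero_add, hGy] at f2
    rcases f4 (fun h => hx0 (congrArg Prod.fst h)) with h | h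
    · exact h hPz
    · exact h f2
  have hRz : ¬ ∀ᶠ x in 𝓝 (0 : ℂ), R.1 x = 0 := by
    intro h
    have h1 : ∀ᶠ x in 𝓝[≠] (0 : ℂ), False := by
      filter_upwards [h.filter_mono nhdsWithin_le_nhds, hRne.filter_mono nhdsWithin_le_nhds,
        self_mem_nhdsWithin] with x h1 h2 h3 using h2 h3 h1
    exact h1.exists.elim fun _ h => h
  obtain ⟨N, u, hu, hu0, hRu⟩ := exists_order R.2 hRz
  set I := Ideal.span {germ P hP, germ Q hQ} with hI
  have hPI : germ P hP ∈ I := Ideal.subset_span (by simp)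
  have hQI : germ Q hQ ∈ I := Ideal.subset_span (by simp)
  have hWI : W.eval₂ ofX germModel.y ∈ I := by
    have : W.eval₂ ofX germModel.y = germ q hq * germ P hP := by
      rw [hW, Polynomial.eval₂_sub, eval₂_polyY, Polynomial.eval₂_X_pow]
      refine germ_eq_iff (hF := (analyticAt_snd.pow k).sub (an_polyY hr k)) (hG := hq.mul hP).2 ?_
      filter_upwards [hw] with p hp
      simp only [Pi.sub_apply, Pi.pow_apply, Pi.mul_apply]
      rw [hp]
      ring
    rw [this]
    exact I.mul_mem_left _ hPI
  have hGI : G.eval₂ ofX germModel.y ∈ I := by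
    have : G.eval₂ ofX germModel.y = germ Q hQ - germ q' hq' * germ P hP := by
      rw [hG, eval₂_polyY]
      refine germ_eq_iff (hF := an_polyY hs k) (hG := hQ.sub (hq'.mul hP)).2 ?_
      filter_upwards [hw'] with p hp
      simp only [Pi.sub_apply, Pi.mul_apply]
      rw [hp]
      ring
    rw [this]
    exact I.sub_mem hQI (I.mul_mem_left _ hPI)
  have hRI : ofX R ∈ I := by
    have := congrArg (Polynomial.eval₂ ofX germModel.y) hres
    rw [Polynomial.eval₂_add, Polynomial.eval₂_mul, Polynomial.eval₂_mul,
      Polynomial.eval₂_C] at this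
    rw [← this]
    exact I.add_mem (I.mul_mem_right _ hWI) (I.mul_mem_right _ hGI)
  have hxu : ofX R = germModel.x ^ N * germ _ (an_fst hu) := by
    refine germ_eq_iff (hF := an_fst R.2) (hG := (analyticAt_fst.pow N).mul (an_fst hu)).2 ?_
    filter_upwards [(continuous_fst.tendsto (0 : ℂ × ℂ)).eventually hRu] with p hp
    exact hp
  have hunit : IsUnit (germ _ (an_fst hu)) := germModel.isUnit_of_ev _ (by
    change PowerSeries.constantCoeff (rho _) ≠ 0
    rw [rho_germ, constantCoeff_ps]
    exact hu0)
  have hxI : germModel.x ^ N ∈ I := by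
    rw [hxu] at hRI
    exact (Ideal.mul_unit_mem_iff_mem I hunit).1 hRI
  refine germModel.cof_of hxI hPI fun h => hPy ?_
  exact eventually_zero_of_ps (an_restrict hP) h

/-- Two germs with an isolated common zero generate a cofinite ideal. -/
theorem cof_of_isolated {P Q : ℂ × ℂ → ℂ} (hP : AnalyticAt ℂ P 0) (hQ : AnalyticAt ℂ Q 0)
    (hP0 : P 0 = 0) (hQ0 : Q 0 = 0)
    (hiso : ∀ᶠ p in 𝓝 (0 : ℂ × ℂ), p ≠ 0 → P p ≠ 0 ∨ Q p ≠ 0) :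
    germModel.Cof (Ideal.span {germ P hP, germ Q hQ}) := by
  by_cases h1 : ∀ᶠ y in 𝓝 (0 : ℂ), P (0, y) = 0
  swap
  · exact cof_of_isolated_aux hP hQ hP0 hiso h1
  by_cases h2 : ∀ᶠ y in 𝓝 (0 : ℂ), Q (0, y) = 0
  swap
  · rw [Set.pair_comm]
    exact cof_of_isolated_aux hQ hP hQ0 (hiso.mono fun p hp h => (hp h).symm) h2
  have h3 : ∀ᶠ y in 𝓝[≠] (0 : ℂ), False := by
    filter_upwards [h1.filter_mono nhdsWithin_le_nhds, h2.filter_mono nhdsWithin_le_nhds,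
      (tendsto_inr.eventually hiso).filter_mono nhdsWithin_le_nhds,
      self_mem_nhdsWithin] with y h1 h2 h3 h4
    rcases h3 (fun h => h4 (congrArg Prod.snd h)) with h | h
    · exact h h1
    · exact h h2
  exact h3.exists.elim fun _ h => h.elim

end

end CamachoSad

namespace CamachoSad
open Filter Topology

noncomputable section

/-! ### From a parametrised curve to its equation -/

/-- The equation of a parametrised curve, as the characteristic polynomial of multiplication by
`Y` on the `ℂ{X}`-module `ℂ{t}`, which Weierstrass division presents with generators
`1, t, …, t ^ (n - 1)`. -/
theorem exists_vanishing {X Y : ℂ → ℂ} (h : IsCurve X Y) (hX : ∀ᶠ t in 𝓝[≠] (0 : ℂ), X t ≠ 0) :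
    ∃ f : ℂ × ℂ → ℂ, AnalyticAt ℂ f 0 ∧ (∀ᶠ t in 𝓝 (0 : ℂ), f (X t, Y t) = 0) ∧
      ¬ ∀ᶠ y in 𝓝 (0 : ℂ), f (0, y) = 0 := by
  obtain ⟨hXa, hYa, hX0, hY0⟩ := h
  have hXz : ¬ ∀ᶠ t in 𝓝 (0 : ℂ), X t = 0 := fun hz =>
    ((hz.filter_mono nhdsWithin_le_nhds).and hX).exists.elim fun _ h => h.2 h.1
  obtain ⟨n, v, hv, hv0, hn⟩ := exists_order hXa hXz
  have hn0 : n ≠ 0 := by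
    rintro rfl
    have := hn.self_of_nhds
    rw [hX0, pow_zero, one_mul] at this
    exact hv0 this.symm
  have hsnd : ∀ {g : ℂ → ℂ}, AnalyticAt ℂ g 0 → AnalyticAt ℂ (fun p : ℂ × ℂ => g p.2) 0 :=
    fun {g} hg => AnalyticAt.fun_comp (g := g) (f := Prod.snd) hg analyticAt_snd
  have hW : AnalyticAt ℂ (fun p : ℂ × ℂ => X p.2 - p.1) 0 := (hsnd hXa).sub analyticAt_fst
  have hdiv := fun i : ℕ => weierstrass_division hW (F := fun p => p.2 ^ i * Y p.2)
    ((analyticAt_snd.pow i).mul (hsnd hYa)) hv hv0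
    (hn.mono fun y hy => by simpa using hy)
  choose q r hq hr hqr using hdiv
  refine ⟨fun p => (Matrix.of fun i j : Fin n => (if i = j then p.2 else 0) - r i j p.1).det,
    ?_, ?_, ?_⟩
  · simp only [Matrix.det_apply, Matrix.of_apply]
    refine Finset.analyticAt_fun_sum _ fun σ _ => ?_
    refine AnalyticAt.const_smul (Finset.analyticAt_fun_prod _ fun i _ => ?_)
    refine AnalyticAt.sub ?_ (an_fst (hr _ _))
    split_ifs
    · exact analyticAt_snd
    · exact analyticAt_const
  · have ht : Tendsto (fun t => (X t, t)) (𝓝 (0 : ℂ)) (𝓝 (0 : ℂ × ℂ)) := by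
      have : ContinuousAt (fun t => (X t, t)) 0 := hXa.continuousAt.prodMk continuousAt_id
      simpa only [ContinuousAt, hX0, Prod.mk_zero_zero] using this
    have hall : ∀ᶠ t in 𝓝 (0 : ℂ), ∀ i : Fin n, t ^ (i : ℕ) * Y t =
        ∑ m ∈ Finset.range n, r i m (X t) * t ^ m := by
      rw [eventually_all]
      intro i
      filter_upwards [ht.eventually (hqr i)] with t h1
      simpa using h1
    filter_upwards [hall] with t h1
    refine Matrix.exists_mulVec_eq_zero_iff.1 ⟨fun i : Fin n => t ^ (i : ℕ), fun hz => ?_, ?_⟩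
    · have := congrFun hz ⟨0, Nat.pos_of_ne_zero hn0⟩
      simp at this
    · funext i
      have h2 := h1 i
      rw [← Fin.sum_univ_eq_sum_range (fun m => r i m (X t) * t ^ m)] at h2
      simp only [Matrix.mulVec, dotProduct, Matrix.of_apply, sub_mul, Finset.sum_sub_distrib,
        ite_mul, zero_mul, Finset.sum_ite_eq, Finset.mem_univ, if_true, Pi.zero_apply]
      rw [← h2]
      ring
  · intro hz
    set M : Matrix (Fin n) (Fin n) ℂ := Matrix.of fun i j => r i j 0
    have h1 : ∀ᶠ y in 𝓝[≠] (0 : ℂ), y ∈ {y | M.charpoly.IsRoot y} := by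
      filter_upwards [hz.filter_mono nhdsWithin_le_nhds] with y hy
      rw [Polynomial.IsRoot, Matrix.eval_charpoly, ← hy]
      congr 1
    have h2 := Polynomial.finite_setOfPred_isRoot M.charpoly_monic.ne_zero
    have h3 : {y | M.charpoly.IsRoot y} ∪ {0} ∈ 𝓝 (0 : ℂ) := by
      filter_upwards [eventually_nhdsWithin_iff.1 h1] with y hy
      by_cases h : y = 0
      · exact Or.inr h
      · exact Or.inl (hy h)
    exact infinite_of_mem_nhds (0 : ℂ) h3 (h2.union (Set.finite_singleton 0))

theorem exists_div_id {g : ℂ → ℂ} (hg : AnalyticAt ℂ g 0) (h0 : g 0 = 0) :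
    ∃ g', AnalyticAt ℂ g' 0 ∧ ∀ x, g x = x * g' x := by
  obtain ⟨p, hp⟩ := hg
  refine ⟨dslope g 0, hp.has_fpower_series_dslope_fslope.analyticAt, fun x => ?_⟩
  have := sub_smul_dslope g 0 x
  rw [h0, sub_zero, sub_zero, smul_eq_mul] at this
  exact this.symm

/-- A polynomial in `y` of degree below the minimal order `k` that vanishes on the curve has
all its coefficients zero at `x = 0`. -/
theorem coeff_at_zero_of_vanishing {X Y : ℂ → ℂ} {k : ℕ}
    (hmin : ∀ f : ℂ × ℂ → ℂ, AnalyticAt ℂ f 0 → (∀ᶠ t in 𝓝 (0 : ℂ), f (X t, Y t) = 0) →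
      ∀ (j : ℕ) (v : ℂ → ℂ), AnalyticAt ℂ v 0 → v 0 ≠ 0 →
        (∀ᶠ y in 𝓝 (0 : ℂ), f (0, y) = y ^ j * v y) → k ≤ j)
    {r : ℕ → ℂ → ℂ} (hr : ∀ m, AnalyticAt ℂ (r m) 0)
    (hrz : ∀ᶠ t in 𝓝 (0 : ℂ), ∑ m ∈ Finset.range k, r m (X t) * Y t ^ m = 0)
    (m₀ : ℕ) (hm₀ : m₀ < k) : r m₀ 0 = 0 := by
  by_contra hr0
  -- The restriction to `x = 0` is a nonzero polynomial of degree `< k`.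
  have hs : AnalyticAt ℂ (fun y : ℂ => ∑ m ∈ Finset.range k, r m 0 * y ^ m) 0 := by fun_prop
  have hps := ps_polyY (fun m => r m 0) k
  have hnz : ¬ ∀ᶠ y in 𝓝 (0 : ℂ), ∑ m ∈ Finset.range k, r m 0 * y ^ m = 0 := by
    intro hz
    have h1 : ps (fun y => ∑ m ∈ Finset.range k, r m 0 * y ^ m) = ps (fun _ => 0) :=
      ps_congr hz
    rw [hps, ps_const, map_zero] at h1
    have := congrArg (PowerSeries.coeff m₀) h1
    rw [PowerSeries.coeff_mk, if_pos hm₀, map_zero] at this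
    exact hr0 this
  obtain ⟨j, w, hw, hw0, hj⟩ := exists_order hs hnz
  have hkj := hmin _ (an_polyY hr k) hrz j w hw hw0 hj
  have hpow : AnalyticAt ℂ (fun y : ℂ => y ^ j) 0 := by fun_prop
  have h1 : ps (fun y => ∑ m ∈ Finset.range k, r m 0 * y ^ m) = PowerSeries.X ^ j * ps w := by
    rw [← ps_pow_id, ← ps_mul hpow hw]
    exact ps_congr hj
  rw [hps] at h1
  have := congrArg (PowerSeries.coeff m₀) h1
  rw [PowerSeries.coeff_mk, if_pos hm₀, PowerSeries.coeff_X_pow_mul',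
    if_neg (not_le.2 (hm₀.trans_le hkj))] at this
  exact hr0 this

/-- No nonzero polynomial in `y` of degree below the minimal order `k` vanishes on the curve. -/
theorem coeff_zero_of_vanishing {X Y : ℂ → ℂ} (hX : ∀ᶠ t in 𝓝[≠] (0 : ℂ), X t ≠ 0)
    (hc : IsCurve X Y) {k : ℕ}
    (hmin : ∀ f : ℂ × ℂ → ℂ, AnalyticAt ℂ f 0 → (∀ᶠ t in 𝓝 (0 : ℂ), f (X t, Y t) = 0) →
      ∀ (j : ℕ) (v : ℂ → ℂ), AnalyticAt ℂ v 0 → v 0 ≠ 0 →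
        (∀ᶠ y in 𝓝 (0 : ℂ), f (0, y) = y ^ j * v y) → k ≤ j)
    (N : ℕ) : ∀ r : ℕ → ℂ → ℂ, (∀ m, AnalyticAt ℂ (r m) 0) →
      (∀ᶠ t in 𝓝 (0 : ℂ), ∑ m ∈ Finset.range k, r m (X t) * Y t ^ m = 0) →
      ∀ m₀ < k, ∀ v : ℂ → ℂ, AnalyticAt ℂ v 0 → v 0 ≠ 0 →
        ¬ ∀ᶠ x in 𝓝 (0 : ℂ), r m₀ x = x ^ N * v x := by
  induction N with
  | zero =>
    intro r hr hrz m₀ hm₀ v hv hv0 hord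
    apply hv0
    have := hord.self_of_nhds
    rw [coeff_at_zero_of_vanishing hmin hr hrz m₀ hm₀, pow_zero, one_mul] at this
    exact this.symm
  | succ N ih =>
    intro r hr hrz m₀ hm₀ v hv hv0 hord
    have hall := coeff_at_zero_of_vanishing hmin hr hrz
    have hdiv : ∀ m, ∃ g, AnalyticAt ℂ g 0 ∧ (m < k → ∀ x, r m x = x * g x) := by
      intro m
      by_cases hm : m < k
      · obtain ⟨g, hg, h⟩ := exists_div_id (hr m) (hall m hm)
        exact ⟨g, hg, fun _ => h⟩
      · exact ⟨0, analyticAt_const, fun h => absurd h hm⟩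
    choose g hg hgr using hdiv
    have han : AnalyticAt ℂ (fun t => ∑ m ∈ Finset.range k, g m (X t) * Y t ^ m) 0 := by
      refine Finset.analyticAt_fun_sum _ fun m _ => AnalyticAt.mul ?_ (hc.2.1.pow m)
      refine AnalyticAt.fun_comp (g := g m) (f := X) ?_ hc.1
      rw [hc.2.2.1]
      exact hg m
    have hv' : ∀ᶠ x in 𝓝[≠] (0 : ℂ), g m₀ x = x ^ N * v x := by
      filter_upwards [hord.filter_mono nhdsWithin_le_nhds, self_mem_nhdsWithin] with x hx hx0
      rw [hgr m₀ hm₀, pow_succ', mul_assoc] at hx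
      exact mul_left_cancel₀ hx0 hx
    refine ih g hg ?_ m₀ hm₀ v hv hv0 ?_
    · refine (han.frequently_zero_iff_eventually_zero).1 (Eventually.frequently ?_)
      filter_upwards [hrz.filter_mono nhdsWithin_le_nhds, hX] with t ht hXt
      have : X t * ∑ m ∈ Finset.range k, g m (X t) * Y t ^ m = 0 := by
        rw [← ht, Finset.mul_sum]
        refine Finset.sum_congr rfl fun m hm => ?_
        rw [hgr m (Finset.mem_range.1 hm), mul_assoc]
      exact (mul_eq_zero.1 this).resolve_left hXt
    · exact ((hg m₀).frequently_eq_iff_eventually_eq (by fun_prop)).1 hv'.frequently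

/-- The ideal of germs vanishing on a curve not contained in `x = 0` is principal: by Weierstrass
division it is generated by any element whose restriction to `x = 0` has least order. -/
theorem exists_generator {X Y : ℂ → ℂ} (hc : IsCurve X Y) (hX : ∀ᶠ t in 𝓝[≠] (0 : ℂ), X t ≠ 0) :
    ∃ f : ℂ × ℂ → ℂ, AnalyticAt ℂ f 0 ∧ (∀ᶠ t in 𝓝 (0 : ℂ), f (X t, Y t) = 0) ∧
      (¬ ∀ᶠ y in 𝓝 (0 : ℂ), f (0, y) = 0) ∧
      ∀ h : ℂ × ℂ → ℂ, AnalyticAt ℂ h 0 → (∀ᶠ t in 𝓝 (0 : ℂ), h (X t, Y t) = 0) →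
        ∃ q, AnalyticAt ℂ q 0 ∧ ∀ᶠ p in 𝓝 (0 : ℂ × ℂ), h p = q p * f p := by
  classical
  have hex : ∃ k, ∃ (f : ℂ × ℂ → ℂ) (v : ℂ → ℂ), AnalyticAt ℂ f 0 ∧
      (∀ᶠ t in 𝓝 (0 : ℂ), f (X t, Y t) = 0) ∧ AnalyticAt ℂ v 0 ∧ v 0 ≠ 0 ∧
      ∀ᶠ y in 𝓝 (0 : ℂ), f (0, y) = y ^ k * v y := by
    obtain ⟨f, hf, hfc, hf0⟩ := exists_vanishing hc hX
    obtain ⟨k, v, hv, hv0, hk⟩ := exists_order (an_restrict hf) hf0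
    exact ⟨k, f, v, hf, hfc, hv, hv0, hk⟩
  obtain ⟨f, v, hf, hfc, hv, hv0, hk⟩ := Nat.find_spec hex
  set k := Nat.find hex with hkdef
  refine ⟨f, hf, hfc, fun hz => ?_, fun h hh hhc => ?_⟩
  · have h1 : ∀ᶠ y in 𝓝[≠] (0 : ℂ), False := by
      filter_upwards [hz.filter_mono nhdsWithin_le_nhds, hk.filter_mono nhdsWithin_le_nhds,
        (hv.continuousAt.eventually_ne hv0).filter_mono nhdsWithin_le_nhds,
        self_mem_nhdsWithin] with y h1 h2 h3 h4
      rw [h1] at h2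
      exact mul_ne_zero (pow_ne_zero k h4) h3 h2.symm
    exact h1.exists.elim fun _ h => h
  · obtain ⟨q, r, hq, hr, hdiv⟩ := weierstrass_division hf hh hv hv0 hk
    have hrz : ∀ᶠ t in 𝓝 (0 : ℂ), ∑ m ∈ Finset.range k, r m (X t) * Y t ^ m = 0 := by
      filter_upwards [hc.tendsto.eventually hdiv, hfc, hhc] with t h1 h2 h3
      rw [h2, h3, mul_zero, zero_add] at h1
      exact h1.symm
    have hr0 : ∀ m < k, ∀ᶠ x in 𝓝 (0 : ℂ), r m x = 0 := by
      intro m hm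
      by_contra hne
      obtain ⟨N, w, hw, hw0, hN⟩ := exists_order (hr m) hne
      refine coeff_zero_of_vanishing hX hc (fun f' hf' hfc' j v' hv' hv0' hj => ?_) N r hr hrz m hm
        w hw hw0 hN
      exact Nat.find_min' hex ⟨f', v', hf', hfc', hv', hv0', hj⟩
    have hr1 : ∀ᶠ x in 𝓝 (0 : ℂ), ∀ m ∈ Finset.range k, r m x = 0 :=
      (Finset.eventually_all _).2 fun m hm => hr0 m (Finset.mem_range.1 hm)
    refine ⟨q, hq, ?_⟩
    filter_upwards [hdiv, (continuous_fst.tendsto (0 : ℂ × ℂ)).eventually hr1] with p h1 h2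
    rw [h1, Finset.sum_eq_zero fun m hm => by rw [h2 m hm, zero_mul], add_zero]

/-- Germ form of the conclusion: `P ∂x + Q ∂y` has an invariant curve `f = 0`. -/
def HasEquation (P Q : ℂ × ℂ → ℂ) : Prop :=
  ∃ f g : ℂ × ℂ → ℂ, AnalyticAt ℂ f 0 ∧ AnalyticAt ℂ g 0 ∧ f 0 = 0 ∧
    (¬ ∀ᶠ p in 𝓝 (0 : ℂ × ℂ), f p = 0) ∧
    ∀ᶠ p in 𝓝 (0 : ℂ × ℂ), P p * fderiv ℂ f p (1, 0) + Q p * fderiv ℂ f p (0, 1) = g p * f p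

/-- If `f` generates the ideal of an invariant curve, its derivative along the field vanishes on the
curve as well, hence is a multiple of `f`. -/
theorem hasEquation_of_curve {P Q : ℂ × ℂ → ℂ} (hP : AnalyticAt ℂ P 0) (hQ : AnalyticAt ℂ Q 0)
    {X Y : ℂ → ℂ} (hc : IsCurve X Y) (hX : ∀ᶠ t in 𝓝[≠] (0 : ℂ), X t ≠ 0)
    (htan : ∀ᶠ t in 𝓝 (0 : ℂ), P (X t, Y t) * deriv Y t = Q (X t, Y t) * deriv X t) :
    HasEquation P Q := by
  obtain ⟨f, hf, hfc, hf0, hgen⟩ := exists_generator hc hX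
  have hd : ∀ w : ℂ × ℂ, AnalyticAt ℂ (fun p => fderiv ℂ f p w) 0 := fun w =>
    ((ContinuousLinearMap.apply ℂ ℂ w).analyticAt _).fun_comp hf.fderiv
  set h : ℂ × ℂ → ℂ := fun p => P p * fderiv ℂ f p (1, 0) + Q p * fderiv ℂ f p (0, 1) with hh
  have hha : AnalyticAt ℂ h 0 := (hP.mul (hd _)).add (hQ.mul (hd _))
  have hcurve : AnalyticAt ℂ (fun t => (X t, Y t)) 0 := hc.1.prod hc.2.1
  have hhca : AnalyticAt ℂ (fun t => h (X t, Y t)) 0 := by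
    refine AnalyticAt.fun_comp (g := h) (f := fun t => (X t, Y t)) ?_ hcurve
    rw [hc.2.2.1, hc.2.2.2]
    exact hha
  -- Off the origin `X' ≠ 0`, since `X` is not constant.
  have hX' : ∀ᶠ t in 𝓝[≠] (0 : ℂ), deriv X t ≠ 0 := by
    rcases hc.1.deriv.eventually_eq_zero_or_eventually_ne_zero with h0 | h0
    · exfalso
      obtain ⟨ε, hε, hb⟩ := Metric.eventually_nhds_iff_ball.1
        (h0.and (hc.1.eventually_analyticAt))
      have hconst : ∀ t ∈ Metric.ball (0 : ℂ) ε, X t = X 0 := fun t ht =>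
        Metric.isOpen_ball.is_const_of_deriv_eq_zero (convex_ball 0 ε).isPreconnected
          (fun s hs => (hb s hs).2.differentiableAt.differentiableWithinAt)
          (fun s hs => (hb s hs).1) ht (Metric.mem_ball_self hε)
      have h1 : ∀ᶠ t in 𝓝[≠] (0 : ℂ), False := by
        filter_upwards [hX, nhdsWithin_le_nhds (Metric.ball_mem_nhds (0 : ℂ) hε)] with t h1 h2
        exact h1 ((hconst t h2).trans hc.2.2.1)
      exact h1.exists.elim fun _ h => h
    · exact h0
  have hhc : ∀ᶠ t in 𝓝 (0 : ℂ), h (X t, Y t) = 0 := by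
    refine (hhca.frequently_zero_iff_eventually_zero).1 (Eventually.frequently ?_)
    have hall := (((hfc.eventually_nhds.and htan).and
      (hc.1.eventually_analyticAt.and hc.2.1.eventually_analyticAt)).and
      (hc.tendsto.eventually hf.eventually_analyticAt))
    filter_upwards [hX', hall.filter_mono nhdsWithin_le_nhds] with t h1 h2
    obtain ⟨⟨⟨h3, h4⟩, h5, h6⟩, h7⟩ := h2
    have e1 : HasDerivAt (fun t => f (X t, Y t))
        (fderiv ℂ f (X t, Y t) (deriv X t, deriv Y t)) t :=
      h7.differentiableAt.hasFDerivAt.comp_hasDerivAt t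
        (h5.differentiableAt.hasDerivAt.prodMk h6.differentiableAt.hasDerivAt)
    have e2 : HasDerivAt (fun t => f (X t, Y t)) 0 t :=
      (hasDerivAt_const t (0 : ℂ)).congr_of_eventuallyEq h3
    have e3 := e1.unique e2
    have e4 : ((deriv X t, deriv Y t) : ℂ × ℂ) = deriv X t • (1, 0) + deriv Y t • (0, 1) := by
      simp
    rw [e4, map_add, map_smul, map_smul, smul_eq_mul, smul_eq_mul] at e3
    refine (mul_eq_zero.1 (?_ : deriv X t * h (X t, Y t) = 0)).resolve_left h1
    rw [hh]
    linear_combination P (X t, Y t) * e3 - fderiv ℂ f (X t, Y t) (0, 1) * h4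
  obtain ⟨g, hg, hgf⟩ := hgen h hha hhc
  refine ⟨f, g, hf, hg, ?_, fun hz => hf0 (tendsto_inr.eventually hz), hgf⟩
  have := hfc.self_of_nhds
  rwa [hc.2.2.1, hc.2.2.2] at this

theorem HasEquation.swap {P Q : ℂ × ℂ → ℂ}
    (h : HasEquation (fun p => Q p.swap) (fun p => P p.swap)) : HasEquation P Q := by
  obtain ⟨f, g, hf, hg, hf0, hne, hfg⟩ := h
  have hsw : Tendsto (Prod.swap : ℂ × ℂ → ℂ × ℂ) (𝓝 0) (𝓝 0) := tendsto_of_an an_swap swap_zero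
  have hcomp : ∀ {F : ℂ × ℂ → ℂ}, AnalyticAt ℂ F 0 → AnalyticAt ℂ (fun p : ℂ × ℂ => F p.swap) 0 :=
    fun {F} hF => AnalyticAt.fun_comp (g := F) (f := Prod.swap) hF an_swap
  refine ⟨fun p => f p.swap, fun p => g p.swap, hcomp hf, hcomp hg, hf0, fun hz => hne ?_, ?_⟩
  · exact hsw.eventually hz
  · filter_upwards [hsw.eventually hfg, hsw.eventually hf.eventually_analyticAt] with p h1 h2
    have e : HasFDerivAt (fun p : ℂ × ℂ => f p.swap) ((fderiv ℂ f p.swap).comp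
        ((ContinuousLinearMap.snd ℂ ℂ ℂ).prod (ContinuousLinearMap.fst ℂ ℂ ℂ))) p :=
      h2.differentiableAt.hasFDerivAt.comp p
        ((ContinuousLinearMap.snd ℂ ℂ ℂ).prod (ContinuousLinearMap.fst ℂ ℂ ℂ)).hasFDerivAt
    rw [e.fderiv]
    change P p * fderiv ℂ f p.swap (0, 1) + Q p * fderiv ℂ f p.swap (1, 0) = _
    rw [Prod.swap_swap] at h1
    rw [← h1]
    ring

theorem HasCurve0.hasEquation {P Q : ℂ × ℂ → ℂ} (hP : AnalyticAt ℂ P 0) (hQ : AnalyticAt ℂ Q 0)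
    (h : HasCurve0 P Q) : HasEquation P Q := by
  obtain ⟨X, Y, hc, hX | hY, htan⟩ := h
  · exact hasEquation_of_curve hP hQ hc hX htan
  · have hcomp : ∀ {F : ℂ × ℂ → ℂ}, AnalyticAt ℂ F 0 → AnalyticAt ℂ (fun p : ℂ × ℂ => F p.swap) 0 :=
      fun {F} hF => AnalyticAt.fun_comp (g := F) (f := Prod.swap) hF an_swap
    exact HasEquation.swap (hasEquation_of_curve (hcomp hQ) (hcomp hP)
      (X := Y) (Y := X) ⟨hc.2.1, hc.1, hc.2.2.2, hc.2.2.1⟩ hY (htan.mono fun t ht => ht.symm))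

theorem hasEquation_of_isolated {P Q : ℂ × ℂ → ℂ} (hP : AnalyticAt ℂ P 0) (hQ : AnalyticAt ℂ Q 0)
    (hP0 : P 0 = 0) (hQ0 : Q 0 = 0)
    (hiso : ∀ᶠ p in 𝓝 (0 : ℂ × ℂ), p ≠ 0 → P p ≠ 0 ∨ Q p ≠ 0) : HasEquation P Q := by
  obtain ⟨X, Y, hc, hne, htan⟩ :=
    Model.separatrix_of_rules rules (cof_of_isolated hP hQ hP0 hQ0 hiso)
  refine HasCurve0.hasEquation hP hQ ⟨X, Y, hc, hne, ?_⟩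
  filter_upwards [htan, hc.tendsto.eventually (rep_germ hP),
    hc.tendsto.eventually (rep_germ hQ)] with t h1 h2 h3
  rw [← h2, ← h3]
  exact h1

end

end CamachoSad

/-- **Camacho–Sad separatrix theorem.** A holomorphic vector field
`Z = P ∂/∂z + Q ∂/∂w` with an isolated singularity at `0 ∈ ℂ²` admits a separatrix:
there is a nontrivial invariant analytic curve `{f = 0}` through `0`, invariance being
expressed by `P·f_z + Q·f_w = g·f` for some holomorphic `g`. -/
theorem camacho_sad_separatrix
    (P Q : ℂ × ℂ → ℂ) (U : Set (ℂ × ℂ)) (hU : U ∈ nhds (0 : ℂ × ℂ))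
    (hP : AnalyticOnNhd ℂ P U) (hQ : AnalyticOnNhd ℂ Q U)
    (hP0 : P 0 = 0) (hQ0 : Q 0 = 0)
    (hiso : ∃ ε > (0 : ℝ), ∀ p ∈ Metric.ball (0 : ℂ × ℂ) ε, p ≠ 0 →
      (P p ≠ 0 ∨ Q p ≠ 0)) :
    ∃ r > (0 : ℝ), Metric.ball (0 : ℂ × ℂ) r ⊆ U ∧
      ∃ f g : ℂ × ℂ → ℂ,
        AnalyticOnNhd ℂ f (Metric.ball (0 : ℂ × ℂ) r) ∧
        AnalyticOnNhd ℂ g (Metric.ball (0 : ℂ × ℂ) r) ∧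
        f 0 = 0 ∧
        (∃ p ∈ Metric.ball (0 : ℂ × ℂ) r, f p ≠ 0) ∧
        ∀ p ∈ Metric.ball (0 : ℂ × ℂ) r,
          P p * fderiv ℂ f p (1, 0) + Q p * fderiv ℂ f p (0, 1) = g p * f p := by
  obtain ⟨ε, hε, hiso⟩ := hiso
  have h0 : (0 : ℂ × ℂ) ∈ U := mem_of_mem_nhds hU
  obtain ⟨f, g, hf, hg, hf0, hne, hfg⟩ :=
    CamachoSad.hasEquation_of_isolated (hP 0 h0) (hQ 0 h0) hP0 hQ0
      (Filter.mem_of_superset (Metric.ball_mem_nhds 0 hε) hiso)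
  obtain ⟨r, hr, hb⟩ := Metric.eventually_nhds_iff_ball.1
    (((Filter.eventually_mem_set.2 hU).and hfg).and
      (hf.eventually_analyticAt.and hg.eventually_analyticAt))
  refine ⟨r, hr, fun p hp => (hb p hp).1.1, f, g, fun p hp => (hb p hp).2.1,
    fun p hp => (hb p hp).2.2, hf0, ?_, fun p hp => (hb p hp).1.2⟩
  by_contra! h
  exact hne (Filter.mem_of_superset (Metric.ball_mem_nhds 0 hr) h)
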